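/- For each r ∈ ℕ there is a constant R = R(r, K, C) such that if M_N ≥ R ln V_N for all N, then S_N obeys the Edgeworth expansion of order r in a conditionally stable way. In particular, if lim_{N→∞} M_N / ln V_N = ∞, then S_N obeys Edgeworth expansions of all orders. -/

import Mathlib

open MeasureTheory ProbabilityTheory Filter Finset
open scoped ENNReal Topology

noncomputable section

namespace EdgeworthMC

variable {Ω E : Type*} [MeasurableSpace Ω] [MeasurableSpace E]

/-- The standard Gaussian density `𝔤(u) = (2π)^{-1/2} e^{-u²/2}`. -/
def gaussDensity (u : ℝ) : ℝ := (Real.sqrt (2 * Real.pi))⁻¹ * Real.exp (-u ^ 2 / 2)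

/-- `UEChain μ X κ C` : the process `X` is a Markov chain (with respect to the probability
measure `μ`) with transition kernels `κ n` from the state at time `n` to the state at time
`n+1`, and the chain is uniformly elliptic with ellipticity constant `C`:
`C⁻¹ ℙ(X_{n+1} ∈ A) ≤ ℙ(X_{n+1} ∈ A | X_n = x) ≤ C ℙ(X_{n+1} ∈ A)` for a.e. `x`. -/
def UEChain (μ : Measure Ω) (X : ℕ → Ω → E) (κ : ℕ → Kernel E E) (C : ℝ) : Prop :=
  IsProbabilityMeasure μ ∧
  (∀ n, Measurable (X n)) ∧
  (∀ n, IsMarkovKernel (κ n)) ∧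
  (∀ n (A : Set E), MeasurableSet A →
      (μ[fun ω => A.indicator (fun _ => (1 : ℝ)) (X (n + 1) ω) |
          ⨆ i : Fin (n + 1), MeasurableSpace.comap (X i) (inferInstance : MeasurableSpace E)]
        =ᵐ[μ] fun ω => (κ n (X n ω) A).toReal)) ∧
  (∀ n (A : Set E), MeasurableSet A → ∀ᵐ ω ∂μ,
      κ n (X n ω) A ≤ ENNReal.ofReal C * Measure.map (X (n + 1)) μ A ∧
      Measure.map (X (n + 1)) μ A ≤ ENNReal.ofReal C * κ n (X n ω) A)

/-- Partial sums `S_N = ∑_{n=1}^N f_n(X_n)`. -/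
def S (X : ℕ → Ω → E) (f : ℕ → E → ℤ) (N : ℕ) (ω : Ω) : ℤ :=
  ∑ n ∈ Finset.Icc 1 N, f n (X n ω)

/-- `V_N = Var(S_N)`. -/
def VN (μ : Measure Ω) (X : ℕ → Ω → E) (f : ℕ → E → ℤ) (N : ℕ) : ℝ :=
  variance (fun ω => ((S X f N ω : ℝ))) μ

/-- `σ_N = √V_N`. -/
def sigN (μ : Measure Ω) (X : ℕ → Ω → E) (f : ℕ → E → ℤ) (N : ℕ) : ℝ :=
  Real.sqrt (VN μ X f N)

/-- `a_N = 𝔼(S_N)`. -/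
def meanS (μ : Measure Ω) (X : ℕ → Ω → E) (f : ℕ → E → ℤ) (N : ℕ) : ℝ :=
  ∫ ω, ((S X f N ω : ℝ)) ∂μ

/-- The second largest value among the (finitely many) values of `p`, counted with
multiplicity: it equals `min_j max_{j' ≠ j} p j'`. -/
def secondLargest {ι : Type*} (p : ι → ℝ) : ℝ := ⨅ j, sSup (p '' {j}ᶜ)

/-- `q_n(m)` : the second largest value among `ℙ(Y_n ≡ j mod m)`, `j = 0,…,m-1`. -/
def qres (μ : Measure Ω) (X : ℕ → Ω → E) (f : ℕ → E → ℤ) (n m : ℕ) : ℝ :=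
  secondLargest (fun j : ZMod m => (μ {ω | ((f n (X n ω) : ZMod m)) = j}).toReal)

/-- `M_N = min_{2 ≤ m ≤ 2K} ∑_{n=1}^N q_n(m)`. -/
def MN (μ : Measure Ω) (X : ℕ → Ω → E) (f : ℕ → E → ℤ) (K N : ℕ) : ℝ :=
  sInf ((fun m => ∑ n ∈ Finset.Icc 1 N, qres μ X f n m) '' (Set.Icc 2 (2 * K)))

/-- `S_N` obeys the Edgeworth expansion of order `r` : there are polynomials `P_{b,N}`,
with coefficients uniformly bounded in `N` and degrees not depending on `N`, such that
uniformly in `k ∈ ℤ`,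
`ℙ(S_N = k) = ∑_{b=1}^r σ_N^{-b} P_{b,N}(k_N) 𝔤(k_N) + o(σ_N^{-r})`
where `k_N = (k - 𝔼 S_N)/σ_N`. -/
def Edgeworth (μ : Measure Ω) (X : ℕ → Ω → E) (f : ℕ → E → ℤ) (r : ℕ) : Prop :=
  ∃ (D : ℕ) (Cb : ℝ) (P : ℕ → ℕ → Polynomial ℝ),
    (∀ b N, (P b N).natDegree ≤ D) ∧
    (∀ b N i, |(P b N).coeff i| ≤ Cb) ∧
    ∀ ε > 0, ∃ N₀, ∀ N ≥ N₀, ∀ k : ℤ,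
      |(μ {ω | S X f N ω = k}).toReal -
          ∑ b ∈ Finset.Icc 1 r, (sigN μ X f N)⁻¹ ^ b *
            (P b N).eval (((k : ℝ) - meanS μ X f N) / sigN μ X f N) *
            gaussDensity (((k : ℝ) - meanS μ X f N) / sigN μ X f N)|
        ≤ ε * (sigN μ X f N)⁻¹ ^ r

/-- The σ-algebra generated by `X_{j 1}, …, X_{j ℓ}`. -/
def sigmaOf (X : ℕ → Ω → E) {ℓ : ℕ} (j : Fin ℓ → ℕ) : MeasurableSpace Ω :=
  ⨆ i : Fin ℓ, MeasurableSpace.comap (X (j i)) (inferInstance : MeasurableSpace E)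

/-- Conditional probability of the event `s` given the σ-algebra `m`. -/
def condProb (μ : Measure Ω) (m : MeasurableSpace Ω) (s : Set Ω) : Ω → ℝ :=
  μ[s.indicator (fun _ => (1 : ℝ)) | m]

/-- `S_N` obeys the Edgeworth expansion of order `r` in a conditionally stable way:
for every `ℓ`, the order `r` Edgeworth expansion holds for the conditional law of `S_N`
given `X_{j_1},…,X_{j_ℓ}`, with error term `o_ℓ(σ_N^{-r})` and polynomial coefficient
bounds depending only on `ℓ` (and `r`), uniformly over all choices of indices
`1 ≤ j_1,…,j_ℓ ≤ N`. -/
def CondStableEdgeworth (μ : Measure Ω) (X : ℕ → Ω → E) (f : ℕ → E → ℤ) (r : ℕ) : Prop :=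
  ∀ ℓ : ℕ, ∃ (D : ℕ) (Cb : ℝ), ∀ ε > 0, ∃ N₀, ∀ N ≥ N₀,
    ∀ j : Fin ℓ → ℕ, (∀ i, j i ∈ Finset.Icc 1 N) →
      ∃ P : ℕ → Ω → Polynomial ℝ,
        (∀ b ω, (P b ω).natDegree ≤ D) ∧
        (∀ b ω i, |(P b ω).coeff i| ≤ Cb) ∧
        ∀ᵐ ω ∂μ, ∀ k : ℤ,
          |condProb μ (sigmaOf X j) {ω' | S X f N ω' = k} ω -
              ∑ b ∈ Finset.Icc 1 r, (sigN μ X f N)⁻¹ ^ b *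
                (P b ω).eval (((k : ℝ) -
                    (μ[fun ω' => ((S X f N ω' : ℝ)) | sigmaOf X j]) ω) / sigN μ X f N) *
                gaussDensity (((k : ℝ) -
                    (μ[fun ω' => ((S X f N ω' : ℝ)) | sigmaOf X j]) ω) / sigN μ X f N)|
            ≤ ε * (sigN μ X f N)⁻¹ ^ r

/-- `t` is a resonant point: `t = 2πl/m` with `0 < m ≤ 2K`, `0 ≤ l < m`. -/
def IsResonant (K : ℕ) (t : ℝ) : Prop :=
  ∃ l m : ℕ, 0 < m ∧ m ≤ 2 * K ∧ l < m ∧ t = 2 * Real.pi * l / m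

/-- The conditional characteristic function `𝔼[e^{itS_N} | X_{j_1},…,X_{j_ℓ}]`. -/
def condChar (μ : Measure Ω) (X : ℕ → Ω → E) (f : ℕ → E → ℤ) (t : ℝ) (N : ℕ)
    {ℓ : ℕ} (j : Fin ℓ → ℕ) : Ω → ℂ :=
  μ[fun ω => Complex.exp (Complex.I * (t : ℂ) * ((S X f N ω : ℤ) : ℂ)) | sigmaOf X j]

end EdgeworthMC

namespace EdgeworthMC

/-- Cauchy's estimate for the Taylor coefficients at the origin. -/
theorem norm_taylorCoeff_le {F : ℂ → ℂ} {δ M : ℝ} (hδ : 0 < δ)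
    (hF : DifferentiableOn ℂ F (Metric.ball 0 δ)) (hM : ∀ z ∈ Metric.ball (0 : ℂ) δ, ‖F z‖ ≤ M)
    (q : ℕ) : ‖((q.factorial : ℂ))⁻¹ * iteratedDeriv q F 0‖ ≤ M / (δ / 2) ^ q := by
  have hcl : Metric.closedBall (0 : ℂ) (δ / 2) ⊆ Metric.ball 0 δ :=
    Metric.closedBall_subset_ball (by linarith)
  have h := Complex.norm_iteratedDeriv_le_of_forall_mem_sphere_norm_le (f := F) (c := 0)
    (R := δ / 2) (C := M) q (by linarith)
    (hF.diffContOnCl_ball hcl)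
    (fun z hz => hM z (hcl (Metric.sphere_subset_closedBall hz)))
  rw [norm_mul, norm_inv, Complex.norm_natCast]
  have hq : (0 : ℝ) < q.factorial := by exact_mod_cast q.factorial_pos
  rw [inv_mul_le_iff₀ hq]
  calc _ ≤ _ := h
    _ = _ := by ring

/-- Quantitative Taylor remainder for a bounded holomorphic function on a disc. -/
theorem norm_sub_taylor_le {F : ℂ → ℂ} {δ M : ℝ} (hδ : 0 < δ)
    (hF : DifferentiableOn ℂ F (Metric.ball 0 δ)) (hM : ∀ z ∈ Metric.ball (0 : ℂ) δ, ‖F z‖ ≤ M)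
    (n : ℕ) {z : ℂ} (hz : ‖z‖ ≤ δ / 4) :
    ‖F z - ∑ q ∈ range n, ((q.factorial : ℂ))⁻¹ * iteratedDeriv q F 0 * z ^ q‖
      ≤ 2 * M * (‖z‖ / (δ / 2)) ^ n := by
  have hM0 : 0 ≤ M := (norm_nonneg _).trans (hM 0 (Metric.mem_ball_self hδ))
  have hzb : z ∈ Metric.ball (0 : ℂ) δ := by simp; linarith
  have hs := Complex.hasSum_taylorSeries_on_ball hF hzb
  set a : ℕ → ℂ := fun q => ((q.factorial : ℂ))⁻¹ * iteratedDeriv q F 0 * z ^ q with ha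
  have hs' : HasSum a (F z) := by
    have : a = fun n : ℕ => ((n.factorial : ℂ))⁻¹ • (z - 0) ^ n • iteratedDeriv n F 0 := by
      funext q
      simp only [ha, smul_eq_mul, sub_zero]
      ring
    rw [this]
    exact hs
  set x := ‖z‖ / (δ / 2) with hx
  have hx0 : 0 ≤ x := by positivity
  have hx2 : x ≤ 1 / 2 := by rw [hx, div_le_iff₀ (by linarith)]; linarith
  have hab : ∀ q, ‖a q‖ ≤ M * x ^ q := by
    intro q
    rw [ha]; simp only [norm_mul, norm_pow]
    have := norm_taylorCoeff_le hδ hF hM q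
    rw [norm_mul] at this
    calc _ ≤ M / (δ / 2) ^ q * ‖z‖ ^ q := by gcongr
      _ = _ := by rw [hx, div_pow ‖z‖, div_mul_eq_mul_div, mul_div_assoc]
  have htail : HasSum (fun q => a (q + n)) (F z - ∑ q ∈ range n, a q) :=
    (hasSum_nat_add_iff' n).2 hs'
  have hg : HasSum (fun q : ℕ => M * x ^ n * x ^ q) (M * x ^ n * (1 - x)⁻¹) :=
    (hasSum_geometric_of_lt_one hx0 (by linarith)).mul_left _
  have hle : ‖F z - ∑ q ∈ range n, a q‖ ≤ M * x ^ n * (1 - x)⁻¹ := by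
    rw [← htail.tsum_eq, ← hg.tsum_eq]
    refine tsum_of_norm_bounded hg.summable.hasSum fun q => ?_
    calc _ ≤ _ := hab (q + n)
      _ = _ := by ring
  have hinv : (1 - x)⁻¹ ≤ 2 := by
    rw [inv_le_comm₀ (by linarith) (by norm_num)]; linarith
  calc _ ≤ _ := hle
    _ ≤ M * x ^ n * 2 := by gcongr
    _ = _ := by ring

/-- Absolute polynomial moments against a Gaussian weight are finite. -/
theorem integrable_abs_pow_mul_exp_neg_mul_sq {c : ℝ} (hc : 0 < c) (n : ℕ) :
    Integrable (fun s : ℝ => |s| ^ n * Real.exp (-(c * s ^ 2))) := by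
  have h := (integrable_rpow_mul_exp_neg_mul_sq hc (s := n) (by
    have : (0 : ℝ) ≤ n := n.cast_nonneg
    linarith)).norm
  refine h.congr (ae_of_all _ fun s => ?_)
  simp [Real.rpow_natCast]

/-- The integrand of the Fourier transform of `(is)^q e^{-s²/2}`. -/
def gaussMonomial (q : ℕ) (x s : ℝ) : ℂ :=
  (Complex.I * s) ^ q * (Complex.exp (-(Complex.I * s * x)) * Complex.exp (-((s : ℂ) ^ 2 / 2)))

theorem norm_gaussMonomial (q : ℕ) (x s : ℝ) :
    ‖gaussMonomial q x s‖ = |s| ^ q * Real.exp (-(1 / 2 * s ^ 2)) := by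
  have h1 : ‖Complex.exp (-(Complex.I * s * x))‖ = 1 := by
    rw [Complex.norm_exp]; simp
  have h2 : ‖Complex.exp (-((s : ℂ) ^ 2 / 2))‖ = Real.exp (-(1 / 2 * s ^ 2)) := by
    rw [show (-((s : ℂ) ^ 2 / 2)) = ((-(1 / 2 * s ^ 2) : ℝ) : ℂ) by push_cast; ring,
      ← Complex.ofReal_exp, Complex.norm_real, Real.norm_of_nonneg (Real.exp_pos _).le]
  rw [gaussMonomial, norm_mul, norm_mul, h1, h2]
  simp

theorem continuous_gaussMonomial (q : ℕ) (x : ℝ) : Continuous (gaussMonomial q x) := by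
  unfold gaussMonomial; fun_prop

theorem integrable_gaussMonomial (q : ℕ) (x : ℝ) : Integrable (gaussMonomial q x) := by
  refine ((integrable_abs_pow_mul_exp_neg_mul_sq (c := 1 / 2) (by norm_num) q).mono'
    (continuous_gaussMonomial q x).aestronglyMeasurable (ae_of_all _ fun s => ?_))
  rw [norm_gaussMonomial]

/-- The Fourier transform of `(is)^q e^{-s²/2}` is a polynomial multiple of a Gaussian. -/
theorem exists_integral_gaussMonomial_eq (q : ℕ) : ∃ Q : Polynomial ℝ, ∀ x : ℝ,
    ∫ s, gaussMonomial q x s =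
      ((Real.sqrt (2 * Real.pi) * (Q.eval x * Real.exp (-x ^ 2 / 2)) : ℝ) : ℂ) := by
  induction q with
  | zero =>
    refine ⟨1, fun x => ?_⟩
    have h := fourierIntegral_gaussian (b := 1 / 2) (by norm_num) (-x : ℂ)
    have e1 : ∀ s : ℝ, gaussMonomial 0 x s =
        Complex.exp (Complex.I * (-x) * s) * Complex.exp (-(1 / 2) * (s : ℂ) ^ 2) := by
      intro s
      rw [gaussMonomial, pow_zero, one_mul]
      congr 2 <;> ring
    simp_rw [e1, h]
    have e2 : ((Real.pi : ℂ) / (1 / 2)) ^ (1 / 2 : ℂ) = (Real.sqrt (2 * Real.pi) : ℂ) := by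
      rw [Real.sqrt_eq_rpow, Complex.ofReal_cpow (by positivity)]
      congr 1
      · push_cast; ring
      · push_cast; ring
    rw [e2]
    push_cast
    congr 1
    simp
    congr 1
    ring
  | succ q ih =>
    obtain ⟨Q, hQ⟩ := ih
    refine ⟨Polynomial.X * Q - Polynomial.derivative Q, fun x => ?_⟩
    have hd : HasDerivAt (fun x : ℝ => ∫ s, gaussMonomial q x s)
        (∫ s, -gaussMonomial (q + 1) x s) x := by
      refine (hasDerivAt_integral_of_dominated_loc_of_deriv_le (μ := volume)
        (F := fun x s => gaussMonomial q x s)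
        (F' := fun x s => -gaussMonomial (q + 1) x s)
        (bound := fun s => |s| ^ (q + 1) * Real.exp (-(1 / 2 * s ^ 2)))
        (s := Set.univ) Filter.univ_mem ?_ (integrable_gaussMonomial q x) ?_ ?_ ?_ ?_).2
      · exact Eventually.of_forall fun y => (continuous_gaussMonomial q y).aestronglyMeasurable
      · exact (continuous_gaussMonomial (q + 1) x).neg.aestronglyMeasurable
      · refine ae_of_all _ fun s y _ => ?_
        rw [norm_neg, norm_gaussMonomial]
      · exact integrable_abs_pow_mul_exp_neg_mul_sq (by norm_num) _
      · refine ae_of_all _ fun s y _ => ?_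
        have h1 : HasDerivAt (fun y : ℝ => -(Complex.I * s * (y : ℂ))) (-(Complex.I * s)) y := by
          have h0 := (Complex.ofRealCLM.hasDerivAt (x := y)).const_mul (Complex.I * (s : ℂ))
          exact h0.fun_neg.congr_deriv (by simp)
        have h2 := ((h1.cexp.mul_const (Complex.exp (-((s : ℂ) ^ 2 / 2)))).const_mul
          ((Complex.I * (s : ℂ)) ^ q))
        refine h2.congr_deriv ?_
        rw [gaussMonomial]; ring
    have hd2 : HasDerivAt (fun x : ℝ => ∫ s, gaussMonomial q x s)
        ((Real.sqrt (2 * Real.pi) * ((Polynomial.derivative Q).eval x * Real.exp (-x ^ 2 / 2) +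
          Q.eval x * (Real.exp (-x ^ 2 / 2) * (-x))) : ℝ) : ℂ) x := by
      rw [show (fun x : ℝ => ∫ s, gaussMonomial q x s) = fun x : ℝ =>
        ((Real.sqrt (2 * Real.pi) * (Q.eval x * Real.exp (-x ^ 2 / 2)) : ℝ) : ℂ) from funext hQ]
      refine HasDerivAt.ofReal_comp ?_
      refine HasDerivAt.const_mul _ ?_
      refine (Q.hasDerivAt x).mul ?_
      have : HasDerivAt (fun x : ℝ => -x ^ 2 / 2) (-x) x := by
        have := ((hasDerivAt_pow 2 x).neg).div_const 2
        refine this.congr_deriv ?_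
        push_cast; ring
      exact this.exp
    have := hd.unique hd2
    rw [integral_neg] at this
    rw [neg_eq_iff_eq_neg.1 this, ← Complex.ofReal_neg]
    congr 1
    simp
    ring

/-- Fourier inversion for a finitely supported function on `ℤ`. -/
theorem integral_exp_mul_trigPoly (A : Finset ℤ) (P : ℤ → ℝ) (hP : ∀ k ∉ A, P k = 0) (k : ℤ) :
    ∫ t in Set.Icc (-Real.pi) Real.pi, Complex.exp (-(Complex.I * t * k)) *
      ∑ l ∈ A, (P l : ℂ) * Complex.exp (Complex.I * t * l) = 2 * Real.pi * P k := by
  rw [integral_Icc_eq_integral_Ioc, ← intervalIntegral.integral_of_le (by linarith [Real.pi_pos])]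
  have e1 : ∀ t : ℝ, Complex.exp (-(Complex.I * t * k)) *
      ∑ l ∈ A, (P l : ℂ) * Complex.exp (Complex.I * t * l) =
      ∑ l ∈ A, (P l : ℂ) * Complex.exp ((Complex.I * ((l : ℂ) - k)) * t) := by
    intro t
    rw [Finset.mul_sum]
    refine Finset.sum_congr rfl fun l _ => ?_
    rw [mul_left_comm, ← Complex.exp_add]
    congr 2; ring
  simp_rw [e1]
  rw [intervalIntegral.integral_finsetSum]
  swap
  · intro l _
    exact (Continuous.intervalIntegrable (by fun_prop) _ _)
  have e2 : ∀ l : ℤ, ∫ t in (-Real.pi)..Real.pi,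
      (P l : ℂ) * Complex.exp ((Complex.I * ((l : ℂ) - k)) * t) =
      if l = k then 2 * Real.pi * (P l : ℂ) else 0 := by
    intro l
    rw [intervalIntegral.integral_const_mul]
    split_ifs with h
    · subst h
      simp
      ring
    · have hne : Complex.I * ((l : ℂ) - k) ≠ 0 :=
        mul_ne_zero Complex.I_ne_zero (sub_ne_zero.2 (by exact_mod_cast h))
      rw [integral_exp_mul_complex hne]
      have : Complex.exp (Complex.I * ((l : ℂ) - k) * (Real.pi : ℝ)) =
          Complex.exp (Complex.I * ((l : ℂ) - k) * ((-Real.pi : ℝ) : ℂ)) := by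
        rw [Complex.exp_eq_exp_iff_exists_int]
        exact ⟨l - k, by push_cast; ring⟩
      rw [this]; simp
  simp_rw [e2]
  rw [Finset.sum_ite_eq' A k]
  split_ifs with h
  · rfl
  · simp [hP k h]

theorem abs_coeff_le_sum_support (Q : Polynomial ℝ) (i : ℕ) :
    |Q.coeff i| ≤ ∑ j ∈ Q.support, |Q.coeff j| := by
  by_cases h : i ∈ Q.support
  · exact Finset.single_le_sum (f := fun j => |Q.coeff j|) (fun _ _ => abs_nonneg _) h
  · rw [Polynomial.notMem_support_iff.1 h, abs_zero]
    exact Finset.sum_nonneg fun _ _ => abs_nonneg _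

/-- Rescaled Gaussian-polynomial Fourier integral. -/
theorem integral_gaussMonomial_scale {Q : Polynomial ℝ} {q : ℕ} (hQ : ∀ x : ℝ,
    ∫ s, gaussMonomial q x s =
      ((Real.sqrt (2 * Real.pi) * (Q.eval x * Real.exp (-x ^ 2 / 2)) : ℝ) : ℂ))
    {σ : ℝ} (hσ : 0 < σ) (x : ℝ) :
    ∫ t : ℝ, gaussMonomial q x (σ * t) =
      ((2 * Real.pi * (σ⁻¹ * (Q.eval x * gaussDensity x)) : ℝ) : ℂ) := by
  rw [Measure.integral_comp_mul_left, hQ, abs_of_pos (inv_pos.2 hσ), Complex.real_smul,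
    ← Complex.ofReal_mul]
  congr 1
  rw [gaussDensity]
  have h := Real.mul_self_sqrt (show (0 : ℝ) ≤ 2 * Real.pi by positivity)
  have h0 : Real.sqrt (2 * Real.pi) ≠ 0 := by positivity
  rw [pow_two] at *
  field_simp
  rw [pow_two, h]

/-- Passing from control of the characteristic function of an integer valued law to the
Edgeworth approximation of its point probabilities. -/
theorem edgeworth_of_char (r : ℕ) {c1 C1 c2 C2 η : ℝ} (hc1 : 0 < c1) (hc2 : 0 < c2)
    (hη : 0 < η) (hηπ : η ≤ Real.pi) :
    ∃ (D : ℕ) (Cp Ce : ℝ), 0 ≤ Cp ∧ ∀ (σ a ρ : ℝ) (A : Finset ℤ) (P : ℤ → ℝ) (H : ℂ → ℂ),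
      1 ≤ σ → 0 < ρ → ρ ^ 3 * σ ^ 2 = c1 → ρ ≤ η → (∀ k ∉ A, P k = 0) →
      DifferentiableOn ℂ H (Metric.ball 0 ρ) →
      (∀ z ∈ Metric.ball (0 : ℂ) ρ, ‖H z‖ ≤ C1) →
      (∀ t : ℝ, |t| < ρ → ∑ l ∈ A, (P l : ℂ) * Complex.exp (Complex.I * t * l) =
        Complex.exp (Complex.I * t * a) * Complex.exp (-((σ * t : ℂ) ^ 2 / 2)) *
          H (Complex.I * t)) →
      (∀ t : ℝ, |t| ≤ η → ‖∑ l ∈ A, (P l : ℂ) * Complex.exp (Complex.I * t * l)‖ ≤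
        C2 * Real.exp (-(c2 * (σ * t) ^ 2))) →
      (∀ t : ℝ, η ≤ |t| → |t| ≤ Real.pi →
        ‖∑ l ∈ A, (P l : ℂ) * Complex.exp (Complex.I * t * l)‖ ≤ C2 * σ⁻¹ ^ (r + 1)) →
      ∃ Q : Polynomial ℝ, Q.natDegree ≤ D ∧ (∀ i, |Q.coeff i| ≤ Cp) ∧ ∀ k : ℤ,
        |P k - σ⁻¹ * Q.eval ((k - a) / σ) * gaussDensity ((k - a) / σ)| ≤ Ce * σ⁻¹ ^ (r + 1) := by
  choose Qq hQq using exists_integral_gaussMonomial_eq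
  set m : ℝ := min 1 c1 with hm
  have hm0 : 0 < m := lt_min one_pos hc1
  set c3 : ℝ := min c2 (1 / 2) with hc3
  have hc30 : 0 < c3 := lt_min hc2 (by norm_num)
  set K0 : ℝ := (2 * C1 + (3 * r : ℕ) * C1 + C2) * (64 / c1) ^ r with hK0
  set G0 : ℝ := ∫ s : ℝ, |s| ^ (3 * r) * Real.exp (-(c3 * s ^ 2)) with hG0
  refine ⟨∑ q ∈ range (3 * r), (Qq q).natDegree,
    ∑ q ∈ range (3 * r), |C1| * (2 / m) ^ (3 * r) * ∑ j ∈ (Qq q).support, |(Qq q).coeff j|,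
    (2 * Real.pi)⁻¹ * (K0 * G0 + 2 * Real.pi * C2), by positivity, ?_⟩
  intro σ a ρ A P H hσ hρ hρσ hρη hPA hHd hHb hΦ hΦ1 hΦ2
  set Φ : ℝ → ℂ := fun t => ∑ l ∈ A, (P l : ℂ) * Complex.exp (Complex.I * t * l) with hΦdef
  have hσ0 : 0 < σ := by linarith
  have hC1 : 0 ≤ C1 := (norm_nonneg _).trans (hHb 0 (Metric.mem_ball_self hρ))
  have hC2 : 0 ≤ C2 := by
    have := (norm_nonneg _).trans (hΦ1 0 (by simpa using hη.le))
    simpa using this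
  set h : ℕ → ℂ := fun q => ((q.factorial : ℂ))⁻¹ * iteratedDeriv q H 0 with hh
  have hhb : ∀ q, ‖h q‖ ≤ C1 / (ρ / 2) ^ q := fun q => norm_taylorCoeff_le hρ hHd hHb q
  have hmρ : m ≤ ρ * σ := by
    by_contra hcon
    push Not at hcon
    have h1 : (ρ * σ) ^ 3 < m ^ 3 := pow_lt_pow_left₀ hcon (by positivity) (by norm_num)
    have h2 : (ρ * σ) ^ 3 = c1 * σ := by rw [← hρσ]; ring
    have h3 : m ^ 3 ≤ m := pow_le_of_le_one hm0.le (min_le_left _ _) (by norm_num)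
    have h4 : m ≤ c1 := min_le_right _ _
    nlinarith
  have hhσ : ∀ q < 3 * r, ‖h q‖ * σ⁻¹ ^ q ≤ |C1| * (2 / m) ^ (3 * r) := by
    intro q hq
    have h1 : (1 : ℝ) ≤ 2 / m := by
      rw [le_div_iff₀ hm0]
      linarith [min_le_left 1 c1]
    calc ‖h q‖ * σ⁻¹ ^ q ≤ C1 / (ρ / 2) ^ q * σ⁻¹ ^ q := by gcongr; exact hhb q
      _ = C1 * (2 / (ρ * σ)) ^ q := by
          rw [div_pow, div_pow, mul_pow, inv_pow]
          field_simp
      _ ≤ C1 * (2 / m) ^ q := by gcongr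
      _ ≤ C1 * (2 / m) ^ (3 * r) := by gcongr
      _ = _ := by rw [abs_of_nonneg hC1]
  set T : ℝ → ℂ := fun t => ∑ q ∈ range (3 * r), h q * (Complex.I * t) ^ q with hT
  have hscale : ∀ t : ℝ, (4 * |t| / ρ) ^ (3 * r) = (64 / c1) ^ r * σ⁻¹ ^ r * |σ * t| ^ (3 * r) := by
    intro t
    rw [pow_mul, pow_mul, ← mul_pow, ← mul_pow]
    congr 1
    rw [abs_mul, abs_of_pos hσ0, ← hρσ]
    field_simp
    ring
  -- the pointwise comparison
  have hpt : ∀ (k : ℤ) (t : ℝ), ‖(Set.Icc (-Real.pi) Real.pi).indicator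
        (fun t : ℝ => Complex.exp (-(Complex.I * t * k)) * Φ t) t -
        Complex.exp (-(Complex.I * t * (k - a))) * Complex.exp (-((σ * t : ℂ) ^ 2 / 2)) * T t‖ ≤
      K0 * σ⁻¹ ^ r * (|σ * t| ^ (3 * r) * Real.exp (-(c3 * (σ * t) ^ 2))) +
        (Set.Icc (-Real.pi) Real.pi).indicator (fun _ => C2 * σ⁻¹ ^ (r + 1)) t := by
    intro k t
    have n1 : ‖Complex.exp (-(Complex.I * t * k))‖ = 1 := by rw [Complex.norm_exp]; simp
    have n2 : ‖Complex.exp (-(Complex.I * t * (k - a)))‖ = 1 := by rw [Complex.norm_exp]; simp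
    have n3 : ‖Complex.exp (-((σ * t : ℂ) ^ 2 / 2))‖ = Real.exp (-(1 / 2 * (σ * t) ^ 2)) := by
      rw [show (-((σ * t : ℂ) ^ 2 / 2)) = ((-(1 / 2 * (σ * t) ^ 2) : ℝ) : ℂ) by push_cast; ring,
        ← Complex.ofReal_exp, Complex.norm_real, Real.norm_of_nonneg (Real.exp_pos _).le]
    have e1 : Real.exp (-(1 / 2 * (σ * t) ^ 2)) ≤ Real.exp (-(c3 * (σ * t) ^ 2)) := by
      gcongr; exact min_le_right _ _
    have e2 : Real.exp (-(c2 * (σ * t) ^ 2)) ≤ Real.exp (-(c3 * (σ * t) ^ 2)) := by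
      gcongr; exact min_le_left _ _
    set ex := Real.exp (-(c3 * (σ * t) ^ 2)) with hex
    have hex0 : 0 < ex := Real.exp_pos _
    have hind : 0 ≤ (Set.Icc (-Real.pi) Real.pi).indicator (fun _ => C2 * σ⁻¹ ^ (r + 1)) t :=
      Set.indicator_nonneg (fun _ _ => by positivity) _
    have hK : K0 * σ⁻¹ ^ r * (|σ * t| ^ (3 * r) * ex) =
        (2 * C1 + (3 * r : ℕ) * C1 + C2) * (4 * |t| / ρ) ^ (3 * r) * ex := by
      rw [hscale, hK0]; ring
    rw [hK]
    by_cases ht : |t| ≤ ρ / 4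
    · have htη : |t| ≤ Real.pi := by linarith
      have htm : t ∈ Set.Icc (-Real.pi) Real.pi := abs_le.1 htη
      rw [Set.indicator_of_mem htm]
      have hd : Complex.exp (-(Complex.I * t * k)) * Φ t -
          Complex.exp (-(Complex.I * t * (k - a))) * Complex.exp (-((σ * t : ℂ) ^ 2 / 2)) * T t =
          Complex.exp (-(Complex.I * t * (k - a))) * Complex.exp (-((σ * t : ℂ) ^ 2 / 2)) *
            (H (Complex.I * t) - T t) := by
        rw [hΦdef]
        beta_reduce
        rw [hΦ t (by linarith),
          show (-(Complex.I * t * ((k : ℂ) - a))) = -(Complex.I * t * k) + Complex.I * t * a by ring,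
          Complex.exp_add]
        ring
      rw [hd, norm_mul, norm_mul, n2, n3, one_mul]
      have hz : ‖Complex.I * (t : ℂ)‖ = |t| := by simp
      have hrem := norm_sub_taylor_le hρ hHd hHb (3 * r) (z := Complex.I * t) (by rw [hz]; exact ht)
      rw [hz] at hrem
      have h1 : (|t| / (ρ / 2)) ^ (3 * r) ≤ (4 * |t| / ρ) ^ (3 * r) := by
        refine pow_le_pow_left₀ (by positivity) ?_ _
        rw [div_le_div_iff₀ (by positivity) hρ]
        nlinarith [mul_nonneg (abs_nonneg t) hρ.le]
      calc Real.exp (-(1 / 2 * (σ * t) ^ 2)) * ‖H (Complex.I * t) - T t‖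
          ≤ ex * (2 * C1 * (4 * |t| / ρ) ^ (3 * r)) := by
            gcongr
            exact hrem.trans (by gcongr)
        _ = (2 * C1 + 0 + 0) * (4 * |t| / ρ) ^ (3 * r) * ex := by ring
        _ ≤ (2 * C1 + (3 * r : ℕ) * C1 + C2) * (4 * |t| / ρ) ^ (3 * r) * ex := by
            gcongr; positivity
        _ ≤ _ := le_add_of_nonneg_right hind
    · push Not at ht
      have hX1 : 1 ≤ 4 * |t| / ρ := by rw [le_div_iff₀ hρ]; linarith
      have hX1' : 1 ≤ (4 * |t| / ρ) ^ (3 * r) := one_le_pow₀ hX1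
      have hTb : ‖T t‖ ≤ (3 * r : ℕ) * C1 * (4 * |t| / ρ) ^ (3 * r) := by
        calc ‖T t‖ ≤ ∑ q ∈ range (3 * r), C1 * (4 * |t| / ρ) ^ (3 * r) := by
              refine norm_sum_le_of_le _ fun q hq => ?_
              rw [Finset.mem_range] at hq
              have hz : ‖Complex.I * (t : ℂ)‖ = |t| := by simp
              rw [norm_mul (h q), norm_pow, hz]
              calc ‖h q‖ * |t| ^ q ≤ C1 / (ρ / 2) ^ q * |t| ^ q := by gcongr; exact hhb q
                _ = C1 * (2 * |t| / ρ) ^ q := by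
                    rw [div_pow, div_pow, mul_pow]; field_simp
                _ ≤ C1 * (4 * |t| / ρ) ^ q := by gcongr; norm_num
                _ ≤ C1 * (4 * |t| / ρ) ^ (3 * r) := by gcongr
          _ = _ := by rw [Finset.sum_const, card_range, nsmul_eq_mul]; ring
      have hB : ‖Complex.exp (-(Complex.I * t * (k - a))) *
          Complex.exp (-((σ * t : ℂ) ^ 2 / 2)) * T t‖ ≤
          (3 * r : ℕ) * C1 * (4 * |t| / ρ) ^ (3 * r) * ex := by
        rw [norm_mul, norm_mul, n2, n3, one_mul, mul_comm]
        gcongr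
      have hA : ‖(Set.Icc (-Real.pi) Real.pi).indicator
          (fun t : ℝ => Complex.exp (-(Complex.I * t * k)) * Φ t) t‖ ≤
          C2 * (4 * |t| / ρ) ^ (3 * r) * ex +
          (Set.Icc (-Real.pi) Real.pi).indicator (fun _ => C2 * σ⁻¹ ^ (r + 1)) t := by
        have hpos : 0 ≤ C2 * (4 * |t| / ρ) ^ (3 * r) * ex := by positivity
        by_cases htm : t ∈ Set.Icc (-Real.pi) Real.pi
        · rw [Set.indicator_of_mem htm, norm_mul, n1, one_mul]
          rcases le_total |t| η with htη | htη
          · refine le_add_of_le_of_nonneg ?_ hind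
            calc ‖Φ t‖ ≤ C2 * 1 * Real.exp (-(c2 * (σ * t) ^ 2)) := by
                  rw [mul_one]; exact hΦ1 t htη
              _ ≤ _ := by gcongr
          · rw [Set.indicator_of_mem htm]
            exact le_add_of_nonneg_of_le hpos (hΦ2 t htη (abs_le.2 htm))
        · rw [Set.indicator_of_notMem htm, norm_zero]
          exact add_nonneg hpos hind
      have hp : 0 ≤ 2 * C1 * (4 * |t| / ρ) ^ (3 * r) * ex := by positivity
      calc _ ≤ _ := norm_sub_le _ _
        _ ≤ _ := add_le_add hA hB
        _ ≤ _ := by nlinarith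
  -- integrated comparison
  refine ⟨∑ q ∈ range (3 * r), Polynomial.C ((h q).re * σ⁻¹ ^ q) * Qq q, ?_, ?_, ?_⟩
  · refine (Polynomial.natDegree_sum_le_of_forall_le _ _ fun q hq => ?_)
    refine (Polynomial.natDegree_C_mul_le _ _).trans ?_
    exact Finset.single_le_sum (f := fun q => (Qq q).natDegree) (fun _ _ => Nat.zero_le _) hq
  · intro i
    rw [Polynomial.finsetSum_coeff]
    refine (Finset.abs_sum_le_sum_abs _ _).trans (Finset.sum_le_sum fun q hq => ?_)
    rw [Polynomial.coeff_C_mul, abs_mul, abs_mul, abs_of_pos (show 0 < σ⁻¹ ^ q by positivity)]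
    refine mul_le_mul ?_ (abs_coeff_le_sum_support _ _) (abs_nonneg _) (by positivity)
    refine le_trans ?_ (hhσ q (Finset.mem_range.1 hq))
    gcongr
    exact Complex.abs_re_le_norm _
  · intro k
    set x : ℝ := (k - a) / σ with hx
    have hgm : ∀ t : ℝ, Complex.exp (-(Complex.I * t * (k - a))) *
        Complex.exp (-((σ * t : ℂ) ^ 2 / 2)) * T t =
        ∑ q ∈ range (3 * r), (h q * (σ : ℂ)⁻¹ ^ q) * gaussMonomial q x (σ * t) := by
      intro t
      rw [hT, Finset.mul_sum]
      refine Finset.sum_congr rfl fun q _ => ?_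
      have hσc : (σ : ℂ) ≠ 0 := by exact_mod_cast hσ0.ne'
      have e1 : (Complex.I * ((σ * t : ℝ) : ℂ) * (x : ℂ)) = Complex.I * t * (k - a) := by
        rw [hx]; push_cast; field_simp
      rw [gaussMonomial, e1]
      push_cast
      rw [show Complex.I * ((σ : ℂ) * t) = σ * (Complex.I * t) by ring, mul_pow (σ : ℂ), inv_pow]
      generalize Complex.I * (t : ℂ) = w
      field_simp
      rw [mul_pow, mul_assoc]
    have hint2 : Integrable (fun t : ℝ => ∑ q ∈ range (3 * r),
        (h q * (σ : ℂ)⁻¹ ^ q) * gaussMonomial q x (σ * t)) :=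
      integrable_finsetSum _ fun q _ =>
        ((integrable_gaussMonomial q x).comp_mul_left' hσ0.ne').const_mul _
    have hint1 : Integrable ((Set.Icc (-Real.pi) Real.pi).indicator
        (fun t : ℝ => Complex.exp (-(Complex.I * t * k)) * Φ t)) := by
      rw [integrable_indicator_iff measurableSet_Icc]
      refine Continuous.integrableOn_Icc ?_
      rw [hΦdef]; fun_prop
    have hint3 : Integrable (fun t : ℝ =>
        K0 * σ⁻¹ ^ r * (|σ * t| ^ (3 * r) * Real.exp (-(c3 * (σ * t) ^ 2)))) :=
      ((integrable_abs_pow_mul_exp_neg_mul_sq hc30 (3 * r)).comp_mul_left' hσ0.ne').const_mul _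
    have hint4 : Integrable ((Set.Icc (-Real.pi) Real.pi).indicator
        (fun _ : ℝ => C2 * σ⁻¹ ^ (r + 1))) := by
      rw [integrable_indicator_iff measurableSet_Icc]
      exact continuous_const.integrableOn_Icc
    have hmain : ‖(∫ t, (Set.Icc (-Real.pi) Real.pi).indicator
          (fun t : ℝ => Complex.exp (-(Complex.I * t * k)) * Φ t) t) -
          ∫ t : ℝ, ∑ q ∈ range (3 * r), (h q * (σ : ℂ)⁻¹ ^ q) * gaussMonomial q x (σ * t)‖ ≤
        ∫ t, (K0 * σ⁻¹ ^ r * (|σ * t| ^ (3 * r) * Real.exp (-(c3 * (σ * t) ^ 2))) +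
        (Set.Icc (-Real.pi) Real.pi).indicator (fun _ => C2 * σ⁻¹ ^ (r + 1)) t) := by
      rw [← integral_sub hint1 hint2]
      refine norm_integral_le_of_norm_le (hint3.add hint4) (ae_of_all _ fun t => ?_)
      rw [← hgm]
      exact hpt k t
    rw [integral_indicator measurableSet_Icc, integral_exp_mul_trigPoly A P hPA k,
      integral_finsetSum _ (fun q _ =>
        ((integrable_gaussMonomial q x).comp_mul_left' hσ0.ne').const_mul _),
      integral_add hint3 hint4, integral_const_mul,
      Measure.integral_comp_mul_left (fun s => |s| ^ (3 * r) * Real.exp (-(c3 * s ^ 2))),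
      integral_indicator measurableSet_Icc, setIntegral_const] at hmain
    simp_rw [integral_const_mul, integral_gaussMonomial_scale (hQq _) hσ0 x] at hmain
    have hre := (Complex.abs_re_le_norm _).trans hmain
    have hvol : volume.real (Set.Icc (-Real.pi) Real.pi) = 2 * Real.pi := by
      rw [Real.volume_real_Icc_of_le (by linarith [Real.pi_pos])]; ring
    rw [hvol, abs_of_pos (inv_pos.2 hσ0), smul_eq_mul, smul_eq_mul, ← hG0] at hre
    have hpi := Real.pi_pos
    have hLre : (2 * (Real.pi : ℂ) * (P k : ℂ) - ∑ q ∈ range (3 * r), h q * (σ : ℂ)⁻¹ ^ q *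
        ((2 * Real.pi * (σ⁻¹ * ((Qq q).eval x * gaussDensity x)) : ℝ) : ℂ)).re =
        2 * Real.pi * (P k - σ⁻¹ * (∑ q ∈ range (3 * r),
          Polynomial.C ((h q).re * σ⁻¹ ^ q) * Qq q).eval x * gaussDensity x) := by
      rw [Polynomial.eval_finsetSum, Complex.sub_re, Complex.re_sum, mul_sub]
      congr 1
      · simp
      · rw [Finset.mul_sum, Finset.sum_mul, Finset.mul_sum]
        refine Finset.sum_congr rfl fun q _ => ?_
        rw [Complex.re_mul_ofReal, Polynomial.eval_mul, Polynomial.eval_C, ← Complex.ofReal_inv,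
          ← Complex.ofReal_pow, Complex.re_mul_ofReal]
        ring
    rw [hLre, abs_mul, abs_of_pos (by positivity : (0 : ℝ) < 2 * Real.pi)] at hre
    rw [mul_assoc (2 * Real.pi)⁻¹, le_inv_mul_iff₀ (by positivity)]
    refine hre.trans (le_of_eq ?_)
    rw [pow_succ]; ring

section Transfer

variable {E : Type*} [MeasurableSpace E] {𝕜 : Type*} [RCLike 𝕜]

/-- Bounded measurable functions. -/
def BddMeas (G : E → 𝕜) : Prop := Measurable G ∧ ∃ M : ℝ, ∀ x, ‖G x‖ ≤ M

/-- A jointly measurable density with values in `[C⁻¹, C]`. -/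
def EllKernel (C : ℝ) (k : E → E → ℝ) : Prop :=
  Measurable (Function.uncurry k) ∧ ∀ x y, C⁻¹ ≤ k x y ∧ k x y ≤ C

theorem EllKernel.flip {C : ℝ} {k : E → E → ℝ} (hk : EllKernel C k) :
    EllKernel C (fun x y => k y x) :=
  ⟨hk.1.comp measurable_swap, fun x y => hk.2 y x⟩

theorem EllKernel.measurable_left {C : ℝ} {k : E → E → ℝ} (hk : EllKernel C k) (y : E) :
    Measurable (fun x => k x y) := hk.1.comp (measurable_id.prodMk measurable_const)

theorem EllKernel.pos {C : ℝ} (hC : 1 ≤ C) {k : E → E → ℝ} (hk : EllKernel C k) (x y : E) :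
    0 < k x y := lt_of_lt_of_le (by positivity) (hk.2 x y).1

theorem EllKernel.norm_le {C : ℝ} (hC : 1 ≤ C) {k : E → E → ℝ} (hk : EllKernel C k) (x y : E) :
    ‖k x y‖ ≤ C := by
  rw [Real.norm_of_nonneg (hk.pos hC x y).le]; exact (hk.2 x y).2

theorem BddMeas.mul {F G : E → 𝕜} (hF : BddMeas F) (hG : BddMeas G) :
    BddMeas (fun x => F x * G x) := by
  obtain ⟨hFm, M, hM⟩ := hF
  obtain ⟨hGm, M', hM'⟩ := hG
  refine ⟨hFm.mul hGm, M * M', fun x => ?_⟩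
  rw [norm_mul]
  exact mul_le_mul (hM x) (hM' x) (norm_nonneg _) ((norm_nonneg _).trans (hM x))

theorem BddMeas.sub {F G : E → 𝕜} (hF : BddMeas F) (hG : BddMeas G) :
    BddMeas (fun x => F x - G x) := by
  obtain ⟨hFm, M, hM⟩ := hF
  obtain ⟨hGm, M', hM'⟩ := hG
  exact ⟨hFm.sub hGm, M + M', fun x => (norm_sub_le _ _).trans (add_le_add (hM x) (hM' x))⟩

theorem BddMeas.norm {F : E → 𝕜} (hF : BddMeas F) : BddMeas (𝕜 := ℝ) (fun x => ‖F x‖) := by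
  obtain ⟨hFm, M, hM⟩ := hF
  exact ⟨hFm.norm, M, fun x => by simpa using hM x⟩

theorem BddMeas.ofReal {F : E → ℝ} (hF : BddMeas F) : BddMeas (𝕜 := ℂ) (fun x => (F x : ℂ)) := by
  obtain ⟨hFm, M, hM⟩ := hF
  exact ⟨Complex.measurable_ofReal.comp hFm, M, fun x => by simpa using hM x⟩

theorem bddMeas_const (a : 𝕜) : BddMeas (fun _ : E => a) := ⟨measurable_const, ‖a‖, fun _ => le_rfl⟩

theorem BddMeas.integrable {G : E → 𝕜} (hG : BddMeas G) (ν : Measure E) [IsFiniteMeasure ν] :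
    Integrable G ν := by
  obtain ⟨hm, M, hM⟩ := hG
  exact Integrable.of_bound hm.aestronglyMeasurable M (ae_of_all _ hM)

theorem BddMeas.smul {C : ℝ} (hC : 1 ≤ C) {k : E → E → ℝ} (hk : EllKernel C k) {G : E → 𝕜}
    (hG : BddMeas G) (y : E) : BddMeas (fun x => k x y • G x) := by
  obtain ⟨hm, M, hM⟩ := hG
  refine ⟨(hk.measurable_left y).smul hm, C * M, fun x => ?_⟩
  rw [norm_smul]
  exact mul_le_mul (hk.norm_le hC x y) (hM x) (norm_nonneg _) (by linarith)

theorem BddMeas.transfer {C : ℝ} (hC : 1 ≤ C) {k : E → E → ℝ} (hk : EllKernel C k) {G : E → 𝕜}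
    (hG : BddMeas G) (ν : Measure E) [IsProbabilityMeasure ν] :
    BddMeas (fun y => ∫ x, k x y • G x ∂ν) := by
  have hG' := hG
  obtain ⟨hm, M, hM⟩ := hG
  refine ⟨?_, C * M, fun y => ?_⟩
  · refine StronglyMeasurable.measurable ?_
    refine StronglyMeasurable.integral_prod_right (f := fun y x => k x y • G x) (ν := ν) ?_
    exact ((hk.1.comp measurable_swap).smul (hm.comp measurable_snd)).stronglyMeasurable
  · refine (norm_integral_le_of_norm_le_const (C := C * M) (ae_of_all _ fun x => ?_)).trans ?_
    · rw [norm_smul]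
      exact mul_le_mul (hk.norm_le hC x y) (hM x) (norm_nonneg _) (by linarith)
    · simp

/-- Fubini for the bilinear form attached to a density. -/
theorem integral_mul_transfer_comm {C : ℝ} (hC : 1 ≤ C) {k : E → E → ℝ} (hk : EllKernel C k)
    {F G : E → 𝕜} (hF : BddMeas F) (hG : BddMeas G) (ν₁ ν₂ : Measure E)
    [IsProbabilityMeasure ν₁] [IsProbabilityMeasure ν₂] :
    ∫ u, F u * ∫ x, k x u • G x ∂ν₁ ∂ν₂ = ∫ x, (∫ u, k x u • F u ∂ν₂) * G x ∂ν₁ := by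
  simp_rw [← integral_const_mul, ← integral_mul_const]
  rw [integral_integral_swap]
  · congr 1; ext x; congr 1; ext u; simp [mul_comm]
  · obtain ⟨hFm, M, hM⟩ := hF
    obtain ⟨hGm, M', hM'⟩ := hG
    refine Integrable.of_bound (C := M * (C * M')) ?_ (ae_of_all _ fun z => ?_)
    · exact ((hFm.comp measurable_fst).mul ((hk.1.comp measurable_swap).smul
        (hGm.comp measurable_snd))).aestronglyMeasurable
    · simp only [Function.uncurry]
      rw [norm_mul, norm_smul]
      refine mul_le_mul (hM _) ?_ (by positivity) ((norm_nonneg _).trans (hM z.1))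
      exact mul_le_mul (hk.norm_le hC _ _) (hM' _) (norm_nonneg _) (by linarith)

/-- `G` is uniformly close, relative to the positive weight `g`, to the multiple `A • g`; the
oscillation of `g` is controlled by `D`. -/
structure Good (θ D : ℝ) (A : ℂ) (G : E → ℂ) (g : E → ℝ) : Prop where
  measG : BddMeas G
  measg : BddMeas g
  pos : ∀ x, 0 < g x
  osc : ∀ x x', g x ≤ D * g x'
  ne : A ≠ 0
  close : ∀ x, ‖G x - A * g x‖ ≤ θ * ‖A‖ * g x

theorem Good.norm_sub_le {θ D : ℝ} {A : ℂ} {G : E → ℂ} {g : E → ℝ} (h : Good θ D A G g)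
    {ε : ℝ} {e : E → ℂ} (he : ∀ x, ‖e x - 1‖ ≤ ε) (x : E) :
    ‖e x * G x - A * g x‖ ≤ (θ + ε * (1 + θ)) * ‖A‖ * g x := by
  have hG : ‖G x‖ ≤ (1 + θ) * ‖A‖ * g x := by
    calc ‖G x‖ = ‖(G x - A * g x) + A * g x‖ := by ring_nf
      _ ≤ θ * ‖A‖ * g x + ‖A‖ * g x := by
          refine (norm_add_le _ _).trans (add_le_add (h.close x) ?_)
          rw [norm_mul, Complex.norm_real, Real.norm_of_nonneg (h.pos x).le]
      _ = _ := by ring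
  calc ‖e x * G x - A * g x‖ = ‖(e x - 1) * G x + (G x - A * g x)‖ := by ring_nf
    _ ≤ ε * ((1 + θ) * ‖A‖ * g x) + θ * ‖A‖ * g x := by
        refine (norm_add_le _ _).trans (add_le_add ?_ (h.close x))
        rw [norm_mul]
        exact mul_le_mul (he x) hG (norm_nonneg _) ((norm_nonneg _).trans (he x))
    _ = _ := by ring

/-- One transfer step preserves the property `Good`: Doeblin contraction compensates a small
complex perturbation. -/
theorem Good.step {C : ℝ} (hC : 1 ≤ C) {k : E → E → ℝ} (hk : EllKernel C k)
    {A : ℂ} {G : E → ℂ} {g : E → ℝ} (h : Good (1 / 16) (C ^ 2) A G g)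
    {e : E → ℂ} (hem : Measurable e) (he : ∀ x, ‖e x - 1‖ ≤ (C ^ 2)⁻¹ / 64)
    (ν : Measure E) [IsProbabilityMeasure ν] :
    ∃ A' : ℂ, Good (1 / 16) (C ^ 2) A' (fun y => ∫ x, k x y • (e x * G x) ∂ν)
      (fun y => ∫ x, k x y • g x ∂ν) := by
  have hC0 : 0 < C := by linarith
  have hebd : BddMeas e := ⟨hem, 1 + (C ^ 2)⁻¹ / 64, fun x => by
    calc ‖e x‖ = ‖1 + (e x - 1)‖ := by ring_nf
      _ ≤ _ := (norm_add_le _ _).trans (by simpa using he x)⟩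
  set I : ℝ := ∫ x, g x ∂ν with hI
  have hIpos : 0 < I := by
    obtain ⟨x0⟩ : Nonempty E := ν.nonempty_of_neZero
    have h1 : ∫ _, g x0 / C ^ 2 ∂ν ≤ I :=
      integral_mono (integrable_const _) (h.measg.integrable ν) fun x => by
        rw [div_le_iff₀' (by positivity)]; exact h.osc x0 x
    rw [integral_const] at h1
    have h2 : 0 < g x0 / C ^ 2 := div_pos (h.pos x0) (by positivity)
    simp at h1
    linarith
  set g' : E → ℝ := fun y => ∫ x, k x y • g x ∂ν with hg'
  have hint : ∀ y, Integrable (fun x => k x y • g x) ν := fun y =>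
    (BddMeas.smul hC hk h.measg y).integrable ν
  have hlow : ∀ y, C⁻¹ * I ≤ g' y := fun y => by
    rw [hI, ← integral_const_mul]
    exact integral_mono ((h.measg.integrable ν).const_mul _) (hint y) fun x => by
      simpa using mul_le_mul_of_nonneg_right (hk.2 x y).1 (h.pos x).le
  have hup : ∀ y, g' y ≤ C * I := fun y => by
    rw [hI, ← integral_const_mul]
    exact integral_mono (hint y) ((h.measg.integrable ν).const_mul _) fun x => by
      simpa using mul_le_mul_of_nonneg_right (hk.2 x y).2 (h.pos x).le
  set c : ℝ := (C ^ 2)⁻¹ with hc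
  have hc0 : 0 < c := by positivity
  have hc1 : c ≤ 1 := inv_le_one_of_one_le₀ (one_le_pow₀ hC)
  set κ : ℝ := 1 / 16 + c / 64 * (1 + 1 / 16) with hκ
  set B : E → ℂ := fun x => e x * G x - A * g x with hB
  have hBm : BddMeas B := (hebd.mul h.measG).sub ((bddMeas_const A).mul h.measg.ofReal)
  have hBb : ∀ x, ‖B x‖ ≤ κ * ‖A‖ * g x := fun x => h.norm_sub_le he x
  have hApos : 0 < ‖A‖ := norm_pos_iff.2 h.ne
  have hJ : ‖∫ x, B x ∂ν‖ ≤ κ * ‖A‖ * I := by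
    rw [hI, ← integral_const_mul]
    exact norm_integral_le_of_norm_le ((h.measg.integrable ν).const_mul _) (ae_of_all _ hBb)
  set J : ℂ := ∫ x, B x ∂ν with hJdef
  have hIc : (I : ℂ) ≠ 0 := by exact_mod_cast hIpos.ne'
  have hA' : (1 - c * κ) * ‖A‖ ≤ ‖A + c * J / I‖ := by
    have h1 : ‖(c : ℂ) * J / I‖ ≤ c * κ * ‖A‖ := by
      rw [norm_div, norm_mul, Complex.norm_real, Complex.norm_real, Real.norm_of_nonneg hc0.le,
        Real.norm_of_nonneg hIpos.le, div_le_iff₀ hIpos]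
      calc c * ‖J‖ ≤ c * (κ * ‖A‖ * I) := by gcongr
        _ = _ := by ring
    have h2 := norm_sub_norm_le A (-(c * J / I))
    rw [norm_neg, sub_neg_eq_add] at h2
    linarith
  have hκ1 : κ ≤ 1 / 8 := by rw [hκ]; linarith
  have hκ0 : 0 < κ := by positivity
  refine ⟨A + c * J / I, BddMeas.transfer hC hk (hebd.mul h.measG) ν,
    BddMeas.transfer hC hk h.measg ν, fun y => lt_of_lt_of_le (by positivity) (hlow y), ?_, ?_, ?_⟩
  · intro y y'
    calc g' y ≤ C * I := hup y
      _ = C ^ 2 * (C⁻¹ * I) := by field_simp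
      _ ≤ C ^ 2 * g' y' := by gcongr; exact hlow y'
  · rw [← norm_pos_iff]
    refine lt_of_lt_of_le (mul_pos ?_ hApos) hA'
    nlinarith
  · intro y
    have hkB : Integrable (fun x => k x y • B x) ν := (BddMeas.smul hC hk hBm y).integrable ν
    have hBi : Integrable B ν := hBm.integrable ν
    have e1 : (∫ x, k x y • (e x * G x) ∂ν) - (A + c * J / I) * (g' y : ℂ) =
        ∫ x, (k x y - c * g' y / I) • B x ∂ν := by
      have e2 : ∫ x, k x y • (e x * G x) ∂ν = (∫ x, k x y • B x ∂ν) + A * (g' y : ℂ) := by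
        rw [hg', ← integral_complex_ofReal, ← integral_const_mul, ← integral_add hkB]
        · congr 1; ext x; simp [hB]; ring
        · simpa using ((hint y).ofReal (𝕜 := ℂ)).const_mul A
      have e3 : ∀ s : ℝ, ∫ x, (k x y - s) • B x ∂ν =
          (∫ x, k x y • B x ∂ν) - (s : ℂ) * J := by
        intro s
        rw [hJdef, ← integral_const_mul, ← integral_sub hkB (hBi.const_mul _)]
        congr 1; ext x; rw [sub_smul]; simp
      rw [e2, e3]; push_cast; field_simp; ring
    have hcg : ∀ x, 0 ≤ k x y - c * g' y / I := fun x => by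
      have : c * g' y / I ≤ C⁻¹ := by
        rw [div_le_iff₀ hIpos]
        calc c * g' y ≤ c * (C * I) := by gcongr; exact hup y
          _ = C⁻¹ * I := by rw [hc]; field_simp
      linarith [(hk.2 x y).1]
    rw [e1]
    calc ‖∫ x, (k x y - c * g' y / I) • B x ∂ν‖
        ≤ ∫ x, (κ * ‖A‖) * (k x y • g x - c * g' y / I * g x) ∂ν := by
          refine norm_integral_le_of_norm_le
            (((hint y).sub ((h.measg.integrable ν).const_mul _)).const_mul _)
            (ae_of_all _ fun x => ?_)
          rw [norm_smul, Real.norm_of_nonneg (hcg x), smul_eq_mul]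
          calc _ ≤ (k x y - c * g' y / I) * (κ * ‖A‖ * g x) := by
                gcongr
                · exact hcg x
                · exact hBb x
            _ = _ := by ring
      _ = κ * ‖A‖ * ((1 - c) * g' y) := by
          rw [integral_const_mul, integral_sub (hint y) ((h.measg.integrable ν).const_mul _),
            integral_const_mul, ← hI]
          congr 1
          rw [div_mul_cancel₀ _ hIpos.ne']
          ring
      _ ≤ 1 / 16 * ((1 - c * κ) * ‖A‖) * g' y := by
          have hg0 : 0 < g' y := lt_of_lt_of_le (by positivity) (hlow y)
          have : κ * (1 - c) ≤ 1 / 16 * (1 - c * κ) := by rw [hκ]; nlinarith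
          nlinarith [mul_pos hApos hg0]
      _ ≤ _ := by
          have hg0 : 0 < g' y := lt_of_lt_of_le (by positivity) (hlow y)
          gcongr

end Transfer

section Gibbs

variable {E : Type*} [MeasurableSpace E] {𝕜 : Type*} [RCLike 𝕜]

/-- Partition functions: integrate the product of the densities `p i (x i) (x (i+1))` and of the
site factors `e i (x i)` over the sites `i < n`, the site `n` being frozen at `y`. -/
def Lv (p : ℕ → E → E → ℝ) (ν : ℕ → Measure E) (e : ℕ → E → 𝕜) : ℕ → E → 𝕜
  | 0, _ => 1
  | n + 1, y => ∫ x, p n x y • (e n x * Lv p ν e n x) ∂(ν n)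

variable {C : ℝ} {p : ℕ → E → E → ℝ}

theorem Lv_bddMeas (hC : 1 ≤ C) (hp : ∀ n, EllKernel C (p n)) {ν : ℕ → Measure E}
    (hν : ∀ n, IsProbabilityMeasure (ν n)) {e : ℕ → E → 𝕜} (he : ∀ n, BddMeas (e n)) (n : ℕ) :
    BddMeas (Lv p ν e n) := by
  induction n with
  | zero => exact bddMeas_const 1
  | succ n ih => exact BddMeas.transfer hC (hp n) ((he n).mul ih) (ν n)

theorem Lv_congr {p' : ℕ → E → E → ℝ} {ν ν' : ℕ → Measure E} {e e' : ℕ → E → 𝕜} (n : ℕ)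
    (hp : ∀ i < n, p i = p' i) (hν : ∀ i < n, ν i = ν' i) (he : ∀ i < n, e i = e' i) :
    Lv p ν e n = Lv p' ν' e' n := by
  induction n with
  | zero => rfl
  | succ n ih =>
    ext y
    rw [Lv, Lv, ih (fun i hi => hp i (by omega)) (fun i hi => hν i (by omega))
      (fun i hi => he i (by omega)), hp n n.lt_succ_self, hν n n.lt_succ_self, he n n.lt_succ_self]

theorem Lv_one_ofReal (p : ℕ → E → E → ℝ) (ν : ℕ → Measure E) (n : ℕ) (y : E) :
    Lv p ν (fun _ _ => (1 : ℂ)) n y = ((Lv p ν (fun _ _ => (1 : ℝ)) n y : ℝ) : ℂ) := by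
  induction n generalizing y with
  | zero => simp [Lv]
  | succ n ih =>
    rw [Lv, Lv, ← integral_complex_ofReal]
    congr 1; ext x
    rw [ih]; simp

theorem exists_good_Lv (hC : 1 ≤ C) (hp : ∀ n, EllKernel C (p n)) {ν : ℕ → Measure E}
    (hν : ∀ n, IsProbabilityMeasure (ν n)) {e : ℕ → E → ℂ} (hem : ∀ n, Measurable (e n))
    (he : ∀ n x, ‖e n x - 1‖ ≤ (C ^ 2)⁻¹ / 64) (n : ℕ) :
    ∃ A : ℂ, Good (1 / 16) (C ^ 2) A (Lv p ν e n) (Lv p ν (fun _ _ => (1 : ℝ)) n) := by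
  induction n with
  | zero =>
    refine ⟨1, bddMeas_const 1, bddMeas_const 1, fun x => by simp [Lv], fun x x' => ?_, one_ne_zero,
      fun x => by simp [Lv]⟩
    simpa [Lv] using one_le_pow₀ (n := 2) hC
  | succ n ih =>
    obtain ⟨A, hA⟩ := ih
    obtain ⟨A', hA'⟩ := hA.step hC (hp n) (hem n) (he n) (ν n)
    have h1 : Lv p ν (fun _ _ => (1 : ℝ)) (n + 1) =
        fun y => ∫ x, p n x y • Lv p ν (fun _ _ => (1 : ℝ)) n x ∂(ν n) := by
      ext y; simp [Lv]
    rw [h1]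
    exact ⟨A', hA'⟩

theorem Lv_one_pos (hC : 1 ≤ C) (hp : ∀ n, EllKernel C (p n)) {ν : ℕ → Measure E}
    (hν : ∀ n, IsProbabilityMeasure (ν n)) (n : ℕ) (y : E) :
    0 < Lv p ν (fun _ _ => (1 : ℝ)) n y := by
  obtain ⟨A, hA⟩ := exists_good_Lv hC hp hν (e := fun _ _ => (1 : ℂ)) (fun _ => measurable_const)
    (fun n x => by simp; positivity) n
  exact hA.pos y

/-- Moving the observation of the chain from site `j + d` back to site `j`. -/
theorem exists_pairing (hC : 1 ≤ C) (hp : ∀ n, EllKernel C (p n)) {ν : ℕ → Measure E}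
    (hν : ∀ n, IsProbabilityMeasure (ν n)) {e : ℕ → E → ℂ} (hem : ∀ n, Measurable (e n))
    (he : ∀ n x, ‖e n x - 1‖ ≤ (C ^ 2)⁻¹ / 64) (j d : ℕ) :
    ∀ (A : ℂ) (F : E → ℂ) (Φ : E → ℝ), Good (1 / 16) (C ^ 2) A F Φ →
    ∃ (A' : ℂ) (F' : E → ℂ) (Φ' : E → ℝ), Good (1 / 16) (C ^ 2) A' F' Φ' ∧
      ∀ (ν' : ℕ → Measure E) (e' : ℕ → E → ℂ), (∀ i, IsProbabilityMeasure (ν' i)) →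
        (∀ i, BddMeas (e' i)) → (∀ i, j < i → ν' i = ν i) → (∀ i, j < i → e' i = e i) →
        ∫ x, F x * (e' (j + d) x * Lv p ν' e' (j + d) x) ∂(ν' (j + d)) =
            ∫ x, F' x * (e' j x * Lv p ν' e' j x) ∂(ν' j) ∧
        ∫ x, Φ x * Lv p ν' (fun _ _ => (1 : ℝ)) (j + d) x ∂(ν' (j + d)) =
            ∫ x, Φ' x * Lv p ν' (fun _ _ => (1 : ℝ)) j x ∂(ν' j) := by
  induction d with
  | zero => exact fun A F Φ h => ⟨A, F, Φ, h, fun _ _ _ _ _ _ => ⟨rfl, rfl⟩⟩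
  | succ d ih =>
    intro A F Φ h
    obtain ⟨A₁, h₁⟩ := h.step hC (hp (j + d)).flip (hem (j + d + 1)) (he (j + d + 1))
      (ν (j + d + 1))
    obtain ⟨A', F', Φ', h', H⟩ := ih _ _ _ h₁
    refine ⟨A', F', Φ', h', fun ν' e' hν' he' hνe hee => ?_⟩
    obtain ⟨H1, H2⟩ := H ν' e' hν' he' hνe hee
    rw [← H1, ← H2, ← add_assoc]
    have hebd : BddMeas (e (j + d + 1)) := by
      rw [← hee _ (by omega)]; exact he' _
    have i1 : IsProbabilityMeasure (ν (j + d + 1)) := hν _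
    have i2 : IsProbabilityMeasure (ν' (j + d)) := hν' _
    constructor
    · rw [hνe (j + d + 1) (by omega), hee (j + d + 1) (by omega)]
      have := integral_mul_transfer_comm (𝕜 := ℂ) hC (hp (j + d)) (hebd.mul h.measG)
        ((he' (j + d)).mul (Lv_bddMeas hC hp hν' he' (j + d))) (ν' (j + d)) (ν (j + d + 1))
      rw [← this]
      congr 1; ext u
      rw [Lv]; ring
    · rw [hνe (j + d + 1) (by omega)]
      have := integral_mul_transfer_comm (𝕜 := ℝ) hC (hp (j + d)) h.measg
        (Lv_bddMeas hC hp hν' (e := fun _ _ => (1 : ℝ)) (fun _ => bddMeas_const 1) (j + d))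
        (ν' (j + d)) (ν (j + d + 1))
      rw [← this]
      congr 1; ext u
      rw [Lv]; simp

theorem Good.mul {D₁ D₂ : ℝ} {A₁ A₂ : ℂ} {G₁ G₂ : E → ℂ} {g₁ g₂ : E → ℝ}
    (h₁ : Good (1 / 16) D₁ A₁ G₁ g₁) (h₂ : Good (1 / 16) D₂ A₂ G₂ g₂) :
    Good (1 / 7) (D₁ * D₂) (A₁ * A₂) (fun x => G₁ x * G₂ x) (fun x => g₁ x * g₂ x) := by
  refine ⟨h₁.measG.mul h₂.measG, h₁.measg.mul h₂.measg, fun x => mul_pos (h₁.pos x) (h₂.pos x),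
    fun x x' => ?_, mul_ne_zero h₁.ne h₂.ne, fun x => ?_⟩
  · calc g₁ x * g₂ x ≤ (D₁ * g₁ x') * (D₂ * g₂ x') :=
        mul_le_mul (h₁.osc x x') (h₂.osc x x') (h₂.pos x).le ((h₁.pos x).le.trans (h₁.osc x x'))
      _ = _ := by ring
  · have p1 := h₁.pos x
    have p2 := h₂.pos x
    have n1 : ‖A₁ * (g₁ x : ℂ)‖ = ‖A₁‖ * g₁ x := by
      rw [norm_mul, Complex.norm_real, Real.norm_of_nonneg p1.le]
    have n2 : ‖A₂ * (g₂ x : ℂ)‖ = ‖A₂‖ * g₂ x := by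
      rw [norm_mul, Complex.norm_real, Real.norm_of_nonneg p2.le]
    set a := ‖A₁‖ * g₁ x with ha
    set b := ‖A₂‖ * g₂ x with hb
    have ha0 : 0 ≤ a := by positivity
    have hb0 : 0 ≤ b := by positivity
    have c1 : ‖G₁ x - A₁ * g₁ x‖ ≤ 1 / 16 * a := by
      have := h₁.close x; rw [mul_assoc] at this; exact this
    have c2 : ‖G₂ x - A₂ * g₂ x‖ ≤ 1 / 16 * b := by
      have := h₂.close x; rw [mul_assoc] at this; exact this
    have key : G₁ x * G₂ x - A₁ * A₂ * ((g₁ x * g₂ x : ℝ) : ℂ) =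
        (G₁ x - A₁ * g₁ x) * (G₂ x - A₂ * g₂ x) + (G₁ x - A₁ * g₁ x) * (A₂ * g₂ x) +
          (A₁ * g₁ x) * (G₂ x - A₂ * g₂ x) := by push_cast; ring
    rw [key]
    calc _ ≤ (1 / 16 * a) * (1 / 16 * b) + (1 / 16 * a) * b + a * (1 / 16 * b) := by
          refine (norm_add_le _ _).trans (add_le_add ((norm_add_le _ _).trans (add_le_add ?_ ?_)) ?_)
          · rw [norm_mul]; exact mul_le_mul c1 c2 (norm_nonneg _) (by positivity)
          · rw [norm_mul, n2]; exact mul_le_mul_of_nonneg_right c1 hb0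
          · rw [norm_mul, n1]; exact mul_le_mul_of_nonneg_left c2 ha0
      _ ≤ 1 / 7 * (a * b) := by nlinarith [mul_nonneg ha0 hb0]
      _ = _ := by rw [ha, hb, norm_mul]; ring

/-- Disintegration of the partition function over a single site. -/
theorem exists_site (hC : 1 ≤ C) (hp : ∀ n, EllKernel C (p n)) {ν : ℕ → Measure E}
    (hν : ∀ n, IsProbabilityMeasure (ν n)) {e : ℕ → E → ℂ} (hem : ∀ n, Measurable (e n))
    (he : ∀ n x, ‖e n x - 1‖ ≤ (C ^ 2)⁻¹ / 64) {j n : ℕ} (hjn : j ≤ n) (y : E) :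
    ∃ (A : ℂ) (W : E → ℂ) (w : E → ℝ), Good (1 / 7) (C ^ 4) A W w ∧
      ∀ (ν' : ℕ → Measure E) (e' : ℕ → E → ℂ), (∀ i, IsProbabilityMeasure (ν' i)) →
        (∀ i, BddMeas (e' i)) → (∀ i ≠ j, ν' i = ν i) → (∀ i ≠ j, e' i = e i) →
        Lv p ν' e' (n + 1) y = ∫ x, e' j x * W x ∂(ν' j) ∧
        Lv p ν' (fun _ _ => (1 : ℝ)) (n + 1) y = ∫ x, w x ∂(ν' j) := by
  obtain ⟨d, rfl⟩ := Nat.exists_eq_add_of_le hjn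
  have hC0 : 0 < C := by linarith
  have hterm : Good (1 / 16) (C ^ 2) 1 (fun x => ((p (j + d) x y : ℝ) : ℂ))
      (fun x => p (j + d) x y) := by
    have hb : BddMeas (fun x => p (j + d) x y) :=
      ⟨(hp _).measurable_left y, C, fun x => (hp _).norm_le hC x y⟩
    refine ⟨hb.ofReal, hb, fun x => (hp _).pos hC x y, fun x x' => ?_, one_ne_zero, fun x => ?_⟩
    · calc p (j + d) x y ≤ C := ((hp _).2 x y).2
        _ = C ^ 2 * C⁻¹ := by field_simp
        _ ≤ _ := by gcongr; exact ((hp _).2 x' y).1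
    · simp [((hp (j + d)).pos hC x y).le]
  obtain ⟨A₁, F, Φ, hF, H⟩ := exists_pairing hC hp hν hem he j d _ _ _ hterm
  obtain ⟨A₂, hL⟩ := exists_good_Lv hC hp hν hem he j
  refine ⟨_, _, _, by simpa [← pow_add] using hF.mul hL, fun ν' e' hν' he' hνe hee => ?_⟩
  obtain ⟨H1, H2⟩ := H ν' e' hν' he' (fun i hi => hνe i (by omega)) (fun i hi => hee i (by omega))
  have hL1 : Lv p ν' e' j = Lv p ν e j := Lv_congr j (fun _ _ => rfl)
    (fun i hi => hνe i (by omega)) (fun i hi => hee i (by omega))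
  have hL2 : Lv p ν' (fun _ _ => (1 : ℝ)) j = Lv p ν (fun _ _ => (1 : ℝ)) j :=
    Lv_congr j (fun _ _ => rfl) (fun i hi => hνe i (by omega)) (fun _ _ => rfl)
  rw [hL1] at H1
  rw [hL2] at H2
  constructor
  · rw [Lv]
    calc _ = _ := integral_congr_ae (ae_of_all _ fun x => Complex.real_smul)
      _ = _ := H1
      _ = _ := integral_congr_ae (ae_of_all _ fun x => by beta_reduce; ring)
  · rw [Lv]
    refine Eq.trans (integral_congr_ae (ae_of_all _ fun x => ?_)) H2
    simp

theorem Good.norm_integral_sub_le (hC : 1 ≤ C) {A : ℂ} {W : E → ℂ} {w : E → ℝ}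
    (h : Good (1 / 7) (C ^ 4) A W w)
    {e : E → ℂ} (hem : Measurable e) (he : ∀ x, ‖e x - 1‖ ≤ (C ^ 2)⁻¹ / 64)
    (ν : Measure E) [IsProbabilityMeasure ν] :
    ‖∫ x, e x * W x ∂ν - A * ((∫ x, w x ∂ν : ℝ) : ℂ)‖ ≤ 1 / 6 * ‖A‖ * ∫ x, w x ∂ν := by
  have hc1 : (C ^ 2)⁻¹ ≤ 1 := inv_le_one_of_one_le₀ (one_le_pow₀ hC)
  have he' : ∀ x, ‖e x - 1‖ ≤ 1 / 64 := fun x => (he x).trans (by linarith)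
  have hebd : BddMeas e := ⟨hem, 2, fun x => by
    calc ‖e x‖ = ‖1 + (e x - 1)‖ := by ring_nf
      _ ≤ 1 + 1 / 64 := (norm_add_le _ _).trans (by simpa using he' x)
      _ ≤ 2 := by norm_num⟩
  rw [← integral_complex_ofReal, ← integral_const_mul, ← integral_sub
    ((hebd.mul h.measG).integrable ν) (((bddMeas_const A).mul h.measg.ofReal).integrable ν),
    ← integral_const_mul]
  refine norm_integral_le_of_norm_le ((h.measg.integrable ν).const_mul _) (ae_of_all _ fun x => ?_)
  refine (h.norm_sub_le he' x).trans ?_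
  have := h.pos x
  gcongr
  norm_num

theorem Good.integral_pos {D : ℝ} {A : ℂ} {W : E → ℂ} {w : E → ℝ}
    (h : Good (1 / 7) D A W w) (ν : Measure E) [IsProbabilityMeasure ν] : 0 < ∫ x, w x ∂ν := by
  rw [integral_pos_iff_support_of_nonneg (fun x => (h.pos x).le) (h.measg.integrable ν)]
  have : Function.support w = Set.univ := by
    ext x; simp [(h.pos x).ne']
  rw [this]; simp

theorem norm_div_sub_one_le_half {A z₁ z₂ : ℂ} (hA : A ≠ 0) (h₁ : ‖z₁ - A‖ ≤ 1 / 6 * ‖A‖)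
    (h₂ : ‖z₂ - A‖ ≤ 1 / 6 * ‖A‖) : z₁ ≠ 0 ∧ ‖z₂ / z₁ - 1‖ ≤ 1 / 2 := by
  have hA0 : 0 < ‖A‖ := norm_pos_iff.2 hA
  have hz : 5 / 6 * ‖A‖ ≤ ‖z₁‖ := by
    have := norm_sub_norm_le A (A - z₁)
    rw [sub_sub_cancel, norm_sub_rev A z₁] at this
    linarith
  have hz0 : 0 < ‖z₁‖ := by linarith
  have hne : z₁ ≠ 0 := norm_pos_iff.1 hz0
  refine ⟨hne, ?_⟩
  rw [div_sub_one hne, norm_div, div_le_iff₀ hz0]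
  calc ‖z₂ - z₁‖ = ‖(z₂ - A) - (z₁ - A)‖ := by ring_nf
    _ ≤ _ := (norm_sub_le _ _).trans (add_le_add h₂ h₁)
    _ ≤ _ := by linarith

/-- Effect of switching on a single site factor. -/
theorem Lv_site_factor (hC : 1 ≤ C) (hp : ∀ n, EllKernel C (p n)) {ν : ℕ → Measure E}
    (hν : ∀ n, IsProbabilityMeasure (ν n)) {e e' : ℕ → E → ℂ} (hem : ∀ n, Measurable (e n))
    (he : ∀ n x, ‖e n x - 1‖ ≤ (C ^ 2)⁻¹ / 64) (hem' : ∀ n, Measurable (e' n))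
    (he' : ∀ n x, ‖e' n x - 1‖ ≤ (C ^ 2)⁻¹ / 64) {j n : ℕ} (hjn : j ≤ n)
    (hj : ∀ x, e j x = 1) (hee : ∀ i ≠ j, e' i = e i) (y : E) :
    Lv p ν e (n + 1) y ≠ 0 ∧
    ‖Lv p ν e' (n + 1) y / Lv p ν e (n + 1) y - 1‖ ≤ 1 / 2 ∧
    ‖Lv p ν e' (n + 1) y / Lv p ν e (n + 1) y - 1‖ ≤ 2 * C ^ 4 * ∫ x, ‖e' j x - 1‖ ∂(ν j) := by
  obtain ⟨A, W, w, hW, H⟩ := exists_site hC hp hν hem he hjn y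
  have hc1 : (C ^ 2)⁻¹ ≤ 1 := inv_le_one_of_one_le₀ (one_le_pow₀ hC)
  have bd : ∀ {e : ℕ → E → ℂ}, (∀ n, Measurable (e n)) →
      (∀ n x, ‖e n x - 1‖ ≤ (C ^ 2)⁻¹ / 64) → ∀ i, BddMeas (e i) := fun {e} hem he i =>
    ⟨hem i, 2, fun x => by
      calc ‖e i x‖ = ‖1 + (e i x - 1)‖ := by ring_nf
        _ ≤ 1 + (C ^ 2)⁻¹ / 64 := (norm_add_le _ _).trans (by simpa using he i x)
        _ ≤ 2 := by linarith⟩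
  have i1 : IsProbabilityMeasure (ν j) := hν j
  obtain ⟨H1, -⟩ := H ν e hν (bd hem he) (fun _ _ => rfl) (fun _ _ => rfl)
  obtain ⟨H2, -⟩ := H ν e' hν (bd hem' he') (fun _ _ => rfl) hee
  have hIpos := hW.integral_pos (ν j)
  set I := ∫ x, w x ∂(ν j) with hI
  have hI0 : (I : ℂ) ≠ 0 := by exact_mod_cast hIpos.ne'
  have hA0 : 0 < ‖A‖ := norm_pos_iff.2 hW.ne
  have scale : ∀ z : ℂ, ‖z - A * I‖ ≤ 1 / 6 * ‖A‖ * I → ‖z - A * I‖ ≤ 1 / 6 * ‖A * I‖ := by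
    intro z hz
    rw [norm_mul, Complex.norm_real, Real.norm_of_nonneg hIpos.le, ← mul_assoc]; exact hz
  have N1 := scale _ (hW.norm_integral_sub_le hC (hem j) (he j) (ν j))
  have N2 := scale _ (hW.norm_integral_sub_le hC (hem' j) (he' j) (ν j))
  rw [← H1] at N1
  rw [← H2] at N2
  obtain ⟨hne, hhalf⟩ := norm_div_sub_one_le_half (mul_ne_zero hW.ne hI0) N1 N2
  refine ⟨hne, hhalf, ?_⟩
  rw [div_sub_one hne, norm_div, div_le_iff₀ (norm_pos_iff.2 hne), H2, H1]
  have hlow : 5 / 6 * (‖A‖ * I) ≤ ‖∫ x, e j x * W x ∂(ν j)‖ := by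
    rw [← H1]
    have := norm_sub_norm_le (A * I) (A * I - Lv p ν e (n + 1) y)
    rw [sub_sub_cancel, norm_sub_rev (A * (I : ℂ))] at this
    have h3 : ‖A * (I : ℂ)‖ = ‖A‖ * I := by
      rw [norm_mul, Complex.norm_real, Real.norm_of_nonneg hIpos.le]
    rw [h3] at this N1
    linarith
  have hbe' := bd hem' he' j
  have hbe := bd hem he j
  have hsubm : BddMeas (fun x => e' j x - 1) := hbe'.sub (bddMeas_const 1)
  have hwI : ∀ x, w x ≤ C ^ 4 * I := fun x => by
    rw [hI, ← integral_const_mul]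
    have : ∫ _, w x ∂(ν j) ≤ ∫ x', C ^ 4 * w x' ∂(ν j) :=
      integral_mono (integrable_const _) ((hW.measg.integrable _).const_mul _)
        fun x' => hW.osc x x'
    simpa using this
  have hWb : ∀ x, ‖W x‖ ≤ 8 / 7 * (‖A‖ * (C ^ 4 * I)) := fun x => by
    calc ‖W x‖ = ‖(W x - A * w x) + A * w x‖ := by ring_nf
      _ ≤ 1 / 7 * ‖A‖ * w x + ‖A‖ * w x := by
          refine (norm_add_le _ _).trans (add_le_add (hW.close x) ?_)
          rw [norm_mul, Complex.norm_real, Real.norm_of_nonneg (hW.pos x).le]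
      _ = 8 / 7 * (‖A‖ * w x) := by ring
      _ ≤ _ := by gcongr; exact hwI x
  have hdiff : ‖∫ x, e' j x * W x ∂(ν j) - ∫ x, e j x * W x ∂(ν j)‖ ≤
      (∫ x, ‖e' j x - 1‖ ∂(ν j)) * (8 / 7 * (‖A‖ * (C ^ 4 * I))) := by
    rw [← integral_sub ((hbe'.mul hW.measG).integrable _) ((hbe.mul hW.measG).integrable _),
      ← integral_mul_const]
    refine norm_integral_le_of_norm_le ((hsubm.norm.integrable _).mul_const _)
      (ae_of_all _ fun x => ?_)
    rw [hj x, ← sub_mul, norm_mul]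
    exact mul_le_mul_of_nonneg_left (hWb x) (norm_nonneg _)
  have hint0 : 0 ≤ ∫ x, ‖e' j x - 1‖ ∂(ν j) := integral_nonneg fun _ => norm_nonneg _
  refine hdiff.trans ?_
  calc _ = (∫ x, ‖e' j x - 1‖ ∂(ν j)) * C ^ 4 * (8 / 7) * (‖A‖ * I) := by ring
    _ ≤ (∫ x, ‖e' j x - 1‖ ∂(ν j)) * C ^ 4 * 2 * (5 / 6 * (‖A‖ * I)) := by
        have : 0 ≤ (∫ x, ‖e' j x - 1‖ ∂(ν j)) * C ^ 4 * (‖A‖ * I) := by positivity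
        nlinarith
    _ ≤ 2 * C ^ 4 * (∫ x, ‖e' j x - 1‖ ∂(ν j)) * ‖∫ x, e j x * W x ∂(ν j)‖ := by
        rw [show (∫ x, ‖e' j x - 1‖ ∂(ν j)) * C ^ 4 * 2 =
          2 * C ^ 4 * ∫ x, ‖e' j x - 1‖ ∂(ν j) by ring]
        gcongr

/-- Effect of changing the reference measure at a single site on the normalised partition
function. -/
theorem Lv_site_measure (hC : 1 ≤ C) (hp : ∀ n, EllKernel C (p n)) {ν ν' : ℕ → Measure E}
    (hν : ∀ n, IsProbabilityMeasure (ν n)) (hν' : ∀ n, IsProbabilityMeasure (ν' n))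
    {e : ℕ → E → ℂ} (hem : ∀ n, Measurable (e n))
    (he : ∀ n x, ‖e n x - 1‖ ≤ (C ^ 2)⁻¹ / 64) {j n : ℕ} (hjn : j ≤ n)
    (hνν : ∀ i ≠ j, ν' i = ν i) (y : E) :
    Lv p ν e (n + 1) y / ((Lv p ν (fun _ _ => (1 : ℝ)) (n + 1) y : ℝ) : ℂ) ≠ 0 ∧
    ‖(Lv p ν' e (n + 1) y / ((Lv p ν' (fun _ _ => (1 : ℝ)) (n + 1) y : ℝ) : ℂ)) /
      (Lv p ν e (n + 1) y / ((Lv p ν (fun _ _ => (1 : ℝ)) (n + 1) y : ℝ) : ℂ)) - 1‖ ≤ 1 / 2 := by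
  obtain ⟨A, W, w, hW, H⟩ := exists_site hC hp hν hem he hjn y
  have hc1 : (C ^ 2)⁻¹ ≤ 1 := inv_le_one_of_one_le₀ (one_le_pow₀ hC)
  have hbe : ∀ i, BddMeas (e i) := fun i =>
    ⟨hem i, 2, fun x => by
      calc ‖e i x‖ = ‖1 + (e i x - 1)‖ := by ring_nf
        _ ≤ 1 + (C ^ 2)⁻¹ / 64 := (norm_add_le _ _).trans (by simpa using he i x)
        _ ≤ 2 := by linarith⟩
  have key : ∀ ν'' : ℕ → Measure E, (∀ n, IsProbabilityMeasure (ν'' n)) →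
      (∀ i ≠ j, ν'' i = ν i) →
      ‖Lv p ν'' e (n + 1) y / ((Lv p ν'' (fun _ _ => (1 : ℝ)) (n + 1) y : ℝ) : ℂ) - A‖ ≤
        1 / 6 * ‖A‖ := by
    intro ν'' hν'' hνν''
    have i1 : IsProbabilityMeasure (ν'' j) := hν'' j
    obtain ⟨H1, H2⟩ := H ν'' e hν'' hbe hνν'' (fun _ _ => rfl)
    rw [H1, H2]
    have hIpos := hW.integral_pos (ν'' j)
    have N1 := hW.norm_integral_sub_le hC (hem j) (he j) (ν'' j)
    set I := ∫ x, w x ∂(ν'' j) with hI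
    have hI0 : (I : ℂ) ≠ 0 := by exact_mod_cast hIpos.ne'
    rw [div_sub' hI0, norm_div, Complex.norm_real, Real.norm_of_nonneg hIpos.le,
      div_le_iff₀ hIpos, mul_comm (I : ℂ)]
    exact N1
  exact norm_div_sub_one_le_half hW.ne (key ν hν fun _ _ => rfl) (key ν' hν' hνν)

end Gibbs

section GenFun

variable {E : Type*} [MeasurableSpace E]

/-- Unnormalised law of `∑_{i<n} g i (x i)` under the weights defining `Lv`. -/
def Vr (p : ℕ → E → E → ℝ) (ν : ℕ → Measure E) (g : ℕ → E → ℤ) : ℕ → E → ℤ → ℝ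
  | 0, _, a => if a = 0 then 1 else 0
  | n + 1, y, a => ∫ x, p n x y • Vr p ν g n x (a - g n x) ∂(ν n)

variable {C : ℝ} {p : ℕ → E → E → ℝ} {ν : ℕ → Measure E} {g : ℕ → E → ℤ}

theorem Vr_bound (hC : 1 ≤ C) (hp : ∀ n, EllKernel C (p n))
    (hν : ∀ n, IsProbabilityMeasure (ν n)) (n : ℕ) (y : E) (a : ℤ) :
    ‖Vr p ν g n y a‖ ≤ C ^ n := by
  induction n generalizing y a with
  | zero => rw [Vr]; split_ifs <;> simp
  | succ n ih =>
    rw [Vr]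
    refine (norm_integral_le_of_norm_le_const (C := C ^ (n + 1)) (ae_of_all _ fun x => ?_)).trans
      (by simp)
    rw [norm_smul, pow_succ']
    exact mul_le_mul ((hp n).norm_le hC x y) (ih _ _) (norm_nonneg _) (by linarith)

theorem Vr_shift_bddMeas (hC : 1 ≤ C) (hp : ∀ n, EllKernel C (p n))
    (hν : ∀ n, IsProbabilityMeasure (ν n)) (hg : ∀ n, Measurable (g n)) (n : ℕ)
    {h : E → ℤ} (hh : Measurable h) (a : ℤ) :
    BddMeas (fun x => Vr p ν g n x (a - h x)) := by
  have hmeas : ∀ a, Measurable (fun x => Vr p ν g n x a) := by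
    induction n generalizing h a with
    | zero => intro a; exact measurable_const
    | succ n ih =>
      intro a
      have hb : BddMeas (fun x => Vr p ν g n x (a - g n x)) := by
        refine ⟨?_, C ^ n, fun x => Vr_bound hC hp hν n x _⟩
        have h1 : Measurable (fun z : E × ℤ => Vr p ν g n z.1 z.2) :=
          measurable_from_prod_countable_left fun b => ih hh a b
        exact h1.comp (measurable_id.prodMk (measurable_const.sub (hg n)))
      exact (BddMeas.transfer hC (hp n) hb (ν n)).1
  refine ⟨?_, C ^ n, fun x => Vr_bound hC hp hν n x _⟩
  have h1 : Measurable (fun z : E × ℤ => Vr p ν g n z.1 z.2) :=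
    measurable_from_prod_countable_left fun b => hmeas b
  exact h1.comp (measurable_id.prodMk (measurable_const.sub hh))

theorem Vr_eq_zero {M : ℕ} (hM : ∀ n x, |g n x| ≤ (M : ℤ)) (n : ℕ) (y : E) (a : ℤ)
    (ha : a ∉ Finset.Icc (-(n * M : ℤ)) (n * M)) : Vr p ν g n y a = 0 := by
  induction n generalizing y a with
  | zero =>
    rw [Vr, if_neg]
    rintro rfl
    simp at ha
  | succ n ih =>
    rw [Vr]
    refine integral_eq_zero_of_ae (ae_of_all _ fun x => ?_)
    show p n x y • Vr p ν g n x (a - g n x) = 0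
    rw [ih x _ ?_, smul_zero]
    intro hmem
    apply ha
    rw [Finset.mem_Icc] at hmem ⊢
    have := abs_le.1 (hM n x)
    push_cast
    constructor <;> linarith

theorem sum_Icc_shift {F : ℤ → ℂ} {m M s : ℤ} (hF : ∀ a ∉ Finset.Icc (-m) m, F a = 0)
    (hs : |s| ≤ M) :
    ∑ a ∈ Finset.Icc (-m) m, F a = ∑ b ∈ Finset.Icc (-(m + M)) (m + M), F (b - s) := by
  have h := abs_le.1 hs
  have h1 : ∑ a ∈ Finset.Icc (-m) m, F a = ∑ b ∈ Finset.Icc (-m + s) (m + s), F (b - s) := by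
    rw [← Finset.map_add_right_Icc, Finset.sum_map]
    simp
  rw [h1]
  refine Finset.sum_subset (Finset.Icc_subset_Icc (by linarith) (by linarith)) fun b _ hb => ?_
  refine hF _ fun hmem => hb ?_
  rw [Finset.mem_Icc] at hmem ⊢
  constructor <;> linarith

/-- Site factors of exponential type. -/
def expSite (g : ℕ → E → ℤ) (z : ℂ) : ℕ → E → ℂ := fun n x => Complex.exp (z * (g n x : ℂ))

theorem measurable_expSite (hg : ∀ n, Measurable (g n)) (z : ℂ) (n : ℕ) :
    Measurable (expSite g z n) := by
  have : Measurable (fun k : ℤ => Complex.exp (z * (k : ℂ))) := measurable_of_countable _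
  exact this.comp (hg n)

/-- The partition function with exponential site factors is the generating function of `Vr`. -/
theorem Lv_expSite_eq_sum (hC : 1 ≤ C) (hp : ∀ n, EllKernel C (p n))
    (hν : ∀ n, IsProbabilityMeasure (ν n)) (hg : ∀ n, Measurable (g n)) {M : ℕ}
    (hM : ∀ n x, |g n x| ≤ (M : ℤ)) (z : ℂ) (n : ℕ) (y : E) :
    Lv p ν (expSite g z) n y =
      ∑ a ∈ Finset.Icc (-(n * M : ℤ)) (n * M), (Vr p ν g n y a : ℂ) * Complex.exp (z * a) := by
  induction n generalizing y with
  | zero => simp [Lv, Vr]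
  | succ n ih =>
    rw [Lv]
    have e1 : ∀ x, p n x y • (expSite g z n x * Lv p ν (expSite g z) n x) =
        ∑ b ∈ Finset.Icc (-((n + 1 : ℕ) * M : ℤ)) ((n + 1 : ℕ) * M),
          ((p n x y • Vr p ν g n x (b - g n x) : ℝ) : ℂ) * Complex.exp (z * b) := by
      intro x
      rw [ih x, sum_Icc_shift (s := g n x) (M := M) (fun a ha => by
        rw [Vr_eq_zero hM n x a ha]; simp) (hM n x), Finset.mul_sum, Finset.smul_sum,
        show ((n : ℤ) * M + M) = ((n + 1 : ℕ) : ℤ) * M by push_cast; ring]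
      refine Finset.sum_congr rfl fun b _ => ?_
      rw [expSite, mul_left_comm, ← Complex.exp_add, Complex.real_smul, smul_eq_mul]
      push_cast
      rw [mul_assoc]
      congr 3
      ring
    simp_rw [e1]
    have hb : ∀ b, BddMeas (fun x => p n x y • Vr p ν g n x (b - g n x)) := fun b =>
      BddMeas.smul hC (hp n) (Vr_shift_bddMeas hC hp hν hg n (hg n) b) y
    have i1 := hν n
    rw [integral_finsetSum _ fun b _ => ((hb b).ofReal.mul (bddMeas_const _)).integrable (ν n)]
    refine Finset.sum_congr rfl fun b _ => ?_
    rw [integral_mul_const, integral_complex_ofReal, Vr]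

theorem differentiable_Lv_expSite (hC : 1 ≤ C) (hp : ∀ n, EllKernel C (p n))
    (hν : ∀ n, IsProbabilityMeasure (ν n)) (hg : ∀ n, Measurable (g n)) {M : ℕ}
    (hM : ∀ n x, |g n x| ≤ (M : ℤ)) (n : ℕ) (y : E) :
    Differentiable ℂ (fun z => Lv p ν (expSite g z) n y) := by
  simp_rw [Lv_expSite_eq_sum hC hp hν hg hM]
  fun_prop

/-- Radius of the disc on which the perturbative regime is available. -/
def discRadius (C : ℝ) (M : ℕ) : ℝ := (C ^ 2)⁻¹ / (128 * (M + 1))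

theorem discRadius_pos (hC : 1 ≤ C) (M : ℕ) : 0 < discRadius C M := by
  unfold discRadius; positivity

theorem norm_expSite_sub_one_le (hC : 1 ≤ C) {M : ℕ} (hM : ∀ n x, |g n x| ≤ (M : ℤ)) {z : ℂ}
    (hz : z ∈ Metric.ball (0 : ℂ) (discRadius C M)) (n : ℕ) (x : E) :
    ‖expSite g z n x - 1‖ ≤ (C ^ 2)⁻¹ / 64 := by
  have hc1 : (C ^ 2)⁻¹ ≤ 1 := inv_le_one_of_one_le₀ (one_le_pow₀ hC)
  have hc0 : 0 ≤ (C ^ 2)⁻¹ := by positivity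
  rw [mem_ball_zero_iff] at hz
  have hgM : ‖((g n x : ℤ) : ℂ)‖ ≤ M + 1 := by
    rw [Complex.norm_intCast]
    have : |((g n x : ℤ) : ℝ)| ≤ M := by exact_mod_cast hM n x
    linarith
  have h1 : ‖z * (g n x : ℂ)‖ ≤ (C ^ 2)⁻¹ / 128 := by
    rw [norm_mul]
    calc _ ≤ discRadius C M * (M + 1) :=
          mul_le_mul hz.le hgM (norm_nonneg _) (discRadius_pos hC M).le
      _ = _ := by unfold discRadius; field_simp
  refine (Complex.norm_exp_sub_one_le (by linarith)).trans ?_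
  linarith

theorem integral_norm_expSite_sub_one_le (hC : 1 ≤ C) (hν : ∀ n, IsProbabilityMeasure (ν n))
    (hg : ∀ n, Measurable (g n)) {M : ℕ}
    (hM : ∀ n x, |g n x| ≤ (M : ℤ)) {z : ℂ}
    (hz : z ∈ Metric.ball (0 : ℂ) (discRadius C M)) (n : ℕ) :
    ∫ x, ‖expSite g z n x - 1‖ ∂(ν n) ≤ (ν n).real {x | g n x ≠ 0} := by
  have i1 := hν n
  have hms : MeasurableSet {x | g n x ≠ 0} := (hg n) (measurableSet_singleton 0).compl
  have hc1 : (C ^ 2)⁻¹ ≤ 1 := inv_le_one_of_one_le₀ (one_le_pow₀ hC)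
  rw [← integral_indicator_one hms]
  refine integral_mono_of_nonneg (ae_of_all _ fun _ => norm_nonneg _)
    ((integrable_const (1 : ℝ)).indicator hms) (ae_of_all _ fun x => ?_)
  by_cases hx : g n x = 0
  · simp [expSite, hx]
  · rw [Set.indicator_of_mem (show x ∈ {x | g n x ≠ 0} from hx)]
    refine (norm_expSite_sub_one_le hC hM hz n x).trans ?_
    simp; linarith

theorem log_ratio {w : ℂ} (hw : ‖w - 1‖ ≤ 1 / 2) :
    w ≠ 0 ∧ w ∈ Complex.slitPlane ∧ ‖Complex.log w‖ ≤ 3 / 2 * ‖w - 1‖ := by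
  have h2 : ‖w - 1‖ < 1 := by linarith
  have hs : w ∈ Complex.slitPlane := by
    have := Complex.mem_slitPlane_of_norm_lt_one h2
    simpa using this
  refine ⟨Complex.slitPlane_ne_zero hs, hs, ?_⟩
  have := Complex.norm_log_one_add_half_le_self hw
  simpa using this

/-- A holomorphic logarithm of the normalised generating function, with a bound of the order of
the total size of the site perturbations. -/
theorem exists_log (hC : 1 ≤ C) (hp : ∀ n, EllKernel C (p n))
    (hν : ∀ n, IsProbabilityMeasure (ν n)) (hg : ∀ n, Measurable (g n)) {M : ℕ}
    (hM : ∀ n x, |g n x| ≤ (M : ℤ)) (N : ℕ) (y : E) :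
    ∃ Λ : ℂ → ℂ, DifferentiableOn ℂ Λ (Metric.ball 0 (discRadius C M)) ∧ Λ 0 = 0 ∧
      ∀ z ∈ Metric.ball (0 : ℂ) (discRadius C M),
        Lv p ν (expSite g z) (N + 1) y =
          Complex.exp (Λ z) * ((Lv p ν (fun _ _ => (1 : ℝ)) (N + 1) y : ℝ) : ℂ) ∧
        ‖Λ z‖ ≤ 3 * C ^ 4 * ∑ i ∈ range (N + 1), (ν i).real {x | g i x ≠ 0} := by
  set gg : ℕ → ℕ → E → ℤ := fun j i x => if i < j then g i x else 0 with hgg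
  have hggm : ∀ j i, Measurable (gg j i) := fun j i => by
    by_cases h : i < j
    · simpa [hgg, h] using hg i
    · simp [hgg, h]
  have hggM : ∀ j i x, |gg j i x| ≤ (M : ℤ) := fun j i x => by
    simp only [hgg]
    split_ifs
    · exact hM i x
    · simp
  set L : ℕ → ℂ → ℂ := fun j z => Lv p ν (expSite (gg j) z) (N + 1) y with hL
  have key : ∀ j ≤ N, ∀ z ∈ Metric.ball (0 : ℂ) (discRadius C M), L j z ≠ 0 ∧
      ‖L (j + 1) z / L j z - 1‖ ≤ 1 / 2 ∧
      ‖L (j + 1) z / L j z - 1‖ ≤ 2 * C ^ 4 * (ν j).real {x | g j x ≠ 0} := by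
    intro j hj z hz
    obtain ⟨h1, h2, h3⟩ := Lv_site_factor hC hp hν (e := expSite (gg j) z)
      (e' := expSite (gg (j + 1)) z) (measurable_expSite (hggm j) z)
      (norm_expSite_sub_one_le hC (hggM j) hz) (measurable_expSite (hggm (j + 1)) z)
      (norm_expSite_sub_one_le hC (hggM (j + 1)) hz) hj
      (fun x => by simp [expSite, hgg]) (fun i hi => by
        ext x
        have : i < j + 1 ↔ i < j := by omega
        simp [expSite, hgg, this]) y
    refine ⟨h1, h2, h3.trans ?_⟩
    gcongr
    have e1 : ∀ x, expSite (gg (j + 1)) z j x = expSite g z j x := fun x => by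
      simp [expSite, hgg]
    simp_rw [e1]
    exact integral_norm_expSite_sub_one_le hC hν hg hM hz j
  have hdiff : ∀ j, Differentiable ℂ (L j) := fun j =>
    differentiable_Lv_expSite hC hp hν (hggm j) (hggM j) (N + 1) y
  have hL0 : ∀ z, L 0 z = ((Lv p ν (fun _ _ => (1 : ℝ)) (N + 1) y : ℝ) : ℂ) := fun z => by
    rw [← Lv_one_ofReal]
    simp only [hL]
    congr 1
    ext i x; simp [expSite, hgg]
  have hLN : ∀ z, L (N + 1) z = Lv p ν (expSite g z) (N + 1) y := fun z => by
    simp only [hL]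
    rw [Lv_congr (N + 1) (fun _ _ => rfl) (fun _ _ => rfl) (e' := expSite g z)]
    intro i hi
    ext x; simp [expSite, hgg, hi]
  refine ⟨fun z => ∑ j ∈ range (N + 1), Complex.log (L (j + 1) z / L j z), ?_, ?_, ?_⟩
  · refine DifferentiableOn.fun_sum fun j hj => ?_
    have hj' : j ≤ N := by have := Finset.mem_range.1 hj; omega
    refine DifferentiableOn.clog ?_ fun z hz => (log_ratio (key j hj' z hz).2.1).2.1
    exact (hdiff _).differentiableOn.div (hdiff _).differentiableOn fun z hz => (key j hj' z hz).1
  · refine Finset.sum_eq_zero fun j hj => ?_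
    have hj' : j ≤ N := by have := Finset.mem_range.1 hj; omega
    have h0 : (0 : ℂ) ∈ Metric.ball (0 : ℂ) (discRadius C M) :=
      Metric.mem_ball_self (discRadius_pos hC M)
    have e1 : ∀ j, L j 0 = L 0 0 := fun j => by
      have : expSite (gg j) 0 = expSite (gg 0) 0 := by ext i x; simp [expSite]
      simp only [hL, this]
    rw [e1, e1 j, div_self (by rw [← e1 j]; exact (key j hj' 0 h0).1), Complex.log_one]
  · intro z hz
    constructor
    · have tele : ∀ n ≤ N + 1, L n z =
          Complex.exp (∑ j ∈ range n, Complex.log (L (j + 1) z / L j z)) * L 0 z := by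
        intro n hn
        induction n with
        | zero => simp
        | succ n ih =>
          obtain ⟨h1, h2, -⟩ := key n (by omega) z hz
          rw [Finset.sum_range_succ, Complex.exp_add, Complex.exp_log (log_ratio h2).1,
            mul_right_comm, ← ih (by omega), mul_div_cancel₀ _ h1]
      rw [← hLN, tele (N + 1) le_rfl, hL0]
    · rw [Finset.mul_sum]
      refine norm_sum_le_of_le _ fun j hj => ?_
      have hj' : j ≤ N := by have := Finset.mem_range.1 hj; omega
      obtain ⟨-, h2, h3⟩ := key j hj' z hz
      exact ((log_ratio h2).2.2).trans (by linarith)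

/-- Changing the reference measures at the sites in `J` modifies the normalised generating
function by the exponential of a bounded holomorphic function. -/
theorem exists_log_of_measure_change (hC : 1 ≤ C) (hp : ∀ n, EllKernel C (p n))
    (hν : ∀ n, IsProbabilityMeasure (ν n)) (hg : ∀ n, Measurable (g n)) {M : ℕ}
    (hM : ∀ n x, |g n x| ≤ (M : ℤ)) (N : ℕ) (y : E) (J : Finset ℕ) (hJ : ∀ j ∈ J, j ≤ N) :
    ∀ ν' : ℕ → Measure E, (∀ n, IsProbabilityMeasure (ν' n)) → (∀ i ∉ J, ν' i = ν i) →
    ∃ Δ : ℂ → ℂ, DifferentiableOn ℂ Δ (Metric.ball 0 (discRadius C M)) ∧ Δ 0 = 0 ∧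
      ∀ z ∈ Metric.ball (0 : ℂ) (discRadius C M),
        Lv p ν' (expSite g z) (N + 1) y / ((Lv p ν' (fun _ _ => (1 : ℝ)) (N + 1) y : ℝ) : ℂ) =
          Complex.exp (Δ z) * (Lv p ν (expSite g z) (N + 1) y /
            ((Lv p ν (fun _ _ => (1 : ℝ)) (N + 1) y : ℝ) : ℂ)) ∧
        ‖Δ z‖ ≤ J.card := by
  induction J using Finset.induction_on with
  | empty =>
    intro ν' _ h
    have : ν' = ν := funext fun i => h i (Finset.notMem_empty i)
    subst this
    exact ⟨fun _ => 0, differentiableOn_const 0, rfl, fun z _ => by simp⟩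
  | insert j J hj ih =>
    intro ν' hν' h
    set ν'' : ℕ → Measure E := Function.update ν' j (ν j) with hν''def
    have hν'' : ∀ n, IsProbabilityMeasure (ν'' n) := fun n => by
      by_cases hn : n = j
      · subst hn; simpa [hν''def] using hν n
      · simpa [hν''def, hn] using hν' n
    obtain ⟨Δ, hΔd, hΔ0, hΔ⟩ := ih (fun i hi => hJ i (Finset.mem_insert_of_mem hi)) ν'' hν''
      (fun i hi => by
        by_cases hn : i = j
        · subst hn; simp [hν''def]
        · simp only [hν''def, Function.update_of_ne hn]
          exact h i (by simp [hn, hi]))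
    set φ : (ℕ → Measure E) → ℂ → ℂ := fun ν z =>
      Lv p ν (expSite g z) (N + 1) y / ((Lv p ν (fun _ _ => (1 : ℝ)) (N + 1) y : ℝ) : ℂ) with hφ
    have key : ∀ z ∈ Metric.ball (0 : ℂ) (discRadius C M),
        φ ν'' z ≠ 0 ∧ ‖φ ν' z / φ ν'' z - 1‖ ≤ 1 / 2 := fun z hz =>
      Lv_site_measure hC hp hν'' hν' (measurable_expSite hg z) (norm_expSite_sub_one_le hC hM hz)
        (hJ j (Finset.mem_insert_self _ _))
        (fun i hi => by simp [hν''def, Function.update_of_ne hi]) y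
    have hdiff : ∀ ν, (∀ n, IsProbabilityMeasure (ν n)) → Differentiable ℂ (φ ν) := fun ν hν =>
      (differentiable_Lv_expSite hC hp hν hg hM (N + 1) y).div_const _
    have hφ0 : ∀ ν, (∀ n, IsProbabilityMeasure (ν n)) → φ ν 0 = 1 := fun ν hν => by
      have h1 : Lv p ν (expSite g 0) (N + 1) y =
          ((Lv p ν (fun _ _ => (1 : ℝ)) (N + 1) y : ℝ) : ℂ) := by
        rw [← Lv_one_ofReal]; congr 1; ext i x; simp [expSite]
      simp only [hφ]
      rw [h1, div_self]
      exact_mod_cast (Lv_one_pos hC hp hν (N + 1) y).ne'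
    refine ⟨fun z => Δ z + Complex.log (φ ν' z / φ ν'' z), ?_, ?_, fun z hz => ⟨?_, ?_⟩⟩
    · refine hΔd.add (DifferentiableOn.clog ?_ fun z hz => (log_ratio (key z hz).2).2.1)
      exact (hdiff _ hν').differentiableOn.div (hdiff _ hν'').differentiableOn fun z hz =>
        (key z hz).1
    · simp [hΔ0, hφ0 ν' hν', hφ0 ν'' hν'']
    · rw [Complex.exp_add, Complex.exp_log (log_ratio (key z hz).2).1, mul_right_comm,
        ← (hΔ z hz).1]
      exact (mul_div_cancel₀ _ (key z hz).1).symm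
    · rw [Finset.card_insert_of_notMem hj]
      push_cast
      refine (norm_add_le _ _).trans (add_le_add (hΔ z hz).2 ?_)
      have := (log_ratio (key z hz).2)
      linarith [this.2.2, (key z hz).2]

end GenFun

section Decay

variable {E : Type*} [MeasurableSpace E]

theorem norm_integral_mul_le_of_rotation {a b ζ : ℝ} (ha : 0 < a) (hb : 0 < b) (ν : Measure E)
    [IsProbabilityMeasure ν] {h : E → ℝ} (hh : BddMeas h) (hlo : ∀ x, a ≤ h x)
    (hhi : ∀ x, h x ≤ b) {e : E → ℂ} (hem : Measurable e) (he : ∀ x, ‖e x‖ ≤ 1) (hζ0 : 0 ≤ ζ)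
    (hζ : ∀ w : ℂ, ‖w‖ = 1 → ζ ≤ ∫ x, (1 - (w * e x).re) ∂ν) :
    ‖∫ x, (h x : ℂ) * e x ∂ν‖ ≤ Real.exp (-(a / b * ζ)) * ∫ x, h x ∂ν := by
  have hebd : BddMeas e := ⟨hem, 1, he⟩
  set v := ∫ x, (h x : ℂ) * e x ∂ν with hv
  obtain ⟨w, hw1, hwv⟩ : ∃ w : ℂ, ‖w‖ = 1 ∧ w * v = (‖v‖ : ℂ) := by
    by_cases h0 : v = 0
    · exact ⟨1, by simp, by simp [h0]⟩
    · have hn : ‖v‖ ≠ 0 := norm_ne_zero_iff.2 h0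
      refine ⟨(starRingEnd ℂ) v / ‖v‖, by simp [hn], ?_⟩
      rw [div_mul_eq_mul_div, mul_comm, Complex.mul_conj, Complex.normSq_eq_norm_sq]
      push_cast
      field_simp
  have i1 : Integrable (fun x => (h x : ℂ) * e x) ν := (hh.ofReal.mul hebd).integrable ν
  have i2 : Integrable (fun x => (1 - (w * e x).re)) ν := by
    refine (integrable_const 1).sub ?_
    exact (((bddMeas_const w).mul hebd).integrable ν).re
  have i3 : Integrable (fun x => h x * (1 - (w * e x).re)) ν :=
    i2.bdd_mul (c := max |a| |b|) hh.1.aestronglyMeasurable (ae_of_all _ fun x => by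
      rw [Real.norm_eq_abs]; exact abs_le_max_abs_abs (hlo x) (hhi x))
  have hnn : ∀ x, 0 ≤ 1 - (w * e x).re := fun x => by
    have := Complex.re_le_norm (w * e x)
    rw [norm_mul, hw1, one_mul] at this
    linarith [he x]
  have key : ‖v‖ = ∫ x, h x ∂ν - ∫ x, h x * (1 - (w * e x).re) ∂ν := by
    have e1 : ‖v‖ = ∫ x, (w * ((h x : ℂ) * e x)).re ∂ν := by
      have : ‖v‖ = (w * v).re := by rw [hwv]; simp
      rw [this, hv, ← integral_const_mul]
      exact (integral_re (i1.const_mul w)).symm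
    rw [e1, ← integral_sub (hh.integrable ν) i3]
    congr 1; ext x
    have : w * ((h x : ℂ) * e x) = (h x : ℂ) * (w * e x) := by ring
    rw [this, Complex.re_ofReal_mul]; ring
  have h1 : a * ζ ≤ ∫ x, h x * (1 - (w * e x).re) ∂ν := by
    calc a * ζ ≤ a * ∫ x, (1 - (w * e x).re) ∂ν := by gcongr; exact hζ w hw1
      _ = ∫ x, a * (1 - (w * e x).re) ∂ν := (integral_const_mul _ _).symm
      _ ≤ _ := integral_mono (i2.const_mul a) i3 fun x =>
        mul_le_mul_of_nonneg_right (hlo x) (hnn x)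
  have h2 : ∫ x, h x ∂ν ≤ b := by
    calc ∫ x, h x ∂ν ≤ ∫ _, b ∂ν := integral_mono (hh.integrable ν) (integrable_const b) hhi
      _ = b := by simp
  have h0 : 0 ≤ ∫ x, h x ∂ν := integral_nonneg fun x => ha.le.trans (hlo x)
  have h3 : a / b * ζ * ∫ x, h x ∂ν ≤ a * ζ := by
    calc a / b * ζ * ∫ x, h x ∂ν ≤ a / b * ζ * b := by gcongr
      _ = a * ζ := by field_simp
  have h4 := Real.add_one_le_exp (-(a / b * ζ))
  calc ‖v‖ ≤ (-(a / b * ζ) + 1) * ∫ x, h x ∂ν := by rw [key]; linarith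
    _ ≤ _ := by gcongr

variable {C : ℝ} {p : ℕ → E → E → ℝ} {ν : ℕ → Measure E}

/-- Accumulated decay along sites of the same parity. -/
def parityDecay (ζ : ℕ → ℝ) : ℕ → ℝ
  | 0 => 0
  | 1 => 0
  | n + 2 => parityDecay ζ n + ζ (n + 1)

theorem parityDecay_add (ζ : ℕ → ℝ) (n : ℕ) :
    parityDecay ζ n + parityDecay ζ (n + 1) = ∑ i ∈ Finset.Icc 1 n, ζ i := by
  induction n with
  | zero => simp [parityDecay]
  | succ n ih =>
    rw [Finset.sum_Icc_succ_top (by omega), ← ih, parityDecay]; ring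

theorem norm_Lv_succ_le (hC : 1 ≤ C) (hp : ∀ n, EllKernel C (p n))
    (hν : ∀ n, IsProbabilityMeasure (ν n)) {e : ℕ → E → ℂ} (he : ∀ n x, ‖e n x‖ ≤ 1) {n : ℕ}
    {β : ℝ} (h : ∀ x, ‖Lv p ν e n x‖ ≤ β * Lv p ν (fun _ _ => (1 : ℝ)) n x) (y : E) :
    ‖Lv p ν e (n + 1) y‖ ≤ β * Lv p ν (fun _ _ => (1 : ℝ)) (n + 1) y := by
  have i1 := hν n
  rw [Lv, Lv, ← integral_const_mul]
  have hb := Lv_bddMeas hC hp hν (e := fun _ _ => (1 : ℝ)) (fun _ => bddMeas_const 1) n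
  refine norm_integral_le_of_norm_le ?_ (ae_of_all _ fun x => ?_)
  · exact (((bddMeas_const 1).mul hb).smul hC (hp n) y |>.integrable (ν n)).const_mul β
  · rw [norm_smul, norm_mul, Real.norm_of_nonneg ((hp n).pos hC x y).le, smul_eq_mul]
    have := (hp n).pos hC x y
    calc p n x y * (‖e n x‖ * ‖Lv p ν e n x‖)
        ≤ p n x y * (1 * (β * Lv p ν (fun _ _ => (1 : ℝ)) n x)) := by
          gcongr
          · exact he n x
          · exact h x
      _ = _ := by ring

theorem norm_Lv_le_parityDecay (hC : 1 ≤ C) (hp : ∀ n, EllKernel C (p n))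
    (hν : ∀ n, IsProbabilityMeasure (ν n)) {e : ℕ → E → ℂ} (hem : ∀ n, Measurable (e n))
    (he : ∀ n x, ‖e n x‖ ≤ 1) {ζ : ℕ → ℝ} (hζ0 : ∀ n, 0 ≤ ζ n)
    (hζ : ∀ n, ∀ w : ℂ, ‖w‖ = 1 → ζ n ≤ ∫ x, (1 - (w * e n x).re) ∂(ν n)) (n : ℕ) (y : E) :
    ‖Lv p ν e n y‖ ≤
      Real.exp (-((C ^ 4)⁻¹ * parityDecay ζ n)) * Lv p ν (fun _ _ => (1 : ℝ)) n y := by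
  have hC0 : 0 < C := by linarith
  induction n using Nat.twoStepInduction generalizing y with
  | zero => simp [Lv, parityDecay]
  | one =>
    refine norm_Lv_succ_le hC hp hν he (fun x => ?_) y
    simp [Lv, parityDecay]
  | more n ih _ =>
    have i1 := hν n
    have i2 := hν (n + 1)
    have hebd : ∀ n, BddMeas (e n) := fun n => ⟨hem n, 1, he n⟩
    have hL := Lv_bddMeas hC hp hν hebd n
    have hl := Lv_bddMeas hC hp hν (e := fun _ _ => (1 : ℝ)) (fun _ => bddMeas_const 1) n
    have hpy : BddMeas (fun u => p (n + 1) u y) :=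
      ⟨(hp (n + 1)).measurable_left y, C, fun u => (hp (n + 1)).norm_le hC u y⟩
    have e1 : Lv p ν e (n + 2) y = ∫ x, (∫ u, p n x u • ((p (n + 1) u y : ℂ) * e (n + 1) u)
        ∂(ν (n + 1))) * (e n x * Lv p ν e n x) ∂(ν n) := by
      rw [← integral_mul_transfer_comm hC (hp n) (hpy.ofReal.mul (hebd (n + 1)))
        ((hebd n).mul hL), Lv]
      congr 1; ext u
      rw [Lv, Complex.real_smul]; ring
    have e2 : Lv p ν (fun _ _ => (1 : ℝ)) (n + 2) y = ∫ x, (∫ u, p n x u • p (n + 1) u y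
        ∂(ν (n + 1))) * Lv p ν (fun _ _ => (1 : ℝ)) n x ∂(ν n) := by
      rw [← integral_mul_transfer_comm hC (hp n) hpy hl, Lv]
      congr 1; ext u
      rw [Lv]; simp
    rw [e1, e2, ← integral_const_mul]
    refine norm_integral_le_of_norm_le ?_ (ae_of_all _ fun x => ?_)
    · exact ((BddMeas.mul (BddMeas.transfer hC (hp n).flip hpy (ν (n + 1))) hl).integrable
        (ν n)).const_mul _
    · have hh : BddMeas (fun u => p n x u * p (n + 1) u y) := by
        refine BddMeas.mul ⟨(hp n).flip.measurable_left x, C, fun u => (hp n).norm_le hC x u⟩ hpy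
      have hin := norm_integral_mul_le_of_rotation (a := C⁻¹ * C⁻¹) (b := C * C) (by positivity)
        (by positivity) (ν (n + 1)) hh
        (fun u => mul_le_mul ((hp n).2 x u).1 ((hp (n + 1)).2 u y).1 (by positivity)
          ((hp n).pos hC x u).le)
        (fun u => mul_le_mul ((hp n).2 x u).2 ((hp (n + 1)).2 u y).2
          ((hp (n + 1)).pos hC u y).le hC0.le)
        (hem (n + 1)) (he (n + 1)) (hζ0 (n + 1)) (hζ (n + 1))
      have hin' : ‖∫ u, p n x u • ((p (n + 1) u y : ℂ) * e (n + 1) u) ∂(ν (n + 1))‖ ≤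
          Real.exp (-((C ^ 4)⁻¹ * ζ (n + 1))) * ∫ u, p n x u • p (n + 1) u y ∂(ν (n + 1)) := by
        convert hin using 2
        · congr 1; ext u; rw [Complex.real_smul]; push_cast; ring
        · congr 2; field_simp
        · rfl
      have hx := ih x
      rw [norm_mul, norm_mul]
      have h0 : 0 ≤ ∫ u, p n x u • p (n + 1) u y ∂(ν (n + 1)) :=
        integral_nonneg fun u => mul_nonneg ((hp n).pos hC x u).le ((hp (n + 1)).pos hC u y).le
      calc _ ≤ (Real.exp (-((C ^ 4)⁻¹ * ζ (n + 1))) * ∫ u, p n x u • p (n + 1) u y ∂(ν (n + 1))) *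
            (1 * (Real.exp (-((C ^ 4)⁻¹ * parityDecay ζ n)) *
              Lv p ν (fun _ _ => (1 : ℝ)) n x)) := by
            gcongr
            exact he n x
        _ = _ := by
            rw [parityDecay, mul_add, neg_add, Real.exp_add]; ring

theorem norm_Lv_le_exp (hC : 1 ≤ C) (hp : ∀ n, EllKernel C (p n))
    (hν : ∀ n, IsProbabilityMeasure (ν n)) {e : ℕ → E → ℂ} (hem : ∀ n, Measurable (e n))
    (he : ∀ n x, ‖e n x‖ ≤ 1) {ζ : ℕ → ℝ} (hζ0 : ∀ n, 0 ≤ ζ n)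
    (hζ : ∀ n, ∀ w : ℂ, ‖w‖ = 1 → ζ n ≤ ∫ x, (1 - (w * e n x).re) ∂(ν n)) (N : ℕ) (y : E) :
    ‖Lv p ν e (N + 1) y‖ ≤ Real.exp (-((C ^ 4)⁻¹ / 2 * ∑ i ∈ Finset.Icc 1 N, ζ i)) *
      Lv p ν (fun _ _ => (1 : ℝ)) (N + 1) y := by
  have hC0 : 0 < C := by linarith
  have hc : 0 < (C ^ 4)⁻¹ := by positivity
  have h1 := norm_Lv_le_parityDecay hC hp hν hem he hζ0 hζ (N + 1) y
  have h2 := norm_Lv_succ_le hC hp hν he (norm_Lv_le_parityDecay hC hp hν hem he hζ0 hζ N) y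
  have hpos := (Lv_one_pos hC hp hν (N + 1) y).le
  rw [← parityDecay_add]
  rcases le_total (parityDecay ζ N) (parityDecay ζ (N + 1)) with h | h
  · refine h1.trans (mul_le_mul_of_nonneg_right (Real.exp_le_exp.2 ?_) hpos)
    nlinarith
  · refine h2.trans (mul_le_mul_of_nonneg_right (Real.exp_le_exp.2 ?_) hpos)
    nlinarith

end Decay

section Arithmetic

theorem one_sub_re_mul_conj_le {a b w : ℂ} (ha : ‖a‖ = 1) (hb : ‖b‖ = 1) (hw : ‖w‖ = 1) :
    1 - (a * (starRingEnd ℂ) b).re ≤ 2 * (1 - (w * a).re) + 2 * (1 - (w * b).re) := by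
  have hsq : ∀ z : ℂ, ‖z‖ = 1 → z.re ^ 2 + z.im ^ 2 = 1 := fun z hz => by
    have := Complex.normSq_eq_norm_sq z
    rw [hz, Complex.normSq_apply] at this
    nlinarith
  have h1 := hsq a ha
  have h2 := hsq b hb
  have h3 := hsq w hw
  simp only [Complex.mul_re, Complex.conj_re, Complex.conj_im]
  nlinarith [sq_nonneg (a.re + b.re - 2 * w.re), sq_nonneg (a.im + b.im + 2 * w.im)]

theorem le_integral_one_sub_re {E ι : Type*} [MeasurableSpace E] (ν : Measure E)
    [IsProbabilityMeasure ν] {φ : E → ι} {e : E → ℂ} (hem : Measurable e) (he : ∀ x, ‖e x‖ = 1)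
    {c u : ℝ} (hc : 0 ≤ c)
    (hsep : ∀ x x', φ x ≠ φ x' → c ≤ 1 - (e x * (starRingEnd ℂ) (e x')).re)
    (hu1 : u ≤ 1) (hu : ∀ j, u ≤ ν.real {x | φ x ≠ j}) {w : ℂ} (hw : ‖w‖ = 1) :
    c / 4 * u ≤ ∫ x, (1 - (w * e x).re) ∂ν := by
  set B : Set E := {x | c / 4 ≤ 1 - (w * e x).re} with hB
  have hgm : Measurable fun x => 1 - (w * e x).re :=
    measurable_const.sub (Complex.measurable_re.comp (measurable_const.mul hem))
  have hBm : MeasurableSet B := measurableSet_le measurable_const hgm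
  have hnn : ∀ x, 0 ≤ 1 - (w * e x).re := fun x => by
    have := Complex.re_le_norm (w * e x)
    rw [norm_mul, hw, one_mul, he x] at this
    linarith
  have hle2 : ∀ x, ‖1 - (w * e x).re‖ ≤ 2 := fun x => by
    rw [Real.norm_of_nonneg (hnn x)]
    have := (abs_le.1 (Complex.abs_re_le_norm (w * e x))).1
    rw [norm_mul, hw, one_mul, he x] at this
    linarith
  have huB : u ≤ ν.real B := by
    by_cases hne : ∃ x0, x0 ∉ B
    · obtain ⟨x0, hx0⟩ := hne
      refine (hu (φ x0)).trans (measureReal_mono fun x hx => ?_)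
      by_contra hxB
      have h1 := hsep x x0 hx
      have h2 := one_sub_re_mul_conj_le (he x) (he x0) hw
      simp only [hB, Set.mem_ofPred_eq, not_le] at hx0 hxB
      linarith
    · push Not at hne
      rw [Set.eq_univ_of_forall hne]; simpa using hu1
  calc c / 4 * u ≤ c / 4 * ν.real B := by gcongr
    _ = ∫ x, B.indicator (fun _ => c / 4) x ∂ν := by
        rw [integral_indicator hBm]; simp [mul_comm]
    _ ≤ _ := by
        refine integral_mono ((integrable_const _).indicator hBm)
          (Integrable.of_bound hgm.aestronglyMeasurable 2 (ae_of_all _ hle2)) fun x => ?_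
        by_cases hx : x ∈ B
        · rw [Set.indicator_of_mem hx]; exact hx
        · rw [Set.indicator_of_notMem hx]; exact hnn x

theorem exp_I_mul_conj_re (t : ℝ) (a b : ℤ) :
    (Complex.exp (Complex.I * t * a) * (starRingEnd ℂ) (Complex.exp (Complex.I * t * b))).re =
      Real.cos (t * ((a - b : ℤ) : ℝ)) := by
  rw [← Complex.exp_conj, ← Complex.exp_add]
  have : Complex.I * t * a + (starRingEnd ℂ) (Complex.I * t * b) =
      ((t * ((a - b : ℤ) : ℝ) : ℝ) : ℂ) * Complex.I := by
    simp; ring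
  rw [this, Complex.exp_ofReal_mul_I_re]

theorem norm_exp_I_mul (t : ℝ) (a : ℤ) : ‖Complex.exp (Complex.I * t * a)‖ = 1 := by
  have : Complex.I * t * a = ((t * a : ℝ) : ℂ) * Complex.I := by push_cast; ring
  rw [this, Complex.norm_exp_ofReal_mul_I]

theorem rotation_bound_small {E : Type*} [MeasurableSpace E] (ν : Measure E)
    [IsProbabilityMeasure ν] {g : E → ℤ} (hg : Measurable g) {K : ℕ} (hK : 1 ≤ K)
    (hgK : ∀ x, |g x| ≤ (K : ℤ)) {t : ℝ} (ht : |t| ≤ Real.pi / (2 * K)) {u : ℝ} (hu1 : u ≤ 1)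
    (hu : ∀ a, u ≤ ν.real {x | g x ≠ a}) {w : ℂ} (hw : ‖w‖ = 1) :
    t ^ 2 / (2 * Real.pi ^ 2) * u ≤ ∫ x, (1 - (w * Complex.exp (Complex.I * t * g x)).re) ∂ν := by
  have hm : Measurable fun x => Complex.exp (Complex.I * t * g x) :=
    (measurable_of_countable fun k : ℤ => Complex.exp (Complex.I * t * k)).comp hg
  have := le_integral_one_sub_re ν (φ := g) hm (fun x => norm_exp_I_mul t (g x))
    (c := 2 / Real.pi ^ 2 * t ^ 2) (by positivity) ?_ hu1 hu hw
  · convert this using 1; field_simp; ring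
  intro x x' hx
  rw [exp_I_mul_conj_re]
  set d := g x - g x' with hd
  have hd1 : 1 ≤ |d| := Int.one_le_abs (sub_ne_zero.2 hx)
  have hd2 : |d| ≤ 2 * K := by
    have h1 := abs_le.1 (hgK x)
    have h2 := abs_le.1 (hgK x')
    rw [abs_le]; constructor <;> linarith
  have hd1' : (1 : ℝ) ≤ |(d : ℝ)| := by exact_mod_cast hd1
  have hd2' : |(d : ℝ)| ≤ 2 * K := by exact_mod_cast hd2
  have hK0 : (0 : ℝ) < K := by exact_mod_cast hK
  have hpi := Real.pi_pos
  have habs : |t * d| ≤ Real.pi := by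
    rw [abs_mul]
    calc |t| * |(d : ℝ)| ≤ Real.pi / (2 * K) * (2 * K) := by gcongr
      _ = Real.pi := by field_simp
  have hcos := Real.cos_le_one_sub_mul_cos_sq habs
  have : t ^ 2 ≤ (t * d) ^ 2 := by
    rw [mul_pow, ← sq_abs (d : ℝ)]
    exact le_mul_of_one_le_right (sq_nonneg t) (one_le_pow₀ hd1')
  have h2 : 2 / Real.pi ^ 2 * t ^ 2 ≤ 2 / Real.pi ^ 2 * (t * d) ^ 2 := by gcongr
  linarith

theorem exists_modulus (K : ℕ) (hK : 1 ≤ K) {t : ℝ} (ht0 : t ≠ 0) (ht : |t| ≤ Real.pi) :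
    ∃ m ∈ Set.Icc 2 (2 * K), ∀ d : ℤ, |d| ≤ 2 * K → ¬ (m : ℤ) ∣ d → Real.cos (t * d) ≠ 1 := by
  have hpi := Real.pi_pos
  set H : AddSubgroup ℤ := (AddSubgroup.zmultiples (2 * Real.pi)).comap
    ((AddMonoidHom.mulLeft t).comp (Int.castAddHom ℝ)) with hH
  have hmem : ∀ d : ℤ, Real.cos (t * d) = 1 → d ∈ H := fun d hd => by
    obtain ⟨k, hk⟩ := (Real.cos_eq_one_iff _).1 hd
    rw [hH, AddSubgroup.mem_comap, AddSubgroup.mem_zmultiples_iff]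
    exact ⟨k, by simpa using hk⟩
  obtain ⟨a, ha⟩ := Int.subgroup_cyclic H
  have hdvd : ∀ d : ℤ, d ∈ H → (a.natAbs : ℤ) ∣ d := fun d hd => by
    rw [ha, ← AddSubgroup.zmultiples_eq_closure, Int.mem_zmultiples_iff] at hd
    exact Int.natAbs_dvd.2 hd
  have haH : (a.natAbs : ℤ) ∈ H := by
    rw [ha, ← AddSubgroup.zmultiples_eq_closure, Int.mem_zmultiples_iff]
    exact Int.dvd_natAbs.2 dvd_rfl
  have ha1 : a.natAbs ≠ 1 := by
    intro h1
    rw [h1, hH, AddSubgroup.mem_comap, AddSubgroup.mem_zmultiples_iff] at haH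
    obtain ⟨k, hk⟩ := haH
    simp at hk
    have hk0 : k ≠ 0 := by rintro rfl; simp at hk; exact ht0 hk.symm
    have : (1 : ℝ) ≤ |(k : ℝ)| := by exact_mod_cast Int.one_le_abs hk0
    rw [← hk, abs_mul, abs_of_pos (by linarith : 0 < 2 * Real.pi)] at ht
    nlinarith
  by_cases hr : a.natAbs ∈ Set.Icc 2 (2 * K)
  · exact ⟨a.natAbs, hr, fun d _ hnd hcos => hnd (hdvd d (hmem d hcos))⟩
  · refine ⟨2, ⟨le_rfl, by omega⟩, fun d hd hnd hcos => hnd ?_⟩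
    have h := hdvd d (hmem d hcos)
    have : d = 0 := by
      rw [Set.mem_Icc] at hr
      by_cases h0 : a.natAbs = 0
      · rw [h0] at h; simpa using h
      · refine Int.eq_zero_of_abs_lt_dvd h ?_
        have : 2 * K < a.natAbs := by omega
        have : (2 * K : ℤ) < a.natAbs := by exact_mod_cast this
        linarith
    simp [this]

theorem exists_uniform_modulus (K : ℕ) (hK : 1 ≤ K) {η : ℝ} (hη : 0 < η) :
    ∃ c > 0, ∀ t : ℝ, η ≤ |t| → |t| ≤ Real.pi → ∃ m ∈ Set.Icc 2 (2 * K),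
      ∀ d : ℤ, |d| ≤ 2 * K → ¬ (m : ℤ) ∣ d → c ≤ 1 - Real.cos (t * d) := by
  have hcomp : IsCompact {t : ℝ | η ≤ |t| ∧ |t| ≤ Real.pi} := by
    refine Metric.isCompact_of_isClosed_isBounded ?_ ?_
    · exact (isClosed_le continuous_const continuous_abs).inter
        (isClosed_le continuous_abs continuous_const)
    · refine Metric.isBounded_closedBall (x := (0 : ℝ)) (r := Real.pi) |>.subset fun t ht => ?_
      simpa using ht.2
  have := hcomp.induction_on (p := fun s => ∃ c > 0, ∀ t ∈ s, ∃ m ∈ Set.Icc 2 (2 * K),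
      ∀ d : ℤ, |d| ≤ 2 * K → ¬ (m : ℤ) ∣ d → c ≤ 1 - Real.cos (t * d))
    ⟨1, one_pos, fun t ht => ht.elim⟩
    (fun s s' hs ⟨c, hc, h⟩ => ⟨c, hc, fun t ht => h t (hs ht)⟩)
    (fun s s' ⟨c, hc, h⟩ ⟨c', hc', h'⟩ => ⟨min c c', lt_min hc hc', fun t ht => by
      rcases ht with ht | ht
      · obtain ⟨m, hm, hd⟩ := h t ht
        exact ⟨m, hm, fun d h1 h2 => (min_le_left _ _).trans (hd d h1 h2)⟩
      · obtain ⟨m, hm, hd⟩ := h' t ht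
        exact ⟨m, hm, fun d h1 h2 => (min_le_right _ _).trans (hd d h1 h2)⟩⟩)
    (fun t ht => by
      have ht0 : t ≠ 0 := by
        rintro rfl; have := ht.1; simp at this; linarith
      obtain ⟨m, hm, hd⟩ := exists_modulus K hK ht0 ht.2
      obtain ⟨c, hc, hcd⟩ : ∃ c > 0, ∀ d ∈ (Finset.Icc (-(2 * K : ℤ)) (2 * K)).filter
          (fun d => ¬ (m : ℤ) ∣ d), c < 1 - Real.cos (t * d) := by
        set F := (Finset.Icc (-(2 * K : ℤ)) (2 * K)).filter (fun d => ¬ (m : ℤ) ∣ d)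
        have hF : ∀ d ∈ F, 0 < 1 - Real.cos (t * d) := fun d hd' => by
          rw [Finset.mem_filter, Finset.mem_Icc, ← abs_le] at hd'
          have := lt_of_le_of_ne (Real.cos_le_one (t * d)) (hd d hd'.1 hd'.2)
          linarith
        rcases F.eq_empty_or_nonempty with h | h
        · exact ⟨1, one_pos, by simp [h]⟩
        · obtain ⟨d0, hd0, hmin⟩ := F.exists_min_image (fun d : ℤ => 1 - Real.cos (t * d)) h
          refine ⟨(1 - Real.cos (t * d0)) / 2, half_pos (hF d0 hd0), fun d hd' => ?_⟩
          have := hmin d hd'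
          have := hF d0 hd0
          linarith
      have hev : ∀ᶠ s in 𝓝 t, ∀ d ∈ (Finset.Icc (-(2 * K : ℤ)) (2 * K)).filter
          (fun d => ¬ (m : ℤ) ∣ d), c < 1 - Real.cos (s * d) := by
        rw [Filter.eventually_all_finset]
        intro d hd'
        have hcont : Continuous fun s : ℝ => 1 - Real.cos (s * d) := by fun_prop
        exact hcont.continuousAt.eventually (lt_mem_nhds (hcd d hd'))
      refine ⟨_, mem_nhdsWithin_of_mem_nhds hev, c, hc, fun s hs => ⟨m, hm, fun d h1 h2 => ?_⟩⟩
      refine (hs d ?_).le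
      rw [Finset.mem_filter, Finset.mem_Icc, ← abs_le]
      exact ⟨h1, h2⟩)
  obtain ⟨c, hc, h⟩ := this
  exact ⟨c, hc, fun t h1 h2 => h t ⟨h1, h2⟩⟩

theorem secondLargest_nonneg {ι : Type*} [Nonempty ι] {p : ι → ℝ} (hp : ∀ i, 0 ≤ p i) :
    0 ≤ secondLargest p :=
  le_ciInf fun _ => Real.sSup_nonneg (by rintro _ ⟨i, -, rfl⟩; exact hp i)

theorem secondLargest_le {ι : Type*} {p : ι → ℝ} (hp : ∀ i, 0 ≤ p i) (j : ι) {b : ℝ}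
    (hb : 0 ≤ b) (h : ∀ i ≠ j, p i ≤ b) : secondLargest p ≤ b := by
  refine (ciInf_le ⟨0, ?_⟩ j).trans (Real.sSup_le ?_ hb)
  · rintro _ ⟨j, rfl⟩
    exact Real.sSup_nonneg (by rintro _ ⟨i, -, rfl⟩; exact hp i)
  · rintro _ ⟨i, hi, rfl⟩; exact h i hi

/-- Second largest probability of a residue class modulo `m` for the law of `g` under `ν`. -/
def resq {E : Type*} [MeasurableSpace E] (ν : Measure E) (g : E → ℤ) (m : ℕ) : ℝ :=
  secondLargest fun j : ZMod m => ν.real {x | (g x : ZMod m) = j}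

theorem resq_nonneg {E : Type*} [MeasurableSpace E] (ν : Measure E) (g : E → ℤ) (m : ℕ) :
    0 ≤ resq ν g m := secondLargest_nonneg fun _ => measureReal_nonneg

theorem resq_le {E : Type*} [MeasurableSpace E] (ν : Measure E) [IsProbabilityMeasure ν]
    (g : E → ℤ) (m : ℕ) (j : ZMod m) : resq ν g m ≤ ν.real {x | (g x : ZMod m) ≠ j} :=
  secondLargest_le (fun _ => measureReal_nonneg) j measureReal_nonneg fun i hi =>
    measureReal_mono fun x hx => by rw [Set.mem_ofPred_eq] at hx ⊢; rwa [hx]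

theorem resq_le_one {E : Type*} [MeasurableSpace E] (ν : Measure E) [IsProbabilityMeasure ν]
    (g : E → ℤ) (m : ℕ) : resq ν g m ≤ 1 := (resq_le ν g m 0).trans measureReal_le_one

theorem rotation_bound_large {E : Type*} [MeasurableSpace E] (ν : Measure E)
    [IsProbabilityMeasure ν] {g : E → ℤ} (hg : Measurable g) {K m : ℕ}
    (hgK : ∀ x, |g x| ≤ (K : ℤ)) {t c : ℝ} (hc : 0 ≤ c)
    (hd : ∀ d : ℤ, |d| ≤ 2 * K → ¬ (m : ℤ) ∣ d → c ≤ 1 - Real.cos (t * d))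
    {w : ℂ} (hw : ‖w‖ = 1) :
    c / 4 * resq ν g m ≤ ∫ x, (1 - (w * Complex.exp (Complex.I * t * g x)).re) ∂ν := by
  have hm : Measurable fun x => Complex.exp (Complex.I * t * g x) :=
    (measurable_of_countable fun k : ℤ => Complex.exp (Complex.I * t * k)).comp hg
  refine le_integral_one_sub_re ν (φ := fun x => (g x : ZMod m)) hm
    (fun x => norm_exp_I_mul t (g x)) hc ?_ (resq_le_one ν g m) (resq_le ν g m) hw
  intro x x' hx
  rw [exp_I_mul_conj_re]
  refine hd _ ?_ fun h => hx ?_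
  · have h1 := abs_le.1 (hgK x)
    have h2 := abs_le.1 (hgK x')
    rw [abs_le]; constructor <;> linarith
  · have := (ZMod.intCast_eq_intCast_iff_dvd_sub (g x') (g x) m).2 h
    exact this.symm

/-- A bounded integer-valued function has a most likely value. -/
theorem exists_mode {E : Type*} [MeasurableSpace E] (ν : Measure E) [IsProbabilityMeasure ν]
    {g : E → ℤ} {K : ℕ} (hgK : ∀ x, |g x| ≤ (K : ℤ)) :
    ∃ b : ℤ, |b| ≤ K ∧ ∀ a, ν.real {x | g x ≠ b} ≤ ν.real {x | g x ≠ a} := by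
  obtain ⟨b, hb, hmin⟩ := (Finset.Icc (-(K : ℤ)) K).exists_min_image
    (fun a => ν.real {x | g x ≠ a}) ⟨0, by simp⟩
  refine ⟨b, abs_le.2 (Finset.mem_Icc.1 hb), fun a => ?_⟩
  by_cases ha : a ∈ Finset.Icc (-(K : ℤ)) K
  · exact hmin a ha
  · have : {x | g x ≠ a} = Set.univ := by
      ext x
      simp only [Set.mem_ofPred_eq, Set.mem_univ, iff_true]
      rintro rfl
      exact ha (Finset.mem_Icc.2 (abs_le.1 (hgK x)))
    rw [this]
    exact measureReal_mono (Set.subset_univ _)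

end Arithmetic

section Cumulants

variable {A : Finset ℤ} {P : ℤ → ℝ}

theorem hasDerivAt_sum_exp (A : Finset ℤ) (Q : ℤ → ℂ) (z : ℂ) :
    HasDerivAt (fun z : ℂ => ∑ k ∈ A, Q k * Complex.exp (z * k))
      (∑ k ∈ A, Q k * k * Complex.exp (z * k)) z := by
  refine HasDerivAt.fun_sum fun k _ => ?_
  have h : HasDerivAt (fun z : ℂ => z * (k : ℂ)) (k : ℂ) z := by
    simpa using (hasDerivAt_id z).mul_const (k : ℂ)
  refine (h.cexp.const_mul (Q k)).congr_deriv ?_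
  ring

/-- The first two cumulants of a finitely supported law, read off the logarithm of its
generating function. -/
theorem log_generating_derivs (hP : ∑ k ∈ A, P k = 1) {G : ℂ → ℂ}
    (hG : AnalyticAt ℂ G 0) (hG0 : G 0 = 0)
    (h : ∀ᶠ z in 𝓝 (0 : ℂ), ∑ k ∈ A, (P k : ℂ) * Complex.exp (z * k) = Complex.exp (G z)) :
    deriv G 0 = ((∑ k ∈ A, P k * k : ℝ) : ℂ) ∧
    iteratedDeriv 2 G 0 =
      ((∑ k ∈ A, P k * ((k : ℝ) - ∑ l ∈ A, P l * l) ^ 2 : ℝ) : ℂ) := by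
  have hGd : ∀ᶠ z in 𝓝 (0 : ℂ), DifferentiableAt ℂ G z :=
    hG.eventually_analyticAt.mono fun z hz => hz.differentiableAt
  have h1 : ∀ᶠ z in 𝓝 (0 : ℂ), ∑ k ∈ A, (P k : ℂ) * k * Complex.exp (z * k) =
      Complex.exp (G z) * deriv G z := by
    filter_upwards [h.eventually_nhds, hGd] with z hz hd
    have e1 := (hasDerivAt_sum_exp A (fun k => (P k : ℂ)) z).deriv
    have e2 := Filter.EventuallyEq.deriv_eq hz
    rw [e1] at e2
    rw [e2]
    exact hd.hasDerivAt.cexp.deriv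
  have hG1 : deriv G 0 = ((∑ k ∈ A, P k * k : ℝ) : ℂ) := by
    have := h1.self_of_nhds
    simp [hG0] at this
    rw [← this]; push_cast; rfl
  refine ⟨hG1, ?_⟩
  have h2 : ∑ k ∈ A, (P k : ℂ) * k * k = deriv G 0 * deriv G 0 + iteratedDeriv 2 G 0 := by
    have e1 := (hasDerivAt_sum_exp A (fun k => (P k : ℂ) * k) 0).deriv
    have e2 := Filter.EventuallyEq.deriv_eq h1
    rw [e1] at e2
    have hd2 : HasDerivAt (deriv G) (iteratedDeriv 2 G 0) 0 := by
      rw [iteratedDeriv_succ, iteratedDeriv_one]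
      exact hG.deriv.differentiableAt.hasDerivAt
    have e3 := (hG.differentiableAt.hasDerivAt.cexp.mul hd2).deriv
    have e4 : deriv (fun z => Complex.exp (G z) * deriv G z) 0 =
      Complex.exp (G 0) * deriv G 0 * deriv G 0 + Complex.exp (G 0) * iteratedDeriv 2 G 0 := e3
    rw [e4] at e2
    simpa [hG0] using e2
  have h3 : iteratedDeriv 2 G 0 = ∑ k ∈ A, (P k : ℂ) * k * k - deriv G 0 * deriv G 0 := by
    rw [h2]; ring
  rw [h3, hG1]
  set a := ∑ k ∈ A, P k * (k : ℝ) with ha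
  have : ∑ k ∈ A, P k * ((k : ℝ) - a) ^ 2 = ∑ k ∈ A, P k * k * k - a * a := by
    have e : ∀ k : ℤ, P k * ((k : ℝ) - a) ^ 2 = P k * k * k - 2 * a * (P k * k) + a ^ 2 * P k :=
      fun k => by ring
    simp_rw [e]
    rw [Finset.sum_add_distrib, Finset.sum_sub_distrib, ← Finset.mul_sum, ← Finset.mul_sum, hP,
      ← ha]
    ring
  rw [this]; push_cast; rfl

theorem one_sub_le_norm_char (hP0 : ∀ k, 0 ≤ P k) (hP : ∑ k ∈ A, P k = 1) (t a : ℝ) :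
    1 - t ^ 2 / 2 * ∑ k ∈ A, P k * ((k : ℝ) - a) ^ 2 ≤
      ‖∑ k ∈ A, (P k : ℂ) * Complex.exp (Complex.I * t * k)‖ := by
  have h1 : ‖∑ k ∈ A, (P k : ℂ) * Complex.exp (Complex.I * t * k)‖ =
      ‖∑ k ∈ A, (P k : ℂ) * Complex.exp (((t * (k - a) : ℝ) : ℂ) * Complex.I)‖ := by
    have : ∑ k ∈ A, (P k : ℂ) * Complex.exp (((t * (k - a) : ℝ) : ℂ) * Complex.I) =
        Complex.exp (((-(t * a) : ℝ) : ℂ) * Complex.I) *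
          ∑ k ∈ A, (P k : ℂ) * Complex.exp (Complex.I * t * k) := by
      rw [Finset.mul_sum]
      refine Finset.sum_congr rfl fun k _ => ?_
      rw [mul_left_comm, ← Complex.exp_add]
      congr 2; push_cast; ring
    rw [this, norm_mul, Complex.norm_exp_ofReal_mul_I, one_mul]
  rw [h1]
  refine le_trans ?_ (Complex.re_le_norm _)
  rw [Complex.re_sum]
  calc 1 - t ^ 2 / 2 * ∑ k ∈ A, P k * ((k : ℝ) - a) ^ 2
      = ∑ k ∈ A, P k * (1 - (t * (k - a)) ^ 2 / 2) := by
        simp_rw [mul_sub, mul_one, Finset.sum_sub_distrib, hP, Finset.mul_sum]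
        congr 1
        exact Finset.sum_congr rfl fun k _ => by ring
    _ ≤ _ := by
        refine Finset.sum_le_sum fun k _ => ?_
        rw [Complex.re_ofReal_mul, Complex.exp_ofReal_mul_I_re]
        exact mul_le_mul_of_nonneg_left (Real.one_sub_sq_div_two_le_cos) (hP0 k)

end Cumulants

section GibbsLaw

variable {E : Type*} [MeasurableSpace E] {C : ℝ} {p : ℕ → E → E → ℝ} {ν : ℕ → Measure E}
  {f : ℕ → E → ℤ}

theorem Vr_nonneg (hC : 1 ≤ C) (hp : ∀ n, EllKernel C (p n)) (n : ℕ) (y : E) (a : ℤ) :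
    0 ≤ Vr p ν f n y a := by
  induction n generalizing y a with
  | zero => rw [Vr]; split_ifs <;> simp
  | succ n ih =>
    rw [Vr]
    exact integral_nonneg fun x => mul_nonneg ((hp n).pos hC x y).le (ih x _)

theorem Lv_mul_const (c : ℕ → ℂ) (e : ℕ → E → ℂ) (n : ℕ) (y : E) :
    Lv p ν (fun i x => c i * e i x) n y = (∏ i ∈ range n, c i) * Lv p ν e n y := by
  induction n generalizing y with
  | zero => simp [Lv]
  | succ n ih =>
    rw [Lv, Lv, Finset.prod_range_succ, ← integral_const_mul]
    congr 1; ext x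
    rw [ih, Complex.real_smul, Complex.real_smul]; ring

theorem Lv_expSite_shift (b : ℕ → ℤ) (z : ℂ) (n : ℕ) (y : E) :
    Lv p ν (expSite f z) n y = Complex.exp (z * ((∑ i ∈ range n, b i : ℤ) : ℂ)) *
      Lv p ν (expSite (fun i x => f i x - b i) z) n y := by
  have : expSite f z = fun i x => Complex.exp (z * (b i : ℂ)) *
      expSite (fun i x => f i x - b i) z i x := by
    ext i x
    simp only [expSite]
    rw [← Complex.exp_add]; congr 1; push_cast; ring
  rw [this, Lv_mul_const]
  congr 1
  rw [← Complex.exp_sum]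
  push_cast
  rw [Finset.mul_sum]

/-- Normalised law of `∑ f i (x i)` under the Gibbs measure with sites `0, …, N`. -/
def gibbsLaw (p : ℕ → E → E → ℝ) (ν : ℕ → Measure E) (f : ℕ → E → ℤ) (N : ℕ) (y : E) (k : ℤ) :
    ℝ := Vr p ν f (N + 1) y k / Lv p ν (fun _ _ => (1 : ℝ)) (N + 1) y

/-- A finite set of integers carrying `gibbsLaw` when `|f| ≤ K`. -/
def gibbsSupp (K N : ℕ) : Finset ℤ := Finset.Icc (-((N + 1 : ℕ) * K : ℤ)) ((N + 1 : ℕ) * K)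

/-- The mean of `gibbsLaw`. -/
def gibbsMean (p : ℕ → E → E → ℝ) (ν : ℕ → Measure E) (f : ℕ → E → ℤ) (K N : ℕ) (y : E) : ℝ :=
  ∑ k ∈ gibbsSupp K N, gibbsLaw p ν f N y k * k

/-- The variance of `gibbsLaw`. -/
def gibbsVar (p : ℕ → E → E → ℝ) (ν : ℕ → Measure E) (f : ℕ → E → ℤ) (K N : ℕ) (y : E) : ℝ :=
  ∑ k ∈ gibbsSupp K N, gibbsLaw p ν f N y k * ((k : ℝ) - gibbsMean p ν f K N y) ^ 2

variable {K : ℕ}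

theorem gibbsLaw_eq_zero (hfK : ∀ n x, |f n x| ≤ (K : ℤ)) (N : ℕ) (y : E) :
    ∀ k ∉ gibbsSupp K N, gibbsLaw p ν f N y k = 0 := fun k hk => by
  rw [gibbsLaw, Vr_eq_zero hfK (N + 1) y k hk, zero_div]

theorem gibbsLaw_nonneg (hC : 1 ≤ C) (hp : ∀ n, EllKernel C (p n))
    (hν : ∀ n, IsProbabilityMeasure (ν n)) (N : ℕ) (y : E) (k : ℤ) :
    0 ≤ gibbsLaw p ν f N y k :=
  div_nonneg (Vr_nonneg hC hp _ _ _) (Lv_one_pos hC hp hν _ _).le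

theorem gibbsLaw_generating (hC : 1 ≤ C) (hp : ∀ n, EllKernel C (p n))
    (hν : ∀ n, IsProbabilityMeasure (ν n)) (hf : ∀ n, Measurable (f n))
    (hfK : ∀ n x, |f n x| ≤ (K : ℤ)) (N : ℕ) (y : E) (z : ℂ) :
    ∑ k ∈ gibbsSupp K N, (gibbsLaw p ν f N y k : ℂ) * Complex.exp (z * k) =
      Lv p ν (expSite f z) (N + 1) y / ((Lv p ν (fun _ _ => (1 : ℝ)) (N + 1) y : ℝ) : ℂ) := by
  rw [Lv_expSite_eq_sum hC hp hν hf hfK, Finset.sum_div]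
  refine Finset.sum_congr rfl fun k _ => ?_
  rw [gibbsLaw]; push_cast; ring

theorem gibbsLaw_sum (hC : 1 ≤ C) (hp : ∀ n, EllKernel C (p n))
    (hν : ∀ n, IsProbabilityMeasure (ν n)) (hf : ∀ n, Measurable (f n))
    (hfK : ∀ n x, |f n x| ≤ (K : ℤ)) (N : ℕ) (y : E) :
    ∑ k ∈ gibbsSupp K N, gibbsLaw p ν f N y k = 1 := by
  have h := gibbsLaw_generating hC hp hν hf hfK N y 0
  have h1 : expSite f 0 = fun _ _ => (1 : ℂ) := by ext i x; simp [expSite]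
  rw [h1, Lv_one_ofReal, div_self
    (Complex.ofReal_ne_zero.2 (Lv_one_pos hC hp hν (N + 1) y).ne')] at h
  simp only [zero_mul, Complex.exp_zero, mul_one] at h
  exact_mod_cast h

theorem norm_gibbs_char_le (hC : 1 ≤ C) (hp : ∀ n, EllKernel C (p n))
    (hν : ∀ n, IsProbabilityMeasure (ν n)) (hf : ∀ n, Measurable (f n))
    (hfK : ∀ n x, |f n x| ≤ (K : ℤ)) (N : ℕ) (y : E) (t : ℝ) {ζ : ℕ → ℝ} (hζ0 : ∀ n, 0 ≤ ζ n)
    (hζ : ∀ n, ∀ w : ℂ, ‖w‖ = 1 →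
      ζ n ≤ ∫ x, (1 - (w * Complex.exp (Complex.I * t * f n x)).re) ∂(ν n)) :
    ‖∑ k ∈ gibbsSupp K N, (gibbsLaw p ν f N y k : ℂ) * Complex.exp (Complex.I * t * k)‖ ≤
      Real.exp (-((C ^ 4)⁻¹ / 2 * ∑ i ∈ Finset.Icc 1 N, ζ i)) := by
  have hpos := Lv_one_pos hC hp hν (N + 1) y
  rw [gibbsLaw_generating hC hp hν hf hfK, norm_div, Complex.norm_real,
    Real.norm_of_nonneg hpos.le, div_le_iff₀ hpos]
  exact norm_Lv_le_exp hC hp hν (measurable_expSite hf _)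
    (fun n x => (norm_exp_I_mul t (f n x)).le) hζ0 hζ N y

end GibbsLaw

section GibbsCumulants

variable {E : Type*} [MeasurableSpace E] {C : ℝ} {p : ℕ → E → E → ℝ} {ν : ℕ → Measure E}
  {f : ℕ → E → ℤ} {K : ℕ} {b : ℕ → ℤ}

theorem exists_gibbs_log (hC : 1 ≤ C) (hp : ∀ n, EllKernel C (p n))
    (hν : ∀ n, IsProbabilityMeasure (ν n)) (hf : ∀ n, Measurable (f n))
    (hfK : ∀ n x, |f n x| ≤ (K : ℤ)) (hb : ∀ i, |b i| ≤ (K : ℤ)) (N : ℕ) (y : E) :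
    ∃ Λ : ℂ → ℂ, DifferentiableOn ℂ Λ (Metric.ball 0 (discRadius C (2 * K))) ∧
      (∀ z ∈ Metric.ball (0 : ℂ) (discRadius C (2 * K)),
        ‖Λ z‖ ≤ 3 * C ^ 4 * ∑ i ∈ range (N + 1), (ν i).real {x | f i x ≠ b i}) ∧
      (∀ z ∈ Metric.ball (0 : ℂ) (discRadius C (2 * K)),
        ∑ k ∈ gibbsSupp K N, (gibbsLaw p ν f N y k : ℂ) * Complex.exp (z * k) =
          Complex.exp (z * ((∑ i ∈ range (N + 1), b i : ℤ) : ℂ) + Λ z)) ∧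
      Λ 0 = 0 ∧
      deriv Λ 0 = (gibbsMean p ν f K N y : ℂ) - ((∑ i ∈ range (N + 1), b i : ℤ) : ℂ) ∧
      iteratedDeriv 2 Λ 0 = (gibbsVar p ν f K N y : ℂ) ∧
      ∀ (J : Finset ℕ) (ν' : ℕ → Measure E), (∀ j ∈ J, j ≤ N) →
        (∀ n, IsProbabilityMeasure (ν' n)) → (∀ i ∉ J, ν' i = ν i) →
        ∃ Δ : ℂ → ℂ, DifferentiableOn ℂ Δ (Metric.ball 0 (discRadius C (2 * K))) ∧
          (∀ z ∈ Metric.ball (0 : ℂ) (discRadius C (2 * K)), ‖Δ z‖ ≤ J.card) ∧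
          (∀ z ∈ Metric.ball (0 : ℂ) (discRadius C (2 * K)),
            ∑ k ∈ gibbsSupp K N, (gibbsLaw p ν' f N y k : ℂ) * Complex.exp (z * k) =
              Complex.exp (z * ((∑ i ∈ range (N + 1), b i : ℤ) : ℂ) + Λ z + Δ z)) ∧
          Δ 0 = 0 ∧
          deriv Δ 0 = (gibbsMean p ν' f K N y : ℂ) - (gibbsMean p ν f K N y : ℂ) := by
  set g : ℕ → E → ℤ := fun i x => f i x - b i with hg
  set B : ℂ := ((∑ i ∈ range (N + 1), b i : ℤ) : ℂ) with hB
  have hgm : ∀ n, Measurable (g n) := fun n => (hf n).sub_const (b n)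
  have hgM : ∀ n x, |g n x| ≤ ((2 * K : ℕ) : ℤ) := fun n x => by
    have h1 := abs_le.1 (hfK n x)
    have h2 := abs_le.1 (hb n)
    rw [abs_le]; push_cast; constructor <;> simp only [hg] <;> linarith
  have hδ := discRadius_pos hC (2 * K)
  set δ := discRadius C (2 * K) with hδdef
  have hnhds : Metric.ball (0 : ℂ) δ ∈ 𝓝 (0 : ℂ) := Metric.ball_mem_nhds _ hδ
  obtain ⟨Λ, hΛd, hΛ0, hΛ⟩ := exists_log hC hp hν hgm hgM N y
  have hchar : ∀ z ∈ Metric.ball (0 : ℂ) δ,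
      ∑ k ∈ gibbsSupp K N, (gibbsLaw p ν f N y k : ℂ) * Complex.exp (z * k) =
        Complex.exp (z * B + Λ z) := fun z hz => by
    have hne : ((Lv p ν (fun _ _ => (1 : ℝ)) (N + 1) y : ℝ) : ℂ) ≠ 0 :=
      Complex.ofReal_ne_zero.2 (Lv_one_pos hC hp hν (N + 1) y).ne'
    rw [gibbsLaw_generating hC hp hν hf hfK, Lv_expSite_shift b, (hΛ z hz).1, Complex.exp_add]
    field_simp
    rfl
  have hΛan : AnalyticAt ℂ Λ 0 := hΛd.analyticAt hnhds
  have hlin : AnalyticAt ℂ (fun z : ℂ => z * B) 0 := by fun_prop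
  have hdlin : deriv (fun z : ℂ => z * B) = fun _ => B := by
    ext z; simp
  have hder := log_generating_derivs (gibbsLaw_sum hC hp hν hf hfK N y)
    (G := fun z => z * B + Λ z) (hlin.add hΛan) (by simp [hΛ0])
    (Filter.eventually_of_mem hnhds hchar)
  have hd1 : deriv (fun z => z * B + Λ z) 0 = B + deriv Λ 0 := by
    rw [deriv_fun_add hlin.differentiableAt hΛan.differentiableAt, hdlin]
  refine ⟨Λ, hΛd, fun z hz => ?_, hchar, hΛ0, ?_, ?_, ?_⟩
  · refine (hΛ z hz).2.trans_eq ?_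
    simp only [hg, sub_ne_zero]
  · have := hder.1
    rw [hd1] at this
    rw [gibbsMean, ← this]; ring
  · have := hder.2
    rw [iteratedDeriv_fun_add (by exact hlin.contDiffAt) (by exact hΛan.contDiffAt)] at this
    rw [gibbsVar, gibbsMean, ← this, iteratedDeriv_succ, iteratedDeriv_one, iteratedDeriv_succ,
      iteratedDeriv_one, hdlin]
    simp
  · intro J ν' hJ hν' hνν
    obtain ⟨Δ, hΔd, hΔ0, hΔ⟩ := exists_log_of_measure_change hC hp hν hgm hgM N y J hJ ν' hν' hνν
    have hchar' : ∀ z ∈ Metric.ball (0 : ℂ) δ,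
        ∑ k ∈ gibbsSupp K N, (gibbsLaw p ν' f N y k : ℂ) * Complex.exp (z * k) =
          Complex.exp (z * B + Λ z + Δ z) := fun z hz => by
      have hne : ((Lv p ν (fun _ _ => (1 : ℝ)) (N + 1) y : ℝ) : ℂ) ≠ 0 :=
        Complex.ofReal_ne_zero.2 (Lv_one_pos hC hp hν (N + 1) y).ne'
      rw [gibbsLaw_generating hC hp hν' hf hfK, Lv_expSite_shift b, mul_div_assoc, (hΔ z hz).1,
        (hΛ z hz).1, mul_div_cancel_right₀ _ hne, Complex.exp_add, Complex.exp_add]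
      ring
    have hΔan : AnalyticAt ℂ Δ 0 := hΔd.analyticAt hnhds
    have hder' := log_generating_derivs (gibbsLaw_sum hC hp hν' hf hfK N y)
      (G := fun z => z * B + Λ z + Δ z) ((hlin.add hΛan).add hΔan) (by simp [hΛ0, hΔ0])
      (Filter.eventually_of_mem hnhds hchar')
    refine ⟨Δ, hΔd, fun z hz => (hΔ z hz).2, hchar', hΔ0, ?_⟩
    have h1 := hder'.1
    have h2 := hder.1
    have h3 : DifferentiableAt ℂ (fun z => z * B + Λ z) 0 :=
      hlin.differentiableAt.add hΛan.differentiableAt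
    rw [deriv_fun_add h3 hΔan.differentiableAt] at h1
    rw [gibbsMean, gibbsMean, ← h1, ← h2]; ring

theorem sum_mode_le_gibbsVar (hC : 1 ≤ C) (hp : ∀ n, EllKernel C (p n))
    (hν : ∀ n, IsProbabilityMeasure (ν n)) (hf : ∀ n, Measurable (f n)) (hK : 1 ≤ K)
    (hfK : ∀ n x, |f n x| ≤ (K : ℤ)) (hb : ∀ i a, (ν i).real {x | f i x ≠ b i} ≤
      (ν i).real {x | f i x ≠ a}) (N : ℕ) (y : E) (hV : (K : ℝ) ^ 2 ≤ gibbsVar p ν f K N y) :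
    ∑ i ∈ Finset.Icc 1 N, (ν i).real {x | f i x ≠ b i} ≤
      4 * Real.pi ^ 2 * C ^ 4 * gibbsVar p ν f K N y := by
  set V := gibbsVar p ν f K N y with hVdef
  set U := ∑ i ∈ Finset.Icc 1 N, (ν i).real {x | f i x ≠ b i} with hU
  have hK1 : (1 : ℝ) ≤ K := by exact_mod_cast hK
  have hV0 : 0 < V := by nlinarith
  have hpi := Real.pi_pos
  have hC0 : 0 < C := by linarith
  set t : ℝ := (√V)⁻¹ with ht
  have ht2 : t ^ 2 = V⁻¹ := by rw [ht, inv_pow, Real.sq_sqrt hV0.le]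
  have htb : |t| ≤ Real.pi / (2 * K) := by
    rw [abs_of_nonneg (by positivity), ht]
    have h1 : (K : ℝ) ≤ √V := Real.le_sqrt_of_sq_le hV
    calc (√V)⁻¹ ≤ (K : ℝ)⁻¹ := by gcongr
      _ = 2 / (2 * K) := by field_simp
      _ ≤ _ := by gcongr; linarith [Real.pi_gt_three]
  have h1 := norm_gibbs_char_le hC hp hν hf hfK N y t
    (ζ := fun i => t ^ 2 / (2 * Real.pi ^ 2) * (ν i).real {x | f i x ≠ b i})
    (fun n => by positivity)
    (fun n w hw => rotation_bound_small (ν n) (hf n) hK (hfK n) htb measureReal_le_one (hb n) hw)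
  have h2 := one_sub_le_norm_char (gibbsLaw_nonneg hC hp hν N y)
    (gibbsLaw_sum hC hp hν hf hfK N y) t (gibbsMean p ν f K N y)
  rw [← Finset.mul_sum] at h1
  change 1 - t ^ 2 / 2 * V ≤ _ at h2
  change _ ≤ Real.exp (-((C ^ 4)⁻¹ / 2 * (t ^ 2 / (2 * Real.pi ^ 2) * U))) at h1
  have h3 := h2.trans h1
  have h4 : 1 - t ^ 2 / 2 * V = 1 / 2 := by rw [ht2]; field_simp; norm_num
  rw [h4] at h3
  have h5 : Real.exp (-1) ≤ 1 / 2 := by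
    rw [Real.exp_neg, one_div]
    exact inv_anti₀ (by norm_num) (by linarith [Real.add_one_le_exp 1])
  have h6 := Real.exp_le_exp.1 (h5.trans h3)
  have h7 : (C ^ 4)⁻¹ / 2 * (t ^ 2 / (2 * Real.pi ^ 2) * U) = U / (4 * Real.pi ^ 2 * C ^ 4 * V) := by
    rw [ht2]; field_simp; ring
  rw [h7] at h6
  have h8 : U / (4 * Real.pi ^ 2 * C ^ 4 * V) ≤ 1 := by linarith
  exact (div_le_one (by positivity)).1 h8

end GibbsCumulants

section Core

theorem sum_Icc_sdiff_ge (N : ℕ) (J : Finset ℕ) {v : ℕ → ℝ} (hv : ∀ i, v i ≤ 1) :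
    ∑ i ∈ Finset.Icc 1 N, v i - J.card ≤ ∑ i ∈ Finset.Icc 1 N, if i ∈ J then 0 else v i := by
  have h : ∑ i ∈ Finset.Icc 1 N, v i ≤ ∑ i ∈ Finset.Icc 1 N, ((if i ∈ J then 0 else v i) +
      if i ∈ J then (1 : ℝ) else 0) :=
    Finset.sum_le_sum fun i _ => by split_ifs <;> simp [hv i]
  rw [Finset.sum_add_distrib] at h
  have h2 : ∑ i ∈ Finset.Icc 1 N, (if i ∈ J then (1 : ℝ) else 0) ≤ J.card := by
    rw [Finset.sum_ite_mem, Finset.sum_const, nsmul_eq_mul, mul_one]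
    exact_mod_cast Finset.card_le_card Finset.inter_subset_right
  linarith

set_option maxHeartbeats 2000000 in
/-- Edgeworth expansion for the Gibbs law, uniformly over perturbations of boundedly many
reference measures. -/
theorem exists_gibbs_edgeworth (r K : ℕ) (hK : 1 ≤ K) {C : ℝ} (hC : 1 ≤ C) :
    ∃ R > 0, ∀ ℓ : ℕ, ∃ (D : ℕ) (Cp Ce V₀ : ℝ), 0 ≤ Cp ∧
      ∀ (E : Type) [MeasurableSpace E] (p : ℕ → E → E → ℝ) (ν : ℕ → Measure E) (f : ℕ → E → ℤ)
        (N : ℕ) (y : E), (∀ n, EllKernel C (p n)) → (∀ n, IsProbabilityMeasure (ν n)) →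
        (∀ n, Measurable (f n)) → (∀ n x, |f n x| ≤ (K : ℤ)) → (∀ x, f 0 x = 0) →
        V₀ ≤ gibbsVar p ν f K N y →
        (∀ m ∈ Set.Icc 2 (2 * K), R * Real.log (gibbsVar p ν f K N y) ≤
          ∑ i ∈ Finset.Icc 1 N, resq (ν i) (f i) m) →
        ∀ (J : Finset ℕ) (ν' : ℕ → Measure E), J.card ≤ ℓ → (∀ j ∈ J, j ≤ N) →
          (∀ n, IsProbabilityMeasure (ν' n)) → (∀ i ∉ J, ν' i = ν i) →
          ∃ Q : Polynomial ℝ, Q.natDegree ≤ D ∧ (∀ i, |Q.coeff i| ≤ Cp) ∧ ∀ k : ℤ,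
            |gibbsLaw p ν' f N y k - (√(gibbsVar p ν f K N y))⁻¹ *
                Q.eval ((k - gibbsMean p ν' f K N y) / √(gibbsVar p ν f K N y)) *
                gaussDensity ((k - gibbsMean p ν' f K N y) / √(gibbsVar p ν f K N y))| ≤
              Ce * (√(gibbsVar p ν f K N y))⁻¹ ^ (r + 1) := by
  have hC0 : 0 < C := by linarith
  have hK0 : (0 : ℝ) < K := by exact_mod_cast hK
  have hK1 : (1 : ℝ) ≤ K := by exact_mod_cast hK
  have hpi := Real.pi_pos
  have hδ := discRadius_pos hC (2 * K)
  set δ := discRadius C (2 * K) with hδdef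
  set η : ℝ := Real.pi / (2 * K) with hηdef
  have hη : 0 < η := by positivity
  have hηπ : η ≤ Real.pi := div_le_self hpi.le (by linarith)
  obtain ⟨c0, hc0, hmod⟩ := exists_uniform_modulus K hK hη
  set c' : ℝ := (C ^ 4)⁻¹ * c0 / 8 with hc'
  have hc'0 : 0 < c' := by positivity
  set R : ℝ := (r + 1) / (2 * c') with hR
  set A : ℝ := 3 * C ^ 4 with hA
  have hA0 : 0 < A := by positivity
  set c : ℝ := (4 * Real.pi ^ 2 * C ^ 4)⁻¹ with hc
  have hcpos : 0 < c := by positivity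
  set c2 : ℝ := c * δ ^ 2 / (8 * A) with hc2
  have hc2pos : 0 < c2 := by positivity
  refine ⟨R, by positivity, fun ℓ => ?_⟩
  obtain ⟨D, Cp, Ce, hCp, hedge⟩ := edgeworth_of_char r (c1 := 1)
    (C1 := Real.exp (16 * A / (c * δ ^ 3) + ℓ)) (c2 := c2)
    (C2 := Real.exp ((c * η ^ 2 + c') * ℓ)) one_pos hc2pos hη hηπ
  set mn : ℝ := min η (δ / 4) with hmn
  have hmn0 : 0 < mn := lt_min hη (by positivity)
  refine ⟨D, Cp, Ce, max (max 1 (K ^ 2)) ((mn ^ 3)⁻¹), hCp, ?_⟩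
  intro E _ p ν f N y hp hν hf hfK hf0 hV hRV J ν' hJc hJN hν' hνν
  have hV1 : 1 ≤ gibbsVar p ν f K N y := ((le_max_left _ _).trans (le_max_left _ _)).trans hV
  have hVK : (K : ℝ) ^ 2 ≤ gibbsVar p ν f K N y :=
    ((le_max_right _ _).trans (le_max_left _ _)).trans hV
  have hVm : (mn ^ 3)⁻¹ ≤ gibbsVar p ν f K N y := (le_max_right _ _).trans hV
  choose b hbK hbmode using fun i => exists_mode (ν i) (hfK i)
  obtain ⟨Λ, hΛd, hΛb, -, hΛ0, hΛ1, hΛ2, hpert⟩ := exists_gibbs_log hC hp hν hf hfK hbK N y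
  have hUV := sum_mode_le_gibbsVar hC hp hν hf hK hfK hbmode N y hVK
  obtain ⟨Δ, hΔd, hΔb, hchar, hΔ0, hΔ1⟩ := hpert J ν' hJN hν' hνν
  set V := gibbsVar p ν f K N y with hVdef
  set a := gibbsMean p ν f K N y with ha
  set a' := gibbsMean p ν' f K N y with ha'
  set B : ℂ := ((∑ i ∈ range (N + 1), b i : ℤ) : ℂ) with hB
  have hV0 : 0 < V := by linarith
  set u : ℕ → ℝ := fun i => (ν i).real {x | f i x ≠ b i} with hu
  have hu0 : ∀ i, 0 ≤ u i := fun i => measureReal_nonneg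
  have hu1 : ∀ i, u i ≤ 1 := fun i => measureReal_le_one
  have hu00 : u 0 = 0 := le_antisymm ((hbmode 0 0).trans_eq (by simp [hf0])) (hu0 0)
  set U := ∑ i ∈ Finset.Icc 1 N, u i with hU
  have hUr : ∑ i ∈ range (N + 1), u i = U := by
    rw [Finset.range_eq_Ico, Finset.sum_eq_sum_Ico_succ_bot (by omega), hu00, zero_add]; rfl
  have hUV' : U ≤ V / c := by rw [hc, div_inv_eq_mul]; linarith
  have hΛb' : ∀ z ∈ Metric.ball (0 : ℂ) δ, ‖Λ z‖ ≤ A * U := fun z hz => by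
    rw [← hUr]; exact hΛb z hz
  have hVU : V * δ ^ 2 / (8 * A) ≤ U := by
    have h := norm_taylorCoeff_le hδ hΛd hΛb' 2
    rw [hΛ2] at h
    have e : ‖((Nat.factorial 2 : ℕ) : ℂ)⁻¹ * (V : ℂ)‖ = V / 2 := by
      rw [norm_mul, Complex.norm_real, Real.norm_of_nonneg hV0.le]
      simp [Nat.factorial]; ring
    rw [e, le_div_iff₀ (by positivity)] at h
    rw [div_le_iff₀ (by positivity)]
    nlinarith
  set σ := √V with hσ
  have hσ2 : σ ^ 2 = V := Real.sq_sqrt hV0.le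
  have hσ1 : 1 ≤ σ := Real.one_le_sqrt.2 hV1
  have hσ0 : 0 < σ := by linarith
  set ρ : ℝ := V ^ (-(1 / 3 : ℝ)) with hρ
  have hρ0 : 0 < ρ := Real.rpow_pos_of_pos hV0 _
  have hρ3 : ρ ^ 3 * V = 1 := by
    rw [hρ, ← Real.rpow_natCast, ← Real.rpow_mul hV0.le]
    norm_num
    rw [Real.rpow_neg_one]
    field_simp
  have hρm : ρ ≤ mn := by
    by_contra hlt
    push Not at hlt
    have h1 : mn ^ 3 < ρ ^ 3 := by gcongr
    have h2 : 1 ≤ mn ^ 3 * V := by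
      have := mul_le_mul_of_nonneg_left hVm (by positivity : 0 ≤ mn ^ 3)
      rwa [mul_inv_cancel₀ (by positivity)] at this
    nlinarith
  have hρη : ρ ≤ η := hρm.trans (min_le_left _ _)
  have hρδ : ρ ≤ δ / 4 := hρm.trans (min_le_right _ _)
  have hsub : Metric.ball (0 : ℂ) ρ ⊆ Metric.ball 0 δ := Metric.ball_subset_ball (by linarith)
  have hℓ : (J.card : ℝ) ≤ ℓ := by exact_mod_cast hJc
  have hζsmall : ∀ t : ℝ, |t| ≤ η → c * t ^ 2 * (U - ℓ) ≤ (C ^ 4)⁻¹ / 2 * ∑ i ∈ Finset.Icc 1 N,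
      if i ∈ J then 0 else t ^ 2 / (2 * Real.pi ^ 2) * u i := fun t ht => by
    have h := sum_Icc_sdiff_ge N J hu1
    have e : ∑ i ∈ Finset.Icc 1 N, (if i ∈ J then 0 else t ^ 2 / (2 * Real.pi ^ 2) * u i) =
        t ^ 2 / (2 * Real.pi ^ 2) * ∑ i ∈ Finset.Icc 1 N, if i ∈ J then 0 else u i := by
      rw [Finset.mul_sum]; exact Finset.sum_congr rfl fun i _ => by split_ifs <;> simp
    rw [e]
    have e2 : (C ^ 4)⁻¹ / 2 * (t ^ 2 / (2 * Real.pi ^ 2) *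
        ∑ i ∈ Finset.Icc 1 N, if i ∈ J then 0 else u i) =
        c * t ^ 2 * ∑ i ∈ Finset.Icc 1 N, if i ∈ J then 0 else u i := by
      rw [hc]; field_simp; ring
    rw [e2]
    gcongr
    linarith
  refine hedge σ a' ρ (gibbsSupp K N) (gibbsLaw p ν' f N y)
    (fun z => Complex.exp (z * B + Λ z + Δ z - a' * z - V * z ^ 2 / 2)) hσ1 hρ0
    (by rw [hσ2]; exact hρ3) hρη (gibbsLaw_eq_zero hfK N y) ?_ ?_ ?_ ?_ ?_
  · have h1 := hΛd.mono hsub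
    have h2 := hΔd.mono hsub
    fun_prop
  · intro z hz
    rw [mem_ball_zero_iff] at hz
    have hz4 : ‖z‖ ≤ δ / 4 := by linarith
    have t1 := norm_sub_taylor_le hδ hΛd hΛb' 3 hz4
    have t2 := norm_sub_taylor_le hδ hΔd (fun z hz => (hΔb z hz).trans hℓ) 2 hz4
    simp only [Finset.sum_range_succ, Finset.sum_range_zero, iteratedDeriv_zero, iteratedDeriv_one,
      hΛ0, hΛ1, hΛ2, hΔ0, hΔ1] at t1 t2
    have e : z * B + Λ z + Δ z - a' * z - V * z ^ 2 / 2 =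
        (Λ z - (0 + ((Nat.factorial 0 : ℕ) : ℂ)⁻¹ * 0 * z ^ 0 +
          ((Nat.factorial 1 : ℕ) : ℂ)⁻¹ * ((a : ℂ) - B) * z ^ 1 +
          ((Nat.factorial 2 : ℕ) : ℂ)⁻¹ * (V : ℂ) * z ^ 2)) +
        (Δ z - (0 + ((Nat.factorial 0 : ℕ) : ℂ)⁻¹ * 0 * z ^ 0 +
          ((Nat.factorial 1 : ℕ) : ℂ)⁻¹ * ((a' : ℂ) - a) * z ^ 1)) := by
      simp [Nat.factorial]; ring
    rw [Complex.norm_exp]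
    refine Real.exp_le_exp.2 ((Complex.re_le_norm _).trans ?_)
    rw [e]
    refine (norm_add_le _ _).trans (add_le_add (t1.trans ?_) (t2.trans ?_))
    · have h3 : ‖z‖ ^ 3 ≤ ρ ^ 3 := by gcongr
      calc 2 * (A * U) * (‖z‖ / (δ / 2)) ^ 3 = 16 * A / δ ^ 3 * (U * ‖z‖ ^ 3) := by
            field_simp; ring
        _ ≤ 16 * A / δ ^ 3 * (V / c * ρ ^ 3) := by
            gcongr
        _ = 16 * A / (c * δ ^ 3) * (ρ ^ 3 * V) := by field_simp
        _ = _ := by rw [hρ3, mul_one]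
    · have h3 : ‖z‖ / (δ / 2) ≤ 1 / 2 := by
        rw [div_le_iff₀ (by positivity)]; linarith
      have h4 : (‖z‖ / (δ / 2)) ^ 2 ≤ (1 / 2) ^ 2 := by gcongr
      have : (0 : ℝ) ≤ ℓ := by positivity
      nlinarith
  · intro t ht
    have hzt : Complex.I * (t : ℂ) ∈ Metric.ball (0 : ℂ) δ := hsub (by simpa using ht)
    rw [hchar _ hzt, ← Complex.exp_add, ← Complex.exp_add]
    congr 1
    have hσc : ((σ : ℝ) : ℂ) ^ 2 = (V : ℂ) := by exact_mod_cast hσ2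
    rw [mul_pow, mul_pow, hσc, Complex.I_sq]; ring
  · intro t ht
    have h1 := norm_gibbs_char_le hC hp hν' hf hfK N y t
      (ζ := fun i => if i ∈ J then 0 else t ^ 2 / (2 * Real.pi ^ 2) * u i)
      (fun i => by
        have := hu0 i
        split_ifs
        · exact le_rfl
        · positivity)
      (fun i w hw => by
        split_ifs with hi
        · have := le_integral_one_sub_re (ν' i) (φ := fun _ => ())
            (e := fun x => Complex.exp (Complex.I * t * f i x)) (c := 0) (u := 0)
            ((measurable_of_countable fun k : ℤ => Complex.exp (Complex.I * t * k)).comp (hf i))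
            (fun x => norm_exp_I_mul t (f i x)) le_rfl (by simp) (by simp)
            (fun _ => measureReal_nonneg) hw
          simpa using this
        · rw [hνν i hi]
          exact rotation_bound_small (ν i) (hf i) hK (hfK i) ht (hu1 i) (hbmode i) hw)
    refine h1.trans ?_
    rw [← Real.exp_add]
    refine Real.exp_le_exp.2 ?_
    have h2 := hζsmall t ht
    have h3 : c2 * (σ * t) ^ 2 ≤ c * t ^ 2 * U := by
      calc c2 * (σ * t) ^ 2 = c * t ^ 2 * (V * δ ^ 2 / (8 * A)) := by
            rw [hc2, mul_pow, hσ2]; ring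
        _ ≤ _ := by gcongr
    have h4 : t ^ 2 ≤ η ^ 2 := sq_le_sq' (by linarith [abs_le.1 ht]) (abs_le.1 ht).2
    have h5 : c * t ^ 2 * ℓ ≤ c * η ^ 2 * ℓ := by gcongr
    have h6 : 0 ≤ c' * ℓ := by positivity
    linarith
  · intro t ht1 ht2
    obtain ⟨m, hm, hd⟩ := hmod t ht1 ht2
    set q : ℕ → ℝ := fun i => resq (ν i) (f i) m with hq
    have hq0 : ∀ i, 0 ≤ q i := fun i => resq_nonneg _ _ _
    have hq1 : ∀ i, q i ≤ 1 := fun i => resq_le_one _ _ _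
    have h1 := norm_gibbs_char_le hC hp hν' hf hfK N y t
      (ζ := fun i => if i ∈ J then 0 else c0 / 4 * q i)
      (fun i => by
        have := hq0 i
        split_ifs
        · exact le_rfl
        · positivity)
      (fun i w hw => by
        split_ifs with hi
        · have := le_integral_one_sub_re (ν' i) (φ := fun _ => ())
            (e := fun x => Complex.exp (Complex.I * t * f i x)) (c := 0) (u := 0)
            ((measurable_of_countable fun k : ℤ => Complex.exp (Complex.I * t * k)).comp (hf i))
            (fun x => norm_exp_I_mul t (f i x)) le_rfl (by simp) (by simp)
            (fun _ => measureReal_nonneg) hw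
          simpa using this
        · rw [hνν i hi]
          exact rotation_bound_large (ν i) (hf i) (hfK i) hc0.le hd hw)
    refine h1.trans ?_
    have e0 : σ⁻¹ ^ (r + 1) = Real.exp (-((r + 1) / 2 * Real.log V)) := by
      have : Real.log V = 2 * Real.log σ := by rw [← hσ2, Real.log_pow]; norm_num
      rw [this, ← Real.exp_log hσ0, ← Real.exp_neg, ← Real.exp_nat_mul, Real.log_exp]
      congr 1; push_cast; ring
    rw [e0, ← Real.exp_add]
    refine Real.exp_le_exp.2 ?_
    have h2 := sum_Icc_sdiff_ge N J hq1
    have e : ∑ i ∈ Finset.Icc 1 N, (if i ∈ J then 0 else c0 / 4 * q i) =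
        c0 / 4 * ∑ i ∈ Finset.Icc 1 N, if i ∈ J then 0 else q i := by
      rw [Finset.mul_sum]; exact Finset.sum_congr rfl fun i _ => by split_ifs <;> simp
    have e2 : (C ^ 4)⁻¹ / 2 * (c0 / 4 * ∑ i ∈ Finset.Icc 1 N, if i ∈ J then 0 else q i) =
        c' * ∑ i ∈ Finset.Icc 1 N, if i ∈ J then 0 else q i := by rw [hc']; ring
    rw [e, e2]
    have h3 : c' * (R * Real.log V - ℓ) ≤ c' * ∑ i ∈ Finset.Icc 1 N, if i ∈ J then 0 else q i := by
      gcongr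
      have := hRV m hm
      linarith
    have h4 : c' * (R * Real.log V) = (r + 1) / 2 * Real.log V := by
      rw [hR]; field_simp
    have h5 : 0 ≤ c * η ^ 2 * ℓ := by positivity
    linarith

end Core

section Density

/-- Measurable rectangles form a semiring of sets. -/
theorem isSetSemiring_rectangles (α β : Type*) [MeasurableSpace α] [MeasurableSpace β] :
    IsSetSemiring (Set.image2 (· ×ˢ ·) {s : Set α | MeasurableSet s}
      {t : Set β | MeasurableSet t}) where
  empty_mem := ⟨∅, .empty, ∅, .empty, by simp⟩
  inter_mem := by
    rintro _ ⟨a, ha, b, hb, rfl⟩ _ ⟨a', ha', b', hb', rfl⟩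
    exact ⟨a ∩ a', MeasurableSet.inter ha ha', b ∩ b', MeasurableSet.inter hb hb',
      Set.prod_inter_prod.symm⟩
  sdiff_eq_sUnion' := by
    classical
    rintro _ ⟨a, ha, b, hb, rfl⟩ _ ⟨a', ha', b', hb', rfl⟩
    refine ⟨{(a \ a') ×ˢ b, (a ∩ a') ×ˢ (b \ b')}, ?_, ?_, ?_⟩
    · intro s hs
      simp only [coe_insert, coe_singleton, Set.mem_insert_iff, Set.mem_singleton_iff] at hs
      rcases hs with rfl | rfl
      · exact ⟨a \ a', MeasurableSet.diff ha ha', b, hb, rfl⟩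
      · exact ⟨a ∩ a', MeasurableSet.inter ha ha', b \ b', MeasurableSet.diff hb hb', rfl⟩
    · rw [coe_insert, coe_singleton]
      refine (Set.pairwiseDisjoint_insert.2 ⟨Set.pairwiseDisjoint_singleton _ _, ?_⟩)
      rintro j hj -
      rw [Set.mem_singleton_iff.1 hj]
      refine Set.disjoint_left.2 ?_
      rintro ⟨x, y⟩ h1 h2
      exact h1.1.2 h2.1.2
    · ext ⟨x, y⟩
      simp only [coe_insert, coe_singleton, Set.sUnion_insert, Set.sUnion_singleton,
        Set.mem_union, Set.mem_prod, Set.mem_sdiff, Set.mem_inter_iff]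
      tauto

theorem measure_le_smul_of_rectangles {α β : Type*} [MeasurableSpace α] [MeasurableSpace β]
    (ν π : Measure (α × β)) [IsFiniteMeasure ν] [IsFiniteMeasure π] {c : ℝ≥0∞} (hc : c ≠ ⊤)
    (h : ∀ A B, MeasurableSet A → MeasurableSet B → ν (A ×ˢ B) ≤ c * π (A ×ˢ B)) :
    ν ≤ c • π := by
  have hS := isSetSemiring_rectangles α β
  have hsup : ∀ t ∈ supClosure (Set.image2 (· ×ˢ ·) {s : Set α | MeasurableSet s}
      {t : Set β | MeasurableSet t}), ν t ≤ c * π t := by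
    intro t ht
    obtain ⟨P, hP⟩ := hS.mem_supClosure_iff.1 ht
    have hmeas : ∀ u ∈ P.parts, MeasurableSet u := fun u hu => by
      obtain ⟨a, ha, b, hb, rfl⟩ := hP hu
      exact MeasurableSet.prod ha hb
    have e : t = ⋃ u ∈ P.parts, id u := by
      conv_lhs => rw [← P.sup_parts, Finset.sup_id_set_eq_sUnion, Set.sUnion_eq_biUnion]
      rfl
    have hd : Set.PairwiseDisjoint (P.parts : Set (Set (α × β))) id := P.disjoint
    rw [e, measure_biUnion_finset hd hmeas, measure_biUnion_finset hd hmeas, Finset.mul_sum]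
    refine Finset.sum_le_sum fun u hu => ?_
    obtain ⟨a, ha, b, hb, rfl⟩ := hP hu
    exact h a b ha hb
  refine Measure.le_iff.2 fun s hs => ?_
  rw [Measure.smul_apply, smul_eq_mul]
  refine ENNReal.le_of_forall_pos_le_add fun ε hε _ => ?_
  have hpos : 0 < (ε : ℝ≥0∞) / (1 + c) :=
    ENNReal.div_pos (by simpa using hε.ne') (by simp [hc])
  obtain ⟨t, ht, hts⟩ := exists_measure_symmDiff_lt_of_generateFrom_isSetSemiring
    (μ := ν + π) hS
    ⟨{Set.univ}, Set.countable_singleton _, by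
      rw [Set.singleton_subset_iff]
      exact ⟨Set.univ, .univ, Set.univ, .univ, by simp⟩, by simp⟩
    generateFrom_prod.symm hs hpos
  rw [Measure.add_apply] at hts
  have h1 : ν s ≤ ν t + ν (symmDiff t s) := by
    refine (measure_mono fun x hx => ?_).trans (measure_union_le _ _)
    by_cases hxt : x ∈ t
    · exact .inl hxt
    · exact .inr (.inr ⟨hx, hxt⟩)
  have h2 : π t ≤ π s + π (symmDiff t s) := by
    refine (measure_mono fun x hx => ?_).trans (measure_union_le _ _)
    by_cases hxs : x ∈ s
    · exact .inl hxs
    · exact .inr (.inl ⟨hx, hxs⟩)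
  have h3 : ν (symmDiff t s) ≤ ε / (1 + c) := le_self_add.trans hts.le
  have h4 : π (symmDiff t s) ≤ ε / (1 + c) := le_add_self.trans hts.le
  calc ν s ≤ ν t + ν (symmDiff t s) := h1
    _ ≤ c * π t + ε / (1 + c) := add_le_add (hsup t ht) h3
    _ ≤ c * (π s + ε / (1 + c)) + ε / (1 + c) := by gcongr; exact h2.trans (by gcongr)
    _ = c * π s + (1 + c) * (ε / (1 + c)) := by ring
    _ = c * π s + ε := by
      rw [ENNReal.mul_div_cancel (by simp) (by simp [hc])]

/-- Mutually dominated finite measures have a two-sided bounded density. -/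
theorem exists_bounded_density {α : Type*} [MeasurableSpace α] (ν π : Measure α)
    [IsFiniteMeasure ν] [IsFiniteMeasure π] {C : ℝ} (hC : 1 ≤ C)
    (h1 : ν ≤ ENNReal.ofReal C • π) (h2 : π ≤ ENNReal.ofReal C • ν) :
    ∃ p : α → ℝ, Measurable p ∧ (∀ x, C⁻¹ ≤ p x ∧ p x ≤ C) ∧
      ν = π.withDensity fun x => ENNReal.ofReal (p x) := by
  have hC0 : 0 < C := by linarith
  have hac : ν ≪ π := Measure.absolutelyContinuous_of_le_smul h1
  have hd := Measure.withDensity_rnDeriv_eq ν π hac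
  have hm := Measure.measurable_rnDeriv ν π
  have hle : ∀ᵐ x ∂π, ν.rnDeriv π x ≤ ENNReal.ofReal C := by
    refine ae_le_of_forall_setLIntegral_le_of_sigmaFinite hm fun s hs _ => ?_
    rw [← withDensity_apply _ hs, hd, setLIntegral_const]
    exact Measure.le_iff.1 h1 s hs
  have hge : ∀ᵐ x ∂π, 1 ≤ ENNReal.ofReal C * ν.rnDeriv π x := by
    refine ae_le_of_forall_setLIntegral_le_of_sigmaFinite measurable_const fun s hs _ => ?_
    rw [lintegral_const_mul _ hm, setLIntegral_const, one_mul, ← withDensity_apply _ hs, hd]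
    exact Measure.le_iff.1 h2 s hs
  refine ⟨fun x => max C⁻¹ (min C (ν.rnDeriv π x).toReal), ?_, fun x => ⟨le_max_left _ _,
    max_le ((inv_le_one_of_one_le₀ hC).trans hC) (min_le_left _ _)⟩, ?_⟩
  · exact measurable_const.max (measurable_const.min hm.ennreal_toReal)
  · rw [← hd]
    refine withDensity_congr_ae ?_
    rw [hd]
    filter_upwards [hle, hge] with x hx hx'
    have hfin : ν.rnDeriv π x ≠ ⊤ := ne_top_of_le_ne_top ENNReal.ofReal_ne_top hx
    have e1 : (ν.rnDeriv π x).toReal ≤ C := ENNReal.toReal_le_of_le_ofReal hC0.le hx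
    have e2 : C⁻¹ ≤ (ν.rnDeriv π x).toReal := by
      rw [inv_le_iff_one_le_mul₀ hC0, mul_comm]
      have := ENNReal.toReal_mono (ENNReal.mul_ne_top ENNReal.ofReal_ne_top hfin) hx'
      rwa [ENNReal.toReal_one, ENNReal.toReal_mul, ENNReal.toReal_ofReal hC0.le] at this
    rw [min_eq_right e1, max_eq_right e2, ENNReal.ofReal_toReal hfin]

variable {Ω E : Type*} [MeasurableSpace Ω] [MeasurableSpace E] {μ : Measure Ω}
  {X : ℕ → Ω → E} {κ : ℕ → Kernel E E} {C : ℝ}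

/-- The Markov property in integrated form. -/
theorem UEChain.measure_inter (h : UEChain μ X κ C) (n : ℕ) ⦃s : Set Ω⦄
    (hs : MeasurableSet[⨆ i : Fin (n + 1), MeasurableSpace.comap (X i) inferInstance] s)
    ⦃A : Set E⦄ (hA : MeasurableSet A) :
    μ (s ∩ X (n + 1) ⁻¹' A) = ∫⁻ ω in s, κ n (X n ω) A ∂μ := by
  obtain ⟨hμ, hX, hκ, hM, -⟩ := h
  have hle : (⨆ i : Fin (n + 1), MeasurableSpace.comap (X i) inferInstance) ≤
      (inferInstance : MeasurableSpace Ω) := iSup_le fun i => (hX i).comap_le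
  have hind : (fun ω => A.indicator (fun _ => (1 : ℝ)) (X (n + 1) ω)) =
      (X (n + 1) ⁻¹' A).indicator fun _ => (1 : ℝ) := rfl
  have hAm := hX (n + 1) hA
  have h1 := setIntegral_condExp hle (f := fun ω => A.indicator (fun _ => (1 : ℝ)) (X (n + 1) ω))
    (μ := μ) (by rw [hind]; exact (integrable_const _).indicator hAm) hs
  rw [setIntegral_congr_ae (hle s hs) ((hM n A hA).mono fun ω hω _ => hω), hind,
    integral_indicator hAm, Measure.restrict_restrict hAm, setIntegral_const, smul_eq_mul,
    mul_one, integral_toReal (f := fun ω => κ n (X n ω) A)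
      (((κ n).measurable_coe hA).comp (hX n)).aemeasurable
      (.of_forall fun ω => measure_lt_top _ _), measureReal_def, Set.inter_comm] at h1
  refine ((ENNReal.toReal_eq_toReal_iff' ?_ (measure_ne_top _ _)).1 h1).symm
  refine ne_top_of_le_ne_top (measure_ne_top μ s) ?_
  calc ∫⁻ ω in s, κ n (X n ω) A ∂μ ≤ ∫⁻ ω in s, 1 ∂μ := lintegral_mono fun ω => prob_le_one
    _ = μ s := by simp

/-- Consecutive states of a uniformly elliptic chain have a joint density with values in
`[C⁻¹, C]` with respect to the product of the marginals. -/
theorem UEChain.exists_density (h : UEChain μ X κ C) (hC : 1 ≤ C) (n : ℕ) :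
    ∃ p : E → E → ℝ, EllKernel C p ∧
      μ.map (fun ω => (X n ω, X (n + 1) ω)) = ((μ.map (X n)).prod (μ.map (X (n + 1)))).withDensity
        fun z => ENNReal.ofReal (p z.1 z.2) := by
  have hint := h.measure_inter n
  obtain ⟨hμ, hX, hκ, -, hell⟩ := h
  have := Measure.isProbabilityMeasure_map (hX n).aemeasurable (μ := μ)
  have := Measure.isProbabilityMeasure_map (hX (n + 1)).aemeasurable (μ := μ)
  have hXX : Measurable fun ω => (X n ω, X (n + 1) ω) := (hX n).prodMk (hX (n + 1))
  have := Measure.isProbabilityMeasure_map hXX.aemeasurable (μ := μ)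
  have hrect : ∀ A B, MeasurableSet A → MeasurableSet B →
      μ.map (fun ω => (X n ω, X (n + 1) ω)) (A ×ˢ B) =
        ∫⁻ ω in X n ⁻¹' A, κ n (X n ω) B ∂μ := fun A B hA hB => by
    rw [Measure.map_apply hXX (hA.prod hB), ← hint ?_ hB]
    · rfl
    · have : MeasurableSet[MeasurableSpace.comap (X n) inferInstance] (X n ⁻¹' A) := ⟨A, hA, rfl⟩
      exact le_iSup (fun i : Fin (n + 1) => MeasurableSpace.comap (X i) inferInstance)
        (Fin.last n) _ (by simpa using this)
  obtain ⟨p, hpm, hpb, hp⟩ := exists_bounded_density _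
    ((μ.map (X n)).prod (μ.map (X (n + 1)))) hC
    (measure_le_smul_of_rectangles (μ.map fun ω => (X n ω, X (n + 1) ω)) _ ENNReal.ofReal_ne_top
      fun A B hA hB => by
        rw [hrect A B hA hB, Measure.prod_prod, Measure.map_apply (hX n) hA]
        calc ∫⁻ ω in X n ⁻¹' A, κ n (X n ω) B ∂μ
            ≤ ∫⁻ ω in X n ⁻¹' A, ENNReal.ofReal C * μ.map (X (n + 1)) B ∂μ :=
              lintegral_mono_ae (ae_restrict_of_ae ((hell n B hB).mono fun ω hω => hω.1))
          _ = _ := by rw [setLIntegral_const]; ring)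
    (measure_le_smul_of_rectangles _ _ ENNReal.ofReal_ne_top
      fun A B hA hB => by
        rw [hrect A B hA hB, Measure.prod_prod, Measure.map_apply (hX n) hA,
          ← lintegral_const_mul (f := fun ω => κ n (X n ω) B) _
            (((κ n).measurable_coe hB).comp (hX n))]
        calc μ (X n ⁻¹' A) * μ.map (X (n + 1)) B
            = ∫⁻ ω in X n ⁻¹' A, μ.map (X (n + 1)) B ∂μ := by rw [setLIntegral_const]; ring
          _ ≤ _ := lintegral_mono_ae (ae_restrict_of_ae ((hell n B hB).mono fun ω hω => hω.2)))
  exact ⟨fun x y => p (x, y), ⟨hpm, fun x y => hpb (x, y)⟩, hp⟩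

/-- The transition probabilities are given by the density, for each target set separately. -/
theorem UEChain.kernel_ae_eq (h : UEChain μ X κ C) {n : ℕ} {p : E → E → ℝ}
    (hpm : Measurable (Function.uncurry p))
    (hp : μ.map (fun ω => (X n ω, X (n + 1) ω)) =
      ((μ.map (X n)).prod (μ.map (X (n + 1)))).withDensity fun z => ENNReal.ofReal (p z.1 z.2))
    {A : Set E} (hA : MeasurableSet A) :
    ∀ᵐ ω ∂μ, κ n (X n ω) A = ∫⁻ y in A, ENNReal.ofReal (p (X n ω) y) ∂μ.map (X (n + 1)) := by
  have hint := h.measure_inter n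
  obtain ⟨hμ, hX, hκ, -, -⟩ := h
  have := Measure.isProbabilityMeasure_map (hX n).aemeasurable (μ := μ)
  have := Measure.isProbabilityMeasure_map (hX (n + 1)).aemeasurable (μ := μ)
  have hXX : Measurable fun ω => (X n ω, X (n + 1) ω) := (hX n).prodMk (hX (n + 1))
  have hpm' : Measurable fun z : E × E => ENNReal.ofReal (p z.1 z.2) := hpm.ennreal_ofReal
  have hm1 : Measurable fun x => κ n x A := (κ n).measurable_coe hA
  have hm2 : Measurable fun x => ∫⁻ y in A, ENNReal.ofReal (p x y) ∂μ.map (X (n + 1)) :=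
    hpm'.lintegral_prod_right'
  refine ae_of_ae_map (p := fun x => κ n x A = ∫⁻ y in A, ENNReal.ofReal (p x y) ∂μ.map (X (n + 1)))
    (hX n).aemeasurable ?_
  refine ae_eq_of_forall_setLIntegral_eq_of_sigmaFinite hm1 hm2 fun B hB _ => ?_
  rw [setLIntegral_map hB hm1 (hX n), ← hint ?_ hA]
  · calc μ (X n ⁻¹' B ∩ X (n + 1) ⁻¹' A)
        = μ.map (fun ω => (X n ω, X (n + 1) ω)) (B ×ˢ A) :=
          (Measure.map_apply hXX (hB.prod hA)).symm
      _ = _ := by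
        rw [hp, withDensity_apply _ (hB.prod hA), ← Measure.prod_restrict,
          lintegral_prod _ hpm'.aemeasurable]
  · have : MeasurableSet[MeasurableSpace.comap (X n) inferInstance] (X n ⁻¹' B) := ⟨B, hB, rfl⟩
    exact le_iSup (fun i : Fin (n + 1) => MeasurableSpace.comap (X i) inferInstance)
      (Fin.last n) _ (by simpa using this)

/-- Integrating a function of the past and of the next state. -/
theorem UEChain.lintegral_next (h : UEChain μ X κ C) {n : ℕ} {p : E → E → ℝ}
    (hpm : Measurable (Function.uncurry p))
    (hp : μ.map (fun ω => (X n ω, X (n + 1) ω)) =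
      ((μ.map (X n)).prod (μ.map (X (n + 1)))).withDensity fun z => ENNReal.ofReal (p z.1 z.2))
    {F : Type*} [MeasurableSpace F] {Y : Ω → F}
    (hY : Measurable[⨆ i : Fin (n + 1), MeasurableSpace.comap (X i) inferInstance] Y)
    {q : F → E} (hq : Measurable q) (hqY : ∀ ω, q (Y ω) = X n ω)
    {G : F × E → ℝ≥0∞} (hG : Measurable G) :
    ∫⁻ ω, G (Y ω, X (n + 1) ω) ∂μ =
      ∫⁻ ω, ∫⁻ y, ENNReal.ofReal (p (X n ω) y) * G (Y ω, y) ∂μ.map (X (n + 1)) ∂μ := by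
  have hint := h.measure_inter n
  have hker := fun A hA => h.kernel_ae_eq hpm hp (A := A) hA
  obtain ⟨hμ, hX, hκ, -, -⟩ := h
  have hle : (⨆ i : Fin (n + 1), MeasurableSpace.comap (X i) inferInstance) ≤
      (inferInstance : MeasurableSpace Ω) := iSup_le fun i => (hX i).comap_le
  have hY' : Measurable Y := hY.mono hle le_rfl
  have := Measure.isProbabilityMeasure_map (hX (n + 1)).aemeasurable (μ := μ)
  have := Measure.isProbabilityMeasure_map hY'.aemeasurable (μ := μ)
  have hYX : Measurable fun ω => (Y ω, X (n + 1) ω) := hY'.prodMk (hX (n + 1))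
  have := Measure.isProbabilityMeasure_map hYX.aemeasurable (μ := μ)
  have hd : Measurable fun z : F × E => ENNReal.ofReal (p (q z.1) z.2) :=
    (hpm.comp ((hq.comp measurable_fst).prodMk measurable_snd)).ennreal_ofReal
  have key : μ.map (fun ω => (Y ω, X (n + 1) ω)) =
      ((μ.map Y).prod (μ.map (X (n + 1)))).withDensity
        fun z => ENNReal.ofReal (p (q z.1) z.2) := by
    refine Measure.ext_prod fun {B A} hB hA => ?_
    rw [Measure.map_apply hYX (hB.prod hA), withDensity_apply _ (hB.prod hA),
      ← Measure.prod_restrict, lintegral_prod _ hd.aemeasurable,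
      setLIntegral_map hB hd.lintegral_prod_right' hY']
    refine (hint (hY hB) hA).trans (lintegral_congr_ae (ae_restrict_of_ae ?_))
    filter_upwards [hker A hA] with ω hω
    simpa only [hqY] using hω
  calc ∫⁻ ω, G (Y ω, X (n + 1) ω) ∂μ = ∫⁻ z, G z ∂μ.map (fun ω => (Y ω, X (n + 1) ω)) :=
        (lintegral_map hG hYX).symm
    _ = ∫⁻ x, ∫⁻ y, ENNReal.ofReal (p (q x) y) * G (x, y) ∂μ.map (X (n + 1)) ∂μ.map Y := by
        rw [key, lintegral_withDensity_eq_lintegral_mul _ hd hG,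
          lintegral_prod _ (hd.mul hG).aemeasurable]
        rfl
    _ = _ := by
        refine (lintegral_map (Measurable.lintegral_prod_right' (hd.mul hG)) hY').trans ?_
        simp only [hqY, Pi.mul_apply]

end Density

section PathLaw

variable {E : Type*} [MeasurableSpace E]

/-- The density of the law of a path of length `n + 1`, for transition densities `p`. -/
def pathWeight (p : ℕ → E → E → ℝ) (n : ℕ) (x : ℕ → E) : ℝ≥0∞ :=
  ∏ i ∈ range n, ENNReal.ofReal (p i (x i) (x (i + 1)))

/-- The reference measures `m`, with the sites of `J` frozen at the values of `x`. -/
def pinned (m : ℕ → Measure E) (J : Finset ℕ) (x : ℕ → E) (i : ℕ) : Measure E :=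
  if i ∈ J then Measure.dirac (x i) else m i

theorem isProbabilityMeasure_pinned {m : ℕ → Measure E} (hm : ∀ n, IsProbabilityMeasure (m n))
    (J : Finset ℕ) (x : ℕ → E) (i : ℕ) : IsProbabilityMeasure (pinned m J x i) := by
  unfold pinned; split_ifs
  · infer_instance
  · exact hm i

theorem pinned_congr (m : ℕ → Measure E) {J : Finset ℕ} {x z : ℕ → E} (h : ∀ i ∈ J, x i = z i) :
    pinned m J x = pinned m J z := by
  ext1 i
  unfold pinned; split_ifs with hi
  · rw [h i hi]
  · rfl

variable {C : ℝ} {p : ℕ → E → E → ℝ} {m : ℕ → Measure E} {f : ℕ → E → ℤ}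

theorem measurable_pathWeight (hp : ∀ n, EllKernel C (p n)) (n : ℕ) :
    Measurable (pathWeight p n) := by
  refine Finset.measurable_fun_prod _ fun i _ => ENNReal.measurable_ofReal.comp ?_
  have h : Measurable fun x : ℕ → E => (x i, x (i + 1)) := by fun_prop
  exact (hp i).1.comp h

theorem measurableSet_pathSum (hf : ∀ n, Measurable (f n)) (n : ℕ) (a : ℤ) :
    MeasurableSet {x : ℕ → E | ∑ i ∈ range n, f i (x i) = a} :=
  measurableSet_eq_fun
    (Finset.measurable_fun_sum _ fun i _ => (hf i).comp (measurable_pi_apply i)) measurable_const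

theorem lmarginal_mul_of_update {s : Finset ℕ} {g F : (ℕ → E) → ℝ≥0∞} (hF : Measurable F)
    (x : ℕ → E) (hg : ∀ z : ℕ → E, (∀ i ∉ s, z i = x i) → g z = g x) :
    (lmarginal m s (fun z => g z * F z)) x = g x * (lmarginal m s F) x := by
  unfold lmarginal
  refine Eq.trans (lintegral_congr fun y => ?_)
    (lintegral_const_mul (g x) (hF.comp measurable_updateFinset))
  dsimp only [Function.comp_apply]
  rw [hg]
  intro i hi
  simp [Function.updateFinset, hi]

theorem lmarginal_congr_fun {s : Finset ℕ} {F G : (ℕ → E) → ℝ≥0∞} (x : ℕ → E)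
    (h : ∀ z : ℕ → E, (∀ i ∉ s, z i = x i) → F z = G z) :
    (lmarginal m s F) x = (lmarginal m s G) x := by
  unfold lmarginal
  refine lintegral_congr fun y => h _ fun i hi => ?_
  simp [Function.updateFinset, hi]

/-- Integrating the path density over the sites outside `J` gives the restricted partition
functions of the pinned chain. -/
theorem lmarginal_pathWeight_indicator (hC : 1 ≤ C) (hp : ∀ n, EllKernel C (p n))
    (hm : ∀ n, IsProbabilityMeasure (m n)) (hf : ∀ n, Measurable (f n)) (J : Finset ℕ) (n : ℕ)
    (a : ℤ) (x : ℕ → E) :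
    (lmarginal m (range n \ J) (fun z =>
      {z : ℕ → E | ∑ i ∈ range n, f i (z i) = a}.indicator (pathWeight p n) z)) x =
      ENNReal.ofReal (Vr p (pinned m J x) f n (x n) a) := by
  induction n generalizing a x with
  | zero =>
    simp only [range_zero, empty_sdiff, lmarginal_empty, Vr, sum_empty, pathWeight, prod_empty,
      Set.indicator_apply, Set.mem_ofPred_eq, eq_comm (a := (0 : ℤ))]
    split_ifs <;> simp
  | succ n ih =>
    have hmeas : ∀ n a, Measurable ({z : ℕ → E | ∑ i ∈ range n, f i (z i) = a}.indicator
        (pathWeight p n)) := fun n a =>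
      (measurable_pathWeight hp n).indicator (measurableSet_pathSum hf n a)
    have hstep : ∀ z : ℕ → E, (lmarginal m (range n \ J) (fun z =>
        {z : ℕ → E | ∑ i ∈ range (n + 1), f i (z i) = a}.indicator (pathWeight p (n + 1)) z)) z =
        ENNReal.ofReal (p n (z n) (z (n + 1)) *
          Vr p (pinned m J z) f n (z n) (a - f n (z n))) := fun z => by
      rw [ENNReal.ofReal_mul ((hp n).pos hC _ _).le, ← ih,
        ← lmarginal_mul_of_update (hmeas _ _) z
          (g := fun z => ENNReal.ofReal (p n (z n) (z (n + 1))))]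
      · refine lmarginal_congr_fun z fun w hw => ?_
        have hn : w n = z n := hw n (by simp)
        simp only [Set.indicator_apply, Set.mem_ofPred_eq, sum_range_succ, hn, eq_sub_iff_add_eq,
          pathWeight, prod_range_succ]
        split_ifs
        · ring
        · simp
      · intro w hw
        rw [hw n (by simp), hw (n + 1) (by simp)]
    have hprob := isProbabilityMeasure_pinned hm J x
    have hnn : ∀ y, 0 ≤ p n y (x (n + 1)) * Vr p (pinned m J x) f n y (a - f n y) := fun y =>
      mul_nonneg ((hp n).pos hC _ _).le (Vr_nonneg hC hp _ _ _)
    have hb := Vr_shift_bddMeas hC hp hprob hf n (hf n) a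
    have hmeasI : Measurable fun y =>
        p n y (x (n + 1)) * Vr p (pinned m J x) f n y (a - f n y) :=
      ((hp n).1.comp measurable_prodMk_right).mul hb.1
    by_cases hn : n ∈ J
    · have e : range (n + 1) \ J = range n \ J := by
        rw [range_add_one, insert_sdiff_of_mem _ hn]
      rw [e, hstep x, Vr]
      have : pinned m J x n = Measure.dirac (x n) := if_pos hn
      simp only [smul_eq_mul]
      rw [this, integral_dirac' _ _ hmeasI.stronglyMeasurable]
    · have e : range (n + 1) \ J = insert n (range n \ J) := by
        rw [range_add_one, insert_sdiff_of_notMem _ hn]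
      rw [e, lmarginal_insert _ (hmeas _ _) (by simp), Vr]
      have h1 : ∀ y, pinned m J (Function.update x n y) = pinned m J x := fun y =>
        pinned_congr m fun i hi => Function.update_of_ne (by rintro rfl; exact hn hi) _ _
      have h2 : pinned m J x n = m n := if_neg hn
      simp only [hstep, h1, Function.update_self, ne_eq, Nat.add_eq_left, one_ne_zero,
        not_false_eq_true, Function.update_of_ne, smul_eq_mul]
      rw [h2, ofReal_integral_eq_lintegral_ofReal _ (.of_forall hnn)]
      obtain ⟨M, hM⟩ := hb.2
      refine Integrable.of_bound hmeasI.aestronglyMeasurable (C * M) (.of_forall fun y => ?_)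
      rw [norm_mul]
      refine mul_le_mul ?_ (hM y) (norm_nonneg _) (by linarith)
      rw [Real.norm_of_nonneg ((hp n).pos hC _ _).le]
      exact ((hp n).2 _ _).2

theorem Vr_zero_eq_Lv_one (ν : ℕ → Measure E) (n : ℕ) (y : E) :
    Vr p ν (fun _ _ => 0) n y 0 = Lv p ν (fun _ _ => (1 : ℝ)) n y := by
  induction n generalizing y with
  | zero => simp [Vr, Lv]
  | succ n ih => simp [Vr, Lv, ih]

theorem lmarginal_pathWeight (hC : 1 ≤ C) (hp : ∀ n, EllKernel C (p n))
    (hm : ∀ n, IsProbabilityMeasure (m n)) (J : Finset ℕ) (n : ℕ) (x : ℕ → E) :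
    (lmarginal m (range n \ J) (pathWeight p n)) x =
      ENNReal.ofReal (Lv p (pinned m J x) (fun _ _ => (1 : ℝ)) n (x n)) := by
  rw [← Vr_zero_eq_Lv_one, ← lmarginal_pathWeight_indicator hC hp hm
    (f := fun _ _ => 0) (fun _ => measurable_const)]
  simp

variable {Ω : Type*} [MeasurableSpace Ω] {μ : Measure Ω} {X : ℕ → Ω → E} {κ : ℕ → Kernel E E}

/-- The law of the path up to time `N` has density `pathWeight p N` with respect to the product of
the marginals. -/
theorem UEChain.lintegral_path (h : UEChain μ X κ C) (hp : ∀ n, EllKernel C (p n))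
    (hpX : ∀ n, μ.map (fun ω => (X n ω, X (n + 1) ω)) =
      ((μ.map (X n)).prod (μ.map (X (n + 1)))).withDensity fun z => ENNReal.ofReal (p n z.1 z.2))
    (N : ℕ) (x : ℕ → E) {F : (ℕ → E) → ℝ≥0∞} (hF : Measurable F) :
    ∫⁻ ω, F (fun i => if i ≤ N then X i ω else x i) ∂μ =
      (lmarginal (fun n => μ.map (X n)) (range (N + 1)) fun z => pathWeight p N z * F z) x := by
  have hX := h.2.1
  have := h.1
  have : ∀ n, IsProbabilityMeasure (μ.map (X n)) := fun n =>
    Measure.isProbabilityMeasure_map (hX n).aemeasurable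
  induction N generalizing F with
  | zero =>
    rw [show range (0 + 1) = {0} from rfl, lmarginal_singleton]
    simp only [pathWeight, range_zero, prod_empty, one_mul]
    rw [lintegral_map (f := fun y => F (Function.update x 0 y)) (hF.comp (measurable_update x))
      (hX 0)]
    refine lintegral_congr fun ω => congrArg F ?_
    ext i
    rcases eq_or_ne i 0 with rfl | hi
    · simp
    · simp [hi]
  | succ N ih =>
    set Y : Ω → ℕ → E := fun ω i => if i ≤ N then X i ω else x i with hY
    have hYm : Measurable[⨆ i : Fin (N + 1), MeasurableSpace.comap (X i) inferInstance] Y := by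
      refine @measurable_pi_lambda _ _ _ (_) _ _ fun i => ?_
      by_cases hi : i ≤ N
      · simp only [hY, if_pos hi]
        exact (comap_measurable (X i)).mono
          (le_iSup (fun i : Fin (N + 1) => MeasurableSpace.comap (X i) inferInstance)
            ⟨i, Nat.lt_succ_of_le hi⟩) le_rfl
      · simp only [hY, if_neg hi]
        exact @measurable_const _ _ (_) _ _
    have hupd : Measurable fun z : (ℕ → E) × E => Function.update z.1 (N + 1) z.2 :=
      measurable_update'
    have hG : Measurable fun z : (ℕ → E) × E => F (Function.update z.1 (N + 1) z.2) :=
      hF.comp hupd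
    have h1 := h.lintegral_next (hp N).1 (hpX N) hYm (q := fun z => z N) (measurable_pi_apply N)
      (fun ω => by simp [hY]) hG
    have h2 : ∀ ω, Function.update (Y ω) (N + 1) (X (N + 1) ω) =
        fun i => if i ≤ N + 1 then X i ω else x i := fun ω => by
      ext i
      rcases eq_or_ne i (N + 1) with rfl | hi
      · simp
      · rw [Function.update_of_ne hi]
        have : i ≤ N ↔ i ≤ N + 1 := by omega
        simp only [hY, this]
    simp only [h2] at h1
    have hpm : Measurable fun z : (ℕ → E) × E => ENNReal.ofReal (p N (z.1 N) z.2) :=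
      ((hp N).1.comp (show Measurable fun z : (ℕ → E) × E => (z.1 N, z.2) by
        fun_prop)).ennreal_ofReal
    have h3 := ih (Measurable.lintegral_prod_right' (ν := μ.map (X (N + 1))) (hpm.mul hG))
    simp only [Pi.mul_apply, le_refl, if_true] at h3
    rw [h1]
    refine h3.trans ?_
    rw [range_add_one (n := N + 1), lmarginal_insert' (fun z => pathWeight p (N + 1) z * F z)
      ((measurable_pathWeight hp _).mul hF) notMem_range_self]
    congr 1
    ext z
    refine (lintegral_const_mul (pathWeight p N z)
      ((hpm.mul hG).comp measurable_prodMk_left)).symm.trans (lintegral_congr fun y => ?_)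
    have h5 : pathWeight p (N + 1) (Function.update z (N + 1) y) =
        pathWeight p N z * ENNReal.ofReal (p N (z N) y) := by
      rw [pathWeight, prod_range_succ, pathWeight]
      congr 1
      · refine prod_congr rfl fun i hi => ?_
        have := mem_range.1 hi
        rw [Function.update_of_ne (by omega), Function.update_of_ne (by omega)]
      · simp
    simp only [h5, Pi.mul_apply, Function.comp_apply]
    ring

end PathLaw

section Conditional

variable {Ω E : Type*} [MeasurableSpace Ω] [MeasurableSpace E] {μ : Measure Ω} {X : ℕ → Ω → E}
  {κ : ℕ → Kernel E E} {C : ℝ} {p : ℕ → E → E → ℝ} {f : ℕ → E → ℤ}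

/-- The densities `p` before time `N`, and the constant density `1` afterwards. -/
def truncDensity (p : ℕ → E → E → ℝ) (N n : ℕ) : E → E → ℝ :=
  if n < N then p n else fun _ _ => 1

theorem truncDensity_ell (hC : 1 ≤ C) (hp : ∀ n, EllKernel C (p n)) (N n : ℕ) :
    EllKernel C (truncDensity p N n) := by
  unfold truncDensity; split_ifs
  · exact hp n
  · exact ⟨measurable_const, fun _ _ => ⟨inv_le_one_of_one_le₀ hC, hC⟩⟩

theorem pathWeight_truncDensity (p : ℕ → E → E → ℝ) (N : ℕ) :
    pathWeight (truncDensity p N) (N + 1) = pathWeight p N := by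
  ext x
  rw [pathWeight, prod_range_succ, pathWeight]
  simp only [truncDensity, lt_irrefl, if_false, ENNReal.ofReal_one, mul_one]
  exact prod_congr rfl fun i hi => by rw [if_pos (mem_range.1 hi)]

/-- Given finitely many states, the law of the partial sum is the Gibbs law of the chain pinned at
these states. -/
theorem UEChain.condProb_ae_eq (h : UEChain μ X κ C) (hC : 1 ≤ C) (hp : ∀ n, EllKernel C (p n))
    (hpX : ∀ n, μ.map (fun ω => (X n ω, X (n + 1) ω)) =
      ((μ.map (X n)).prod (μ.map (X (n + 1)))).withDensity fun z => ENNReal.ofReal (p n z.1 z.2))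
    (hf : ∀ n, Measurable (f n)) (N : ℕ) {ℓ : ℕ} (j : Fin ℓ → ℕ) (hj : ∀ i, j i ≤ N) (y : E)
    (k : ℤ) :
    condProb μ (sigmaOf X j) {ω | ∑ i ∈ range (N + 1), f i (X i ω) = k} =ᵐ[μ] fun ω =>
      gibbsLaw (truncDensity p N) (pinned (fun n => μ.map (X n)) (univ.image j) (X · ω)) f N y k := by
  have hpath := fun {F} (hF : Measurable F) => h.lintegral_path hp hpX N (fun _ => y) (F := F) hF
  obtain ⟨hμ, hX, -, -, -⟩ := h
  have hm : ∀ n, IsProbabilityMeasure (μ.map (X n)) := fun n =>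
    Measure.isProbabilityMeasure_map (hX n).aemeasurable
  have hq := truncDensity_ell hC hp N
  have hw := pathWeight_truncDensity p N
  set q := truncDensity p N
  set m : ℕ → Measure E := fun n => μ.map (X n) with hmdef
  set J : Finset ℕ := univ.image j with hJ
  have hJN : ∀ i ∈ J, i ≤ N := fun i hi => by
    obtain ⟨a, -, rfl⟩ := mem_image.1 hi
    exact hj a
  have hN1 : N + 1 ∉ J := fun hi => by have := hJN _ hi; omega
  set T : Finset ℕ := range (N + 1) \ J with hT
  set sk : Set (ℕ → E) := {z | ∑ i ∈ range (N + 1), f i (z i) = k} with hsk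
  have hskm : MeasurableSet sk := measurableSet_pathSum hf _ _
  set w := pathWeight q (N + 1) with hwdef
  have hwm : Measurable w := measurable_pathWeight hq _
  set A := lmarginal m T (fun z => sk.indicator w z) with hA
  set B := lmarginal m T w with hB
  have hAeq : ∀ z, A z = ENNReal.ofReal (Vr q (pinned m J z) f (N + 1) (z (N + 1)) k) := fun z =>
    lmarginal_pathWeight_indicator hC hq hm hf J (N + 1) k z
  have hBeq : ∀ z, B z =
      ENNReal.ofReal (Lv q (pinned m J z) (fun _ _ => (1 : ℝ)) (N + 1) (z (N + 1))) := fun z =>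
    lmarginal_pathWeight hC hq hm J (N + 1) z
  have hAm : Measurable A := Measurable.lmarginal m (hwm.indicator hskm)
  have hBm : Measurable B := Measurable.lmarginal m hwm
  have hLpos : ∀ z : ℕ → E, 0 < Lv q (pinned m J z) (fun _ _ => (1 : ℝ)) (N + 1) (z (N + 1)) :=
    fun z => Lv_one_pos hC hq (isProbabilityMeasure_pinned hm J z) _ _
  have hB0 : ∀ z, B z ≠ 0 := fun z => by
    rw [hBeq]; exact (ENNReal.ofReal_pos.2 (hLpos z)).ne'
  have hBt : ∀ z, B z ≠ ⊤ := fun z => by rw [hBeq]; exact ENNReal.ofReal_ne_top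
  set G : (ℕ → E) → ℝ≥0∞ := fun z => A z / B z with hG
  have hGm : Measurable G := hAm.div hBm
  have hGlaw : ∀ z, G z =
      ENNReal.ofReal (gibbsLaw q (pinned m J z) f N (z (N + 1)) k) := fun z => by
    rw [hG, gibbsLaw, ENNReal.ofReal_div_of_pos (hLpos z)]
    dsimp only
    rw [hAeq, hBeq]
  set ret : (ℕ → E) → ℕ → E := fun z i => if i ∈ J then z i else y with hret
  have hretm : Measurable ret := by
    refine measurable_pi_lambda _ fun i => ?_
    by_cases hi : i ∈ J
    · simpa only [hret, if_pos hi] using measurable_pi_apply i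
    · simpa only [hret, if_neg hi] using measurable_const
  set Y : Ω → ℕ → E := fun ω i => if i ≤ N then X i ω else y with hY
  set Z : Ω → ℕ → E := fun ω i => if i ∈ J then X i ω else y with hZ
  have hretY : ∀ ω, ret (Y ω) = Z ω := fun ω => by
    ext i
    simp only [hret, hY, hZ]
    split_ifs with h1 h2
    · rfl
    · exact absurd (hJN i h1) h2
    · rfl
  have hGY : ∀ ω, G (Y ω) = ENNReal.ofReal (gibbsLaw q (pinned m J (X · ω)) f N y k) := fun ω => by
    rw [hGlaw, pinned_congr m (x := Y ω) (z := (X · ω))]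
    · simp [hY]
    · intro i hi
      simp [hY, hJN i hi]
  have hGZ : ∀ ω, G (Z ω) = ENNReal.ofReal (gibbsLaw q (pinned m J (X · ω)) f N y k) := fun ω => by
    rw [hGlaw, pinned_congr m (x := Z ω) (z := (X · ω))]
    · simp [hZ, hN1]
    · intro i hi
      simp [hZ, hi]
  have hYm : Measurable Y := by
    refine measurable_pi_lambda _ fun i => ?_
    by_cases hi : i ≤ N
    · simpa only [hY, if_pos hi] using hX i
    · simpa only [hY, if_neg hi] using measurable_const
  have hσle : sigmaOf X j ≤ (inferInstance : MeasurableSpace Ω) :=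
    iSup_le fun i => (hX (j i)).comap_le
  have hZm : Measurable[sigmaOf X j] Z := by
    refine @measurable_pi_lambda _ _ _ (_) _ _ fun i => ?_
    by_cases hi : i ∈ J
    · simp only [hZ, if_pos hi]
      obtain ⟨a, -, rfl⟩ := mem_image.1 hi
      exact (comap_measurable (X (j a))).mono
        (le_iSup (fun i => MeasurableSpace.comap (X (j i)) inferInstance) a) le_rfl
    · simp only [hZ, if_neg hi]
      exact @measurable_const _ _ (_) _ _
  have hσZ : sigmaOf X j ≤ MeasurableSpace.comap Z inferInstance := by
    refine iSup_le fun a => ?_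
    have e : X (j a) = (fun z : ℕ → E => z (j a)) ∘ Z := by
      ext ω; simp [hZ, hJ]
    rw [e, ← MeasurableSpace.comap_comp]
    exact MeasurableSpace.comap_mono (measurable_pi_apply (j a)).comap_le
  have hlaw_nonneg : ∀ ω, 0 ≤ gibbsLaw q (pinned m J (X · ω)) f N y k := fun ω =>
    gibbsLaw_nonneg hC hq (isProbabilityMeasure_pinned hm J _) N y k
  have hlaw_eq : (fun ω => gibbsLaw q (pinned m J (X · ω)) f N y k) =
      fun ω => (G (Z ω)).toReal := by
    ext ω; rw [hGZ, ENNReal.toReal_ofReal (hlaw_nonneg ω)]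
  have hmeas : Measurable[sigmaOf X j] fun ω => gibbsLaw q (pinned m J (X · ω)) f N y k := by
    rw [hlaw_eq]
    exact (ENNReal.measurable_toReal.comp hGm).comp hZm
  set sΩ : Set Ω := {ω | ∑ i ∈ range (N + 1), f i (X i ω) = k} with hsΩ
  have hsY : ∀ ω, ω ∈ sΩ ↔ Y ω ∈ sk := fun ω => by
    have e : ∑ i ∈ range (N + 1), f i (Y ω i) = ∑ i ∈ range (N + 1), f i (X i ω) :=
      sum_congr rfl fun i hi => by
        simp only [hY, if_pos (Nat.lt_succ_iff.1 (mem_range.1 hi))]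
    simp only [hsΩ, hsk, Set.mem_ofPred_eq, e]
  have hsΩm : MeasurableSet sΩ := by
    have : sΩ = Y ⁻¹' sk := Set.ext hsY
    rw [this]; exact hYm hskm
  have key : ∀ B' : Set (ℕ → E), MeasurableSet B' →
      ∫⁻ ω in Z ⁻¹' B', G (Z ω) ∂μ = μ (Z ⁻¹' B' ∩ sΩ) := by
    classical
    intro B' hB'
    set hh : (ℕ → E) → ℝ≥0∞ := fun z => (ret ⁻¹' B').indicator (fun _ => 1) z with hhdef
    have hhm : Measurable hh := measurable_const.indicator (hretm hB')
    have hh_inv : ∀ x z : ℕ → E, (∀ i ∉ T, z i = x i) → hh z = hh x := fun x z hxz => by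
      have : ret z = ret x := by
        ext i
        simp only [hret]
        split_ifs with hi
        · exact hxz i (by simp [hT, hi])
        · rfl
      simp only [hhdef, Set.indicator_apply, Set.mem_preimage, this]
    have hG_inv : ∀ x z : ℕ → E, (∀ i ∉ T, z i = x i) → G z = G x := fun x z hxz => by
      simp only [hG, hA, hB]
      rw [lmarginal_congr m _ hxz, lmarginal_congr m w hxz]
    have hsplit : range (N + 1) = J ∪ T := by
      rw [hT, union_sdiff_of_subset]
      intro i hi
      exact mem_range.2 (Nat.lt_succ_of_le (hJN i hi))
    have hdisj : Disjoint J T := disjoint_sdiff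
    have hZm' : Measurable Z := hZm.mono hσle le_rfl
    have e1 : ∫⁻ ω in Z ⁻¹' B', G (Z ω) ∂μ = ∫⁻ ω, (hh * G) (Y ω) ∂μ := by
      rw [← lintegral_indicator (hZm' hB')]
      refine lintegral_congr fun ω => ?_
      simp only [Set.indicator_apply, Pi.mul_apply, hhdef, Set.mem_preimage, hretY, hGY, hGZ]
      split_ifs <;> simp
    have e2 : μ (Z ⁻¹' B' ∩ sΩ) = ∫⁻ ω, (hh * sk.indicator (fun _ => (1 : ℝ≥0∞))) (Y ω) ∂μ := by
      rw [← lintegral_indicator_one ((hZm' hB').inter hsΩm)]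
      refine lintegral_congr fun ω => ?_
      simp only [Set.indicator_apply, Pi.mul_apply, hhdef, Set.mem_preimage, hretY,
        Set.mem_inter_iff, ← hsY, Pi.one_apply]
      by_cases h1 : Z ω ∈ B' <;> by_cases h2 : ω ∈ sΩ <;> simp [h1, h2]
    have m1 : Measurable (hh * G) := hhm.mul hGm
    have m2 : Measurable (hh * sk.indicator (fun _ => (1 : ℝ≥0∞))) :=
      hhm.mul (measurable_const.indicator hskm)
    rw [e1, e2]
    refine (hpath m1).trans (Eq.trans ?_ (hpath m2).symm)
    rw [← hw, hsplit, lmarginal_union m (fun z => w z * (hh * G) z) (hwm.mul m1) hdisj,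
      lmarginal_union m (fun z => w z * (hh * sk.indicator (fun _ => (1 : ℝ≥0∞))) z)
        (hwm.mul m2) hdisj]
    congr 1
    ext z
    have l1 : (lmarginal m T fun z => w z * (hh * G) z) z = (hh * G) z * B z := by
      rw [hB, ← lmarginal_mul_of_update hwm z (g := hh * G)]
      · simp only [mul_comm]
      · intro u hu
        rw [Pi.mul_apply, hh_inv z u hu, hG_inv z u hu, Pi.mul_apply]
    have l2 : (lmarginal m T fun z => w z * (hh * sk.indicator (fun _ => (1 : ℝ≥0∞))) z) z = hh z * A z := by
      rw [hA, ← lmarginal_mul_of_update (hwm.indicator hskm) z (g := hh) (hh_inv z)]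
      refine lmarginal_congr_fun z fun u _ => ?_
      simp only [Pi.mul_apply, Set.indicator_apply]
      split_ifs <;> ring
    rw [l1, l2, Pi.mul_apply, mul_assoc, hG, ENNReal.div_mul_cancel (hB0 z) (hBt z)]
  have hlaw_int : Integrable (fun ω => gibbsLaw q (pinned m J (X · ω)) f N y k) μ := by
    rw [hlaw_eq]
    refine integrable_toReal_of_lintegral_ne_top (hGm.comp (hZm.mono hσle le_rfl)).aemeasurable ?_
    have := key Set.univ .univ
    rw [Set.preimage_univ, Measure.restrict_univ] at this
    rw [this]; exact measure_ne_top _ _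
  refine (ae_eq_condExp_of_forall_setIntegral_eq hσle ((integrable_const _).indicator hsΩm)
    (fun s _ _ => hlaw_int.integrableOn) (fun s hs _ => ?_)
    hmeas.stronglyMeasurable.aestronglyMeasurable).symm
  obtain ⟨B', hB', rfl⟩ := hσZ s hs
  rw [integral_indicator hsΩm, Measure.restrict_restrict hsΩm, setIntegral_const, smul_eq_mul,
    mul_one, hlaw_eq, integral_toReal (f := fun ω => G (Z ω))
    (hGm.comp (hZm.mono hσle le_rfl)).aemeasurable
    (.of_forall fun ω => by simp only [hGZ]; exact ENNReal.ofReal_lt_top)]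
  rw [key B' hB', Set.inter_comm]
  rfl

end Conditional

section FiniteSupport

variable {Ω : Type*} [mΩ : MeasurableSpace Ω] {μ : Measure Ω} {W : Ω → ℤ} {T : Finset ℤ}

theorem comp_eq_sum_indicator (hT : ∀ ω, W ω ∈ T) (g : ℤ → ℝ) (ω : Ω) :
    g (W ω) = ∑ k ∈ T, g k * {ω | W ω = k}.indicator (fun _ => (1 : ℝ)) ω := by
  classical
  simp only [Set.indicator_apply, Set.mem_ofPred_eq, mul_ite, mul_one, mul_zero]
  rw [sum_ite_eq, if_pos (hT ω)]

theorem integral_comp_eq_sum [IsProbabilityMeasure μ] (hW : Measurable W) (hT : ∀ ω, W ω ∈ T)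
    (g : ℤ → ℝ) : ∫ ω, g (W ω) ∂μ = ∑ k ∈ T, μ.real {ω | W ω = k} * g k := by
  have hm : ∀ k, MeasurableSet {ω | W ω = k} := fun k => hW (measurableSet_singleton k)
  simp only [comp_eq_sum_indicator hT g]
  rw [integral_finsetSum _ fun k _ => ((integrable_const _).indicator (hm k)).const_mul _]
  refine sum_congr rfl fun k _ => ?_
  rw [integral_const_mul, integral_indicator (hm k), setIntegral_const, smul_eq_mul, mul_one,
    mul_comm]

theorem condExp_ae_eq_sum {Ω : Type*} (m : MeasurableSpace Ω) [mΩ : MeasurableSpace Ω]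
    {μ : Measure Ω} {W : Ω → ℤ} {T : Finset ℤ} [IsProbabilityMeasure μ] (hW : Measurable W)
    (hT : ∀ ω, W ω ∈ T) :
    μ[fun ω => (W ω : ℝ) | m] =ᵐ[μ] fun ω => ∑ k ∈ T, condProb μ m {ω | W ω = k} ω * k := by
  have hm : ∀ k, MeasurableSet {ω | W ω = k} := fun k => hW (measurableSet_singleton k)
  have e : (fun ω => (W ω : ℝ)) =
      ∑ k ∈ T, (k : ℝ) • {ω | W ω = k}.indicator (fun _ => (1 : ℝ)) := by
    ext ω
    rw [Finset.sum_apply]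
    exact comp_eq_sum_indicator hT (fun k => (k : ℝ)) ω
  rw [e]
  refine (condExp_finsetSum (fun k _ => ((integrable_const _).indicator (hm k)).smul _) m).trans ?_
  have h : ∀ᵐ ω ∂μ, ∀ k : ℤ,
      (μ[(k : ℝ) • {ω | W ω = k}.indicator (fun _ => (1 : ℝ)) | m]) ω =
        (k : ℝ) * condProb μ m {ω | W ω = k} ω :=
    ae_all_iff.2 fun k => condExp_smul _ _ m
  filter_upwards [h] with ω hω
  rw [Finset.sum_apply]
  exact sum_congr rfl fun k _ => by rw [hω, mul_comm]

end FiniteSupport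

section Clip

variable {E : Type*} [MeasurableSpace E]

/-- The function `f n` truncated to values in `[-K, K]`, and set to zero at time `0`. -/
def clip (f : ℕ → E → ℤ) (K n : ℕ) (x : E) : ℤ :=
  if n = 0 then 0 else max (-(K : ℤ)) (min K (f n x))

theorem measurable_clip {f : ℕ → E → ℤ} (hf : ∀ n, Measurable (f n)) (K n : ℕ) :
    Measurable (clip f K n) := by
  unfold clip; split_ifs
  · exact measurable_const
  · exact measurable_const.max (measurable_const.min (hf n))

theorem abs_clip_le (f : ℕ → E → ℤ) (K n : ℕ) (x : E) : |clip f K n x| ≤ (K : ℤ) := by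
  unfold clip; split_ifs
  · simp
  · rw [abs_le]; omega

theorem clip_of_abs_le {f : ℕ → E → ℤ} {K n : ℕ} {x : E} (hn : n ≠ 0) (h : |f n x| ≤ (K : ℤ)) :
    clip f K n x = f n x := by
  rw [clip, if_neg hn]
  rw [abs_le] at h; omega

end Clip

section Chain

variable {Ω E : Type*} [MeasurableSpace Ω] [MeasurableSpace E] {μ : Measure Ω} {X : ℕ → Ω → E}
  {κ : ℕ → Kernel E E} {C : ℝ} {p : ℕ → E → E → ℝ} {f : ℕ → E → ℤ} {K : ℕ}

theorem S_eq_sum_clip (hfK : ∀ n ω, |f n (X n ω)| ≤ (K : ℤ)) (N : ℕ) (ω : Ω) :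
    S X f N ω = ∑ i ∈ range (N + 1), clip f K i (X i ω) := by
  rw [range_eq_Ico, sum_eq_sum_Ico_succ_bot N.succ_pos, S, clip, if_pos rfl, zero_add]
  exact sum_congr rfl fun i hi =>
    (clip_of_abs_le (Nat.one_le_iff_ne_zero.1 (Finset.mem_Icc.1 hi).1) (hfK i ω)).symm

theorem S_mem_gibbsSupp (hfK : ∀ n ω, |f n (X n ω)| ≤ (K : ℤ)) (N : ℕ) (ω : Ω) :
    S X f N ω ∈ gibbsSupp K N := by
  rw [gibbsSupp, Finset.mem_Icc, ← abs_le, S_eq_sum_clip hfK]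
  refine (abs_sum_le_sum_abs _ _).trans ?_
  refine (sum_le_card_nsmul _ _ _ fun i _ => abs_clip_le f K i _).trans ?_
  simp

theorem measurable_S (hX : ∀ n, Measurable (X n)) (hf : ∀ n, Measurable (f n)) (N : ℕ) :
    Measurable (S X f N) := by
  unfold S
  exact Finset.measurable_sum _ fun i _ => (hf i).comp (hX i)

theorem resq_map_clip (hX : ∀ n, Measurable (X n)) (hf : ∀ n, Measurable (f n))
    (hfK : ∀ n ω, |f n (X n ω)| ≤ (K : ℤ)) {n : ℕ} (hn : n ≠ 0) (m : ℕ) :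
    resq (μ.map (X n)) (clip f K n) m = qres μ X f n m := by
  unfold resq qres
  congr 1; ext j
  have hm : MeasurableSet {x | (clip f K n x : ZMod m) = j} :=
    measurable_clip hf K n (MeasurableSet.of_discrete (s := {a : ℤ | (a : ZMod m) = j}))
  rw [map_measureReal_apply (hX n) hm, measureReal_def]
  congr 2; ext ω
  simp only [Set.mem_preimage, Set.mem_ofPred_eq, clip_of_abs_le hn (hfK n ω)]

theorem MN_le (μ : Measure Ω) (X : ℕ → Ω → E) (f : ℕ → E → ℤ) {m : ℕ} (N : ℕ)
    (hm : m ∈ Set.Icc 2 (2 * K)) : MN μ X f K N ≤ ∑ n ∈ Finset.Icc 1 N, qres μ X f n m := by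
  refine csInf_le ⟨0, ?_⟩ (Set.mem_image_of_mem _ hm)
  rintro _ ⟨m, -, rfl⟩
  exact sum_nonneg fun n _ => secondLargest_nonneg fun _ => ENNReal.toReal_nonneg

theorem UEChain.condProb_S_ae_eq (h : UEChain μ X κ C) (hC : 1 ≤ C) (hp : ∀ n, EllKernel C (p n))
    (hpX : ∀ n, μ.map (fun ω => (X n ω, X (n + 1) ω)) =
      ((μ.map (X n)).prod (μ.map (X (n + 1)))).withDensity fun z => ENNReal.ofReal (p n z.1 z.2))
    (hf : ∀ n, Measurable (f n)) (hfK : ∀ n ω, |f n (X n ω)| ≤ (K : ℤ)) (N : ℕ) {ℓ : ℕ}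
    (j : Fin ℓ → ℕ) (hj : ∀ i, j i ≤ N) (y : E) :
    ∀ᵐ ω ∂μ, (∀ k : ℤ, condProb μ (sigmaOf X j) {ω | S X f N ω = k} ω =
      gibbsLaw (truncDensity p N) (pinned (fun n => μ.map (X n)) (univ.image j) (X · ω))
        (clip f K) N y k) ∧
      (μ[fun ω => (S X f N ω : ℝ) | sigmaOf X j]) ω =
        gibbsMean (truncDensity p N) (pinned (fun n => μ.map (X n)) (univ.image j) (X · ω))
          (clip f K) K N y := by
  have := h.1
  have h1 : ∀ᵐ ω ∂μ, ∀ k : ℤ, condProb μ (sigmaOf X j) {ω | S X f N ω = k} ω =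
      gibbsLaw (truncDensity p N) (pinned (fun n => μ.map (X n)) (univ.image j) (X · ω))
        (clip f K) N y k := by
    refine ae_all_iff.2 fun k => ?_
    simp only [S_eq_sum_clip hfK]
    exact h.condProb_ae_eq hC hp hpX (measurable_clip hf K) N j hj y k
  filter_upwards [h1, condExp_ae_eq_sum (sigmaOf X j) (measurable_S h.2.1 hf N)
    (S_mem_gibbsSupp hfK N)] with ω hω hω'
  refine ⟨hω, ?_⟩
  rw [hω', gibbsMean]
  exact sum_congr rfl fun k _ => by rw [hω k]

theorem UEChain.gibbsVar_eq (h : UEChain μ X κ C) (hC : 1 ≤ C) (hp : ∀ n, EllKernel C (p n))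
    (hpX : ∀ n, μ.map (fun ω => (X n ω, X (n + 1) ω)) =
      ((μ.map (X n)).prod (μ.map (X (n + 1)))).withDensity fun z => ENNReal.ofReal (p n z.1 z.2))
    (hf : ∀ n, Measurable (f n)) (hfK : ∀ n ω, |f n (X n ω)| ≤ (K : ℤ)) (N : ℕ) (y : E) :
    gibbsVar (truncDensity p N) (fun n => μ.map (X n)) (clip f K) K N y = VN μ X f N := by
  have := h.1
  have hS := measurable_S h.2.1 hf N
  have hT := S_mem_gibbsSupp hfK N
  obtain ⟨ω, h1, -⟩ :=
    (h.condProb_S_ae_eq hC hp hpX hf hfK N Fin.elim0 (fun i => i.elim0) y).exists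
  have hpin : pinned (fun n => μ.map (X n)) (univ.image (Fin.elim0 : Fin 0 → ℕ)) (X · ω) =
      fun n => μ.map (X n) := by ext1 i; simp [pinned]
  rw [hpin] at h1
  have hlaw : ∀ k : ℤ, gibbsLaw (truncDensity p N) (fun n => μ.map (X n)) (clip f K) N y k =
      μ.real {ω | S X f N ω = k} := fun k => by
    rw [← h1, condProb, sigmaOf, iSup_of_empty, condExp_bot]
    exact integral_indicator_one (hS (measurableSet_singleton k))
  have hmean : gibbsMean (truncDensity p N) (fun n => μ.map (X n)) (clip f K) K N y =
      ∫ ω, (S X f N ω : ℝ) ∂μ := by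
    rw [integral_comp_eq_sum hS hT fun k => (k : ℝ), gibbsMean]
    exact sum_congr rfl fun k _ => by rw [hlaw]
  rw [VN, variance_eq_integral (X := fun ω => (S X f N ω : ℝ))
    (measurable_from_top.comp hS).aemeasurable,
    integral_comp_eq_sum hS hT fun k => ((k : ℝ) - ∫ ω, (S X f N ω : ℝ) ∂μ) ^ 2, gibbsVar, hmean]
  exact sum_congr rfl fun k _ => by rw [hlaw]

end Chain

/-- Edgeworth expansion of the conditional laws of `S_N` with a quantitative error term, at a single
time `N`. -/
theorem exists_condProb_edgeworth (r K : ℕ) (hK : 1 ≤ K) {C : ℝ} (hC : 1 ≤ C) :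
    ∃ R > 0, ∀ ℓ : ℕ, ∃ (D : ℕ) (Cp Ce V₀ : ℝ), 0 ≤ Cp ∧
      ∀ (Ω E : Type) [MeasurableSpace Ω] [MeasurableSpace E]
        (μ : Measure Ω) (X : ℕ → Ω → E) (κ : ℕ → Kernel E E) (f : ℕ → E → ℤ),
        UEChain μ X κ C → (∀ n, Measurable (f n)) → (∀ n ω, |f n (X n ω)| ≤ (K : ℤ)) →
        ∀ N, V₀ ≤ VN μ X f N → R * Real.log (VN μ X f N) ≤ MN μ X f K N →
        ∀ j : Fin ℓ → ℕ, (∀ i, j i ≤ N) →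
        ∃ P : Ω → Polynomial ℝ, (∀ ω, (P ω).natDegree ≤ D) ∧ (∀ ω i, |(P ω).coeff i| ≤ Cp) ∧
          ∀ᵐ ω ∂μ, ∀ k : ℤ,
            |condProb μ (sigmaOf X j) {ω' | S X f N ω' = k} ω - (sigN μ X f N)⁻¹ *
                (P ω).eval (((k : ℝ) -
                    (μ[fun ω' => ((S X f N ω' : ℝ)) | sigmaOf X j]) ω) / sigN μ X f N) *
                gaussDensity (((k : ℝ) -
                    (μ[fun ω' => ((S X f N ω' : ℝ)) | sigmaOf X j]) ω) / sigN μ X f N)|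
              ≤ Ce * (sigN μ X f N)⁻¹ ^ (r + 1) := by
  obtain ⟨R, hR, hcore⟩ := exists_gibbs_edgeworth r K hK hC
  refine ⟨R, hR, fun ℓ => ?_⟩
  obtain ⟨D, Cp, Ce, V₀, hCp, hcore⟩ := hcore ℓ
  refine ⟨D, Cp, Ce, V₀, hCp, fun Ω E _ _ μ X κ f h hf hfK N hV hM j hj => ?_⟩
  have hμ := h.1
  choose p hp hpX using h.exists_density hC
  obtain ⟨ω₀⟩ : Nonempty Ω := μ.nonempty_of_neZero
  have hm : ∀ n, IsProbabilityMeasure (μ.map (X n)) := fun n =>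
    Measure.isProbabilityMeasure_map (h.2.1 n).aemeasurable
  have hvar := h.gibbsVar_eq hC hp hpX hf hfK N (X 0 ω₀)
  have hQ : ∀ ω, _ := fun ω => hcore E (truncDensity p N) (fun n => μ.map (X n)) (clip f K) N
    (X 0 ω₀) (truncDensity_ell hC hp N) hm (measurable_clip hf K) (abs_clip_le f K)
    (fun _ => by simp [clip]) (hvar ▸ hV)
    (fun m hmK => by
      rw [hvar]
      refine (hM.trans (MN_le μ X f N hmK)).trans_eq (sum_congr rfl fun i hi => ?_)
      exact (resq_map_clip h.2.1 hf hfK (Nat.one_le_iff_ne_zero.1 (Finset.mem_Icc.1 hi).1) m).symm)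
    (univ.image j) (pinned (fun n => μ.map (X n)) (univ.image j) (X · ω))
    (card_image_le.trans (by simp))
    (fun i hi => by
      obtain ⟨a, -, rfl⟩ := mem_image.1 hi
      exact hj a)
    (isProbabilityMeasure_pinned hm _ _) (fun i hi => if_neg hi)
  choose P hD hc hP using hQ
  refine ⟨P, hD, hc, ?_⟩
  filter_upwards [h.condProb_S_ae_eq hC hp hpX hf hfK N j hj (X 0 ω₀)] with ω hω k
  rw [hω.1, hω.2, sigN, ← hvar]
  exact hP ω k

theorem sum_Icc_ite_one {r : ℕ} (hr : 1 ≤ r) (P : Polynomial ℝ) (s u g : ℝ) :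
    ∑ b ∈ Finset.Icc 1 r, s ^ b * (if b = 1 then P else 0).eval u * g = s * P.eval u * g := by
  rw [sum_eq_single_of_mem 1 (Finset.mem_Icc.2 ⟨le_rfl, hr⟩)]
  · simp
  · intro b _ hb; simp [hb]

theorem eventually_mul_inv_pow_le {σ : ℕ → ℝ} (hσ : Tendsto σ atTop atTop) (c : ℝ) (r : ℕ) {ε : ℝ}
    (hε : 0 < ε) : ∀ᶠ N in atTop, c * (σ N)⁻¹ ^ (r + 1) ≤ ε * (σ N)⁻¹ ^ r := by
  have h0 : Tendsto (fun N => c * (σ N)⁻¹) atTop (𝓝 0) := by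
    simpa using hσ.inv_tendsto_atTop.const_mul c
  filter_upwards [h0.eventually_le_const hε, hσ.eventually_ge_atTop 0] with N h1 h2
  rw [pow_succ']
  nlinarith [pow_nonneg (inv_nonneg.2 h2) r]

section Expansion

variable {Ω E : Type} [MeasurableSpace Ω] [MeasurableSpace E] {μ : Measure Ω} {X : ℕ → Ω → E}
  {f : ℕ → E → ℤ}

theorem tendsto_sigN (hV : Tendsto (fun N => VN μ X f N) atTop atTop) :
    Tendsto (fun N => sigN μ X f N) atTop atTop := Real.tendsto_sqrt_atTop.comp hV

end Expansion

end EdgeworthMC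

namespace EdgeworthMC

/-- Theorem 1.2 of the paper, quantitative Prokhorov theorem.
For each `r` there is a constant `R = R(r,K,C)` such that the conditionally stable
Edgeworth expansion of order `r` holds whenever `M_N ≥ R ln V_N` for all `N`.
In particular `S_N` obeys Edgeworth expansions of all orders if `M_N/ln V_N → ∞`. -/
theorem conditionally_stable_edgeworth_of_MN_large :
    ∀ (r K : ℕ), 1 ≤ r → 1 ≤ K → ∀ C : ℝ, 1 < C →
      ∃ R : ℝ, 0 < R ∧
        ∀ (Ω E : Type) [MeasurableSpace Ω] [MeasurableSpace E]
          (μ : Measure Ω) (X : ℕ → Ω → E) (κ : ℕ → Kernel E E) (f : ℕ → E → ℤ),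
          UEChain μ X κ C →
          (∀ n, Measurable (f n)) →
          (∀ n ω, |f n (X n ω)| ≤ (K : ℤ)) →
          Tendsto (fun N => VN μ X f N) atTop atTop →
          ((∀ N, 1 ≤ N → R * Real.log (VN μ X f N) ≤ MN μ X f K N) →
              CondStableEdgeworth μ X f r) ∧
          (Tendsto (fun N => MN μ X f K N / Real.log (VN μ X f N)) atTop atTop →
              ∀ r' : ℕ, 1 ≤ r' → Edgeworth μ X f r') := by
  intro r K hr hK C hC
  obtain ⟨R, hR, hcond⟩ := exists_condProb_edgeworth r K hK hC.le
  refine ⟨R, hR, fun Ω E _ _ μ X κ f h hf hfK hV => ⟨fun hM ℓ => ?_, fun hM r' hr' => ?_⟩⟩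
  · obtain ⟨D, Cp, Ce, V₀, hCp, hcond⟩ := hcond ℓ
    refine ⟨D, Cp, fun ε hε => ?_⟩
    obtain ⟨N₀, hN₀⟩ := eventually_atTop.1 ((hV.eventually_ge_atTop V₀).and
      ((eventually_ge_atTop 1).and (eventually_mul_inv_pow_le (tendsto_sigN hV) Ce r hε)))
    refine ⟨N₀, fun N hN j hj => ?_⟩
    obtain ⟨hVN, hN1, hCe⟩ := hN₀ N hN
    obtain ⟨P, hD, hc, hP⟩ := hcond Ω E μ X κ f h hf hfK N hVN (hM N hN1) j
      fun i => (Finset.mem_Icc.1 (hj i)).2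
    refine ⟨fun b ω => if b = 1 then P ω else 0, fun b ω => ?_, fun b ω i => ?_, ?_⟩
    · dsimp only; split_ifs <;> simp [hD]
    · dsimp only; split_ifs <;> simp [hc, hCp]
    · filter_upwards [hP] with ω hω k
      rw [sum_Icc_ite_one hr]
      exact (hω k).trans hCe
  · obtain ⟨R', -, hcond⟩ := exists_condProb_edgeworth r' K hK hC.le
    obtain ⟨D, Cp, Ce, V₀, hCp, hcond⟩ := hcond 0
    have hμ := h.1
    have hprob : ∀ N, V₀ ≤ VN μ X f N ∧ R' * Real.log (VN μ X f N) ≤ MN μ X f K N →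
        ∃ P : Polynomial ℝ, P.natDegree ≤ D ∧ (∀ i, |P.coeff i| ≤ Cp) ∧ ∀ k : ℤ,
          |(μ {ω | S X f N ω = k}).toReal - (sigN μ X f N)⁻¹ *
              P.eval (((k : ℝ) - meanS μ X f N) / sigN μ X f N) *
              gaussDensity (((k : ℝ) - meanS μ X f N) / sigN μ X f N)| ≤
            Ce * (sigN μ X f N)⁻¹ ^ (r' + 1) := by
      rintro N ⟨hVN, hMN⟩
      obtain ⟨P, hD, hc, hP⟩ := hcond Ω E μ X κ f h hf hfK N hVN hMN Fin.elim0 fun i => i.elim0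
      obtain ⟨ω, hω⟩ := hP.exists
      refine ⟨P ω, hD ω, hc ω, fun k => ?_⟩
      have e : condProb μ (sigmaOf X (Fin.elim0 : Fin 0 → ℕ)) {ω' | S X f N ω' = k} ω =
          (μ {ω | S X f N ω = k}).toReal := by
        rw [condProb, sigmaOf, iSup_of_empty, condExp_bot]
        exact integral_indicator_one (measurable_S h.2.1 hf N (measurableSet_singleton k))
      have e' : (μ[fun ω' => ((S X f N ω' : ℝ)) | sigmaOf X (Fin.elim0 : Fin 0 → ℕ)]) ω =
          meanS μ X f N := by
        rw [sigmaOf, iSup_of_empty, condExp_bot, meanS]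
      rw [← e, ← e']
      exact hω k
    have hprob' : ∀ N, ∃ P : Polynomial ℝ, P.natDegree ≤ D ∧ (∀ i, |P.coeff i| ≤ Cp) ∧
        (V₀ ≤ VN μ X f N ∧ R' * Real.log (VN μ X f N) ≤ MN μ X f K N → ∀ k : ℤ,
          |(μ {ω | S X f N ω = k}).toReal - (sigN μ X f N)⁻¹ *
              P.eval (((k : ℝ) - meanS μ X f N) / sigN μ X f N) *
              gaussDensity (((k : ℝ) - meanS μ X f N) / sigN μ X f N)| ≤
            Ce * (sigN μ X f N)⁻¹ ^ (r' + 1)) := fun N => by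
      by_cases hN : V₀ ≤ VN μ X f N ∧ R' * Real.log (VN μ X f N) ≤ MN μ X f K N
      · obtain ⟨P, hD, hc, hP⟩ := hprob N hN
        exact ⟨P, hD, hc, fun _ => hP⟩
      · exact ⟨0, by simp, by simp [hCp], fun h => absurd h hN⟩
    choose P hD hc hP using hprob'
    refine ⟨D, Cp, fun b N => if b = 1 then P N else 0, fun b N => ?_, fun b N i => ?_,
      fun ε hε => ?_⟩
    · dsimp only; split_ifs <;> simp [hD]
    · dsimp only; split_ifs <;> simp [hc, hCp]
    · refine eventually_atTop.1 ?_
      filter_upwards [hV.eventually_ge_atTop V₀, hV.eventually_gt_atTop 1,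
        hM.eventually_ge_atTop R', eventually_mul_inv_pow_le (tendsto_sigN hV) Ce r' hε]
        with N hVN hV1 hMN hCe k
      rw [sum_Icc_ite_one hr']
      exact (hP N ⟨hVN, (le_div_iff₀ (Real.log_pos hV1)).1 hMN⟩ k).trans hCe

end EdgeworthMC
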